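/- arXiv:math/0303086 — 3 statements merged into one kernel-verified Lean document; each statement's English description precedes it below -/
import Mathlib

section
/- Let (R,m) be a non-Gorenstein Noetherian local ring containing its residue field k, with m³ = (0), m² ≠ (0), and type r, admitting a nonfree finitely generated module of G-dimension zero. Then R is a Koszul algebra under its induced graded structure, and the Betti numbers of k satisfy dim_k Tor_i^R(k,k) = 1 + r + r² + ⋯ + r^i for all i ≥ 0; equivalently the Poincaré series of R is 1/((1−t)(1−rt)). -/
open CategoryTheory

noncomputable abbrev ExtGrp (R : Type) [CommRing R] (M N : Type) [AddCommGroup M] [Module R M]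
    [AddCommGroup N] [Module R N] (i : ℕ) : Type :=
  ((Ext R (ModuleCat R) i).obj (Opposite.op (ModuleCat.of R M))).obj (ModuleCat.of R N)

/-- G-dimension zero. -/
def GDimZero (R : Type) [CommRing R] (M : Type) [AddCommGroup M] [Module R M] : Prop :=
  Function.Bijective (Module.Dual.eval R M) ∧
  (∀ i : ℕ, 0 < i → Subsingleton (ExtGrp R M R i)) ∧
  (∀ i : ℕ, 0 < i → Subsingleton (ExtGrp R (Module.Dual R M) R i))

/-- finite self-injective dimension -/
def HasFiniteSelfInjDim (R : Type) [CommRing R] : Prop :=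
  ∃ n : ℕ, ∀ (N : ModuleCat R) (i : ℕ), n < i →
    Subsingleton (((Ext R (ModuleCat R) i).obj (Opposite.op N)).obj (ModuleCat.of R R))

/-- Gorenstein local ring -/
def IsGorensteinLocalRing (R : Type) [CommRing R] : Prop :=
  IsNoetherianRing R ∧ IsLocalRing R ∧ HasFiniteSelfInjDim R

/-- length of a module, as Krull dimension of its submodule lattice -/
noncomputable def mlength (R : Type) [CommRing R] (M : Type) [AddCommGroup M] [Module R M] :
    WithBot ℕ∞ :=
  Order.krullDim (Submodule R M)

/-!
Let `F` be the minimal free resolution of a nonfree module `M` with `Extⁱ(M, R) = 0` for `i > 0`,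
so that `F` and its dual are both exact in positive degrees. If `p : Fᵢ → Z` covers a syzygy `Z` of
`M` and some element of `Z \ 𝔪Z` were killed by `𝔪`, then every map `𝔪 → R` would extend to `R`,
because every map `ker p → R` extends to `Fᵢ`; but `R` is not injective. Hence the socle of `Z`
lies in `𝔪Z`, which together with `𝔪³ = 0` gives `𝔪Z = 𝔪²Fᵢ₋₁` for `Z ⊆ Fᵢ₋₁`. Likewise the socle
of `R` is `𝔪²`, so `r = dim 𝔪²`.

Write `e = dim 𝔪/𝔪²` and `bᵢ` for the Betti numbers of `M`. Counting lengths in `F` and in its dual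
gives `e bᵢ₊₁ = bᵢ₊₂ + r bᵢ` and `e bᵢ₊₂ = bᵢ₊₁ + r bᵢ₊₃`, which forces the `bᵢ`, `i > 0`, to be a
constant `b` and `e = r + 1`.

The differential `Fᵢ₊₁ → Fᵢ` exhibits `𝔪 ^ b` as an extension of `k ^ (b r)` by a syzygy of `M`,
and the horseshoe lemma turns this into such an extension for the successive syzygies of `𝔪` and
`k`. So the Betti numbers of `k` satisfy `βᵢ₊₁ = r βᵢ + 1`, and a length count shows that
`𝔪Z = 𝔪²G` for every syzygy `Z ⊆ G` in the minimal resolution of `k` as well. The generators of `Z`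
may therefore be changed modulo `𝔪²G`, hence be taken with entries in any complement of `𝔪²` in
`𝔪`.
-/

universe u v

section Ext

/-- The projective resolution of `Z` given by an exact augmented complex `K → Z` with projective
terms. -/
noncomputable def projectiveResolutionOfExact {C : Type*} [Category C] [Abelian C] {Z : C}
    (K : ChainComplex C ℕ) (hK : ∀ n, Projective (K.X n)) (ε : K.X 0 ⟶ Z) [Epi ε]
    (hε : K.d 1 0 ≫ ε = 0) (hexact₀ : (ShortComplex.mk _ _ hε).Exact)
    (hexact : ∀ n, K.ExactAt (n + 1)) : ProjectiveResolution Z where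
  complex := K
  π := (ChainComplex.toSingle₀Equiv _ _).symm ⟨ε, hε⟩
  quasiIso := ⟨fun n => by
    cases n with
    | zero =>
      rw [ChainComplex.quasiIsoAt₀_iff, ShortComplex.quasiIso_iff_of_zeros']
      · refine (ShortComplex.exact_and_epi_g_iff_of_iso ?_).2 ⟨hexact₀, ‹_›⟩
        exact ShortComplex.isoMk (Iso.refl _) (Iso.refl _) (Iso.refl _)
          ((Category.id_comp _).trans (Category.comp_id _).symm)
          ((Category.id_comp _).trans <|
            (ChainComplex.toSingle₀Equiv_symm_apply_f_zero ε hε).symm.trans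
              (Category.comp_id _).symm)
      · exact K.shape _ _ (by simp)
      all_goals rfl
    | succ n =>
      exact (quasiIsoAt_iff_exactAt' _ _ (ChainComplex.exactAt_succ_single_obj _ _)).2 (hexact n)⟩

variable {R : Type u} [CommRing R]

lemma subsingleton_ext_succ_iff {M : ModuleCat.{u} R} (P : ProjectiveResolution M)
    (N : ModuleCat.{u} R) (n : ℕ) :
    Subsingleton (((Ext R (ModuleCat.{u} R) (n + 1)).obj (Opposite.op M)).obj N) ↔
      ∀ f : P.complex.X (n + 1) ⟶ N, P.complex.d (n + 2) (n + 1) ≫ f = 0 →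
        ∃ g : P.complex.X n ⟶ N, P.complex.d (n + 1) n ≫ g = f := by
  rw [← ModuleCat.isZero_iff_subsingleton, (P.isoExt (R := R) (n + 1) N).isZero_iff,
    ← HomologicalComplex.exactAt_iff_isZero_homology,
    HomologicalComplex.exactAt_iff' _ n (n + 1) (n + 2) (by simp) (by simp),
    ShortComplex.moduleCat_exact_iff]
  rfl

lemma subsingleton_ext_succ_of_injective (M N : ModuleCat.{u} R) [Module.Injective R N] (n : ℕ) :
    Subsingleton (((Ext R (ModuleCat.{u} R) (n + 1)).obj (Opposite.op M)).obj N) := by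
  rw [subsingleton_ext_succ_iff (projectiveResolution M)]
  intro f hf
  have : Injective N := Module.injective_object_of_injective_module (R := R) (M := N)
  have hexact := (projectiveResolution M).exact_succ n
  exact ⟨hexact.descToInjective f hf, hexact.comp_descToInjective f hf⟩

lemma hasFiniteSelfInjDim_of_injective {S : Type} [CommRing S] (h : Module.Injective S S) :
    HasFiniteSelfInjDim S := by
  refine ⟨0, fun M i hi => ?_⟩
  obtain ⟨i, rfl⟩ := Nat.exists_eq_succ_of_ne_zero hi.ne'
  exact subsingleton_ext_succ_of_injective M (ModuleCat.of S S) i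

section Modules

variable {F : ℕ → Type u} [∀ i, AddCommGroup (F i)] [∀ i, Module R (F i)]
  [∀ i, Module.Projective R (F i)] {d : ∀ i, F (i + 1) →ₗ[R] F i} {M : ModuleCat.{u} R}
  {π : F 0 →ₗ[R] M}

/-- The projective resolution of `M` given by an exact sequence `⋯ → F 1 → F 0 → M → 0` of linear
maps with all `F i` projective. -/
noncomputable def projectiveResolutionOfLinearMaps (hd : ∀ i, Function.Exact (d (i + 1)) (d i))
    (hdπ : Function.Exact (d 0) π) (hπ : Function.Surjective π) : ProjectiveResolution M :=
  let K : ChainComplex (ModuleCat.{u} R) ℕ :=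
    ChainComplex.of (fun i => ModuleCat.of R (F i)) (fun i => ModuleCat.ofHom (d i))
      fun i => ModuleCat.hom_ext (hd i).linearMap_comp_eq_zero
  have hKd (i : ℕ) : K.d (i + 1) i = ModuleCat.ofHom (d i) :=
    ChainComplex.of_d (fun i => ModuleCat.of R (F i)) (fun i => ModuleCat.ofHom (d i)) i
  have hK (i : ℕ) : K.ExactAt (i + 1) := by
    rw [HomologicalComplex.exactAt_iff' _ (i + 2) (i + 1) i (by simp) (by simp),
      ShortComplex.ShortExact.moduleCat_exact_iff_function_exact]
    change Function.Exact (K.d (i + 2) (i + 1)) (K.d (i + 1) i)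
    rw [hKd, hKd]
    exact hd i
  have hw : K.d 1 0 ≫ (ModuleCat.ofHom π : K.X 0 ⟶ M) = 0 := by
    rw [hKd]
    exact ModuleCat.hom_ext hdπ.linearMap_comp_eq_zero
  have hK₀ : (ShortComplex.mk _ _ hw).Exact := by
    rw [ShortComplex.ShortExact.moduleCat_exact_iff_function_exact]
    change Function.Exact (K.d 1 0) π
    rw [hKd]
    exact hdπ
  have : Epi (ModuleCat.ofHom π : K.X 0 ⟶ M) := (ModuleCat.epi_iff_surjective _).2 hπ
  projectiveResolutionOfExact K (fun i => inferInstanceAs (Projective (ModuleCat.of R (F i))))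
    (ModuleCat.ofHom π) hw hK₀ hK

lemma projectiveResolutionOfLinearMaps_d (hd : ∀ i, Function.Exact (d (i + 1)) (d i))
    (hdπ : Function.Exact (d 0) π) (hπ : Function.Surjective π) (i : ℕ) :
    (projectiveResolutionOfLinearMaps hd hdπ hπ).complex.d (i + 1) i = ModuleCat.ofHom (d i) :=
  ChainComplex.of_d (fun i => ModuleCat.of R (F i)) (fun i => ModuleCat.ofHom (d i)) i

lemma exact_lcomp_of_subsingleton_ext (hd : ∀ i, Function.Exact (d (i + 1)) (d i))
    (hdπ : Function.Exact (d 0) π) (hπ : Function.Surjective π) {N : ModuleCat.{u} R} {i : ℕ}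
    (h : Subsingleton (((Ext R (ModuleCat.{u} R) (i + 1)).obj (Opposite.op M)).obj N)) :
    Function.Exact (LinearMap.lcomp R N (d i)) (LinearMap.lcomp R N (d (i + 1))) := by
  rw [subsingleton_ext_succ_iff (projectiveResolutionOfLinearMaps hd hdπ hπ)] at h
  simp only [projectiveResolutionOfLinearMaps_d] at h
  refine LinearMap.exact_iff.2 (le_antisymm (fun f hf => ?_) ?_)
  · obtain ⟨g, hg⟩ := h (ModuleCat.ofHom f) (ModuleCat.hom_ext hf)
    exact ⟨g.hom, congrArg ModuleCat.Hom.hom hg⟩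
  · rintro _ ⟨g, rfl⟩
    change (g ∘ₗ d i) ∘ₗ d (i + 1) = 0
    rw [LinearMap.comp_assoc, (hd i).linearMap_comp_eq_zero, LinearMap.comp_zero]

end Modules

end Ext

lemma length_eq_ker_add_range {R M N : Type*} [Ring R] [AddCommGroup M] [Module R M]
    [AddCommGroup N] [Module R N] (f : M →ₗ[R] N) :
    Module.length R M = Module.length R (LinearMap.ker f) + Module.length R (LinearMap.range f) :=
  Module.length_eq_add_of_exact _ _ (LinearMap.ker f).subtype_injective f.surjective_rangeRestrict
    (LinearMap.exact_iff.2 (by simp))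

section SelfInjective

lemma exists_notMem_forall_smul_mem {R M : Type*} [CommRing R] [AddCommGroup M] [Module R M]
    {I : Ideal R} (hI : IsNilpotent I) {N : Submodule R M} (hN : N ≠ ⊤) :
    ∃ y ∉ N, ∀ a ∈ I, a • y ∈ N := by
  classical
  have hex : ∃ n, I ^ n • (⊤ : Submodule R M) ≤ N := hI.imp fun n hn => by
    rw [hn, Submodule.zero_eq_bot, Submodule.bot_smul]
    exact bot_le
  obtain ⟨n, hn⟩ := Nat.exists_eq_succ_of_ne_zero (n := Nat.find hex) fun h => hN <|
    top_le_iff.1 <| by simpa [h] using Nat.find_spec hex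
  obtain ⟨y, hy, hyN⟩ := SetLike.not_le_iff_exists.1 <|
    Nat.find_min hex (m := n) (hn ▸ n.lt_succ_self)
  refine ⟨y, hyN, fun a ha => Nat.find_spec hex ?_⟩
  rw [hn, pow_succ', Submodule.mul_smul]
  exact Submodule.smul_mem_smul ha hy

variable {R : Type u} [CommRing R] [IsLocalRing R] {M Q : Type*}
  [AddCommGroup M] [Module R M] [AddCommGroup Q] [Module R Q]

local notation "𝔪" => IsLocalRing.maximalIdeal R

lemma exists_extend_sup_span_singleton
    (hQ : Function.Surjective (LinearMap.lcomp R Q (Submodule.subtype 𝔪))) (N : Submodule R M)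
    (f : N →ₗ[R] Q) {y : M} (hyN : y ∉ N) (hy : ∀ a ∈ 𝔪, a • y ∈ N) :
    ∃ g : (N ⊔ R ∙ y : Submodule R M) →ₗ[R] Q, ∀ x (hx : x ∈ N),
      g ⟨x, Submodule.mem_sup_left hx⟩ = f ⟨x, hx⟩ := by
  obtain ⟨h, hh⟩ := hQ <| f ∘ₗ
    (LinearMap.toSpanSingleton R M y ∘ₗ Submodule.subtype 𝔪).codRestrict N fun a => hy a a.2
  have hfh (a : R) (ha : a • y ∈ N) : h a = f ⟨a • y, ha⟩ := by
    have ha𝔪 : a ∈ 𝔪 := by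
      by_contra hunit
      exact hyN <|
        (Submodule.smul_mem_iff_of_isUnit N (IsLocalRing.notMem_maximalIdeal.1 hunit)).1 ha
    exact LinearMap.congr_fun hh ⟨a, ha𝔪⟩
  let p : N × R →ₗ[R] (N ⊔ R ∙ y : Submodule R M) :=
    (N.subtype.coprod (LinearMap.toSpanSingleton R M y)).codRestrict _ fun z =>
      Submodule.add_mem_sup z.1.2 (Submodule.mem_span_singleton.2 ⟨z.2, rfl⟩)
  have hp : Function.Surjective p := by
    rintro ⟨z, hz⟩
    obtain ⟨x, hx, w, hw, rfl⟩ := Submodule.mem_sup.1 hz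
    obtain ⟨a, rfl⟩ := Submodule.mem_span_singleton.1 hw
    exact ⟨(⟨x, hx⟩, a), rfl⟩
  have hker : f.coprod h ∘ₗ (LinearMap.ker p).subtype = 0 := by
    ext ⟨⟨x, a⟩, hxa⟩
    have hx : (x : M) = -(a • y) := eq_neg_of_add_eq_zero_left (congrArg Subtype.val hxa)
    have ha : a • y ∈ N := neg_mem_iff.1 (hx ▸ x.2)
    obtain rfl : x = -⟨a • y, ha⟩ := Subtype.ext hx
    simp [hfh a ha]
  obtain ⟨g, hg⟩ := (LinearMap.exact_lcomp_of_exact_of_surjective Q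
    (LinearMap.exact_subtype_ker_map p) hp (f.coprod h)).1 hker
  refine ⟨g, fun x hx => ?_⟩
  have hpx : p (⟨x, hx⟩, 0) = ⟨x, Submodule.mem_sup_left hx⟩ :=
    Subtype.ext (show x + (0 : R) • y = x by rw [zero_smul, add_zero])
  simpa [hpx] using LinearMap.congr_fun hg (⟨x, hx⟩, 0)

lemma length_quotient_maximalIdeal : Module.length R (R ⧸ 𝔪) = 1 :=
  Module.length_eq_one_iff.2 <|
    isSimpleModule_iff_quot_maximal.2 ⟨𝔪, inferInstance, ⟨LinearEquiv.refl R _⟩⟩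

lemma length_eq_finrank_mul {F : Type*} [AddCommGroup F] [Module R F] [Module.Free R F]
    [Module.Finite R F] :
    Module.length R F = Module.finrank R F * (Module.length R 𝔪 + 1) := by
  rw [Module.length_of_free_of_finite, length_eq_ker_add_range (Submodule.mkQ 𝔪),
    Submodule.ker_mkQ, Submodule.range_mkQ, Module.length_top, length_quotient_maximalIdeal]

lemma length_linearMap_le (hM : IsFiniteLength R M) :
    Module.length R (M →ₗ[R] Q) ≤ Module.length R M * Module.length R ((R ⧸ 𝔪) →ₗ[R] Q) := by
  induction hM with
  | of_subsingleton => simp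
  | @of_simple_quotient M _ _ N _ _ ih =>
    obtain ⟨I, hI, ⟨e⟩⟩ := isSimpleModule_iff_quot_maximal.1 ‹IsSimpleModule R (M ⧸ N)›
    obtain rfl := IsLocalRing.eq_maximalIdeal hI
    have hexact := LinearMap.exact_lcomp_of_exact_of_surjective Q
      (LinearMap.exact_subtype_mkQ N) N.mkQ_surjective
    have hker : Module.length R (LinearMap.ker (LinearMap.lcomp R Q N.subtype)) ≤
        Module.length R ((R ⧸ 𝔪) →ₗ[R] Q) := by
      rw [hexact.linearMap_ker_eq, ← (LinearEquiv.congrLeft Q R e).length_eq]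
      exact Module.length_le_of_surjective _ (LinearMap.surjective_rangeRestrict _)
    calc Module.length R (M →ₗ[R] Q)
        ≤ Module.length R ((R ⧸ 𝔪) →ₗ[R] Q) + Module.length R (N →ₗ[R] Q) := by
          rw [length_eq_ker_add_range (LinearMap.lcomp R Q N.subtype)]
          exact add_le_add hker (Module.length_le_of_injective _ (Submodule.subtype_injective _))
      _ ≤ Module.length R ((R ⧸ 𝔪) →ₗ[R] Q) +
          Module.length R N * Module.length R ((R ⧸ 𝔪) →ₗ[R] Q) := by gcongr
      _ = Module.length R M * Module.length R ((R ⧸ 𝔪) →ₗ[R] Q) := by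
          rw [Module.length_eq_add_of_exact N.subtype N.mkQ N.subtype_injective N.mkQ_surjective
            (LinearMap.exact_subtype_mkQ N), Module.length_eq_one R (M ⧸ N), add_one_mul, add_comm]

variable [IsArtinianRing R]

lemma baer_of_surjective_lcomp_maximalIdeal
    (hQ : Function.Surjective (LinearMap.lcomp R Q (Submodule.subtype 𝔪))) : Module.Baer R Q := by
  intro I
  induction I using IsNoetherian.induction with
  | hgt I ih =>
  intro f
  by_cases hI : I = ⊤
  · subst hI
    exact ⟨f ∘ₗ Submodule.topEquiv.symm.toLinearMap, fun _ _ => rfl⟩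
  obtain ⟨y, hyI, hy⟩ :=
    exists_notMem_forall_smul_mem (IsArtinianRing.isNilpotent_jacobson_bot (R := R)) hI
  rw [IsLocalRing.jacobson_eq_maximalIdeal _ bot_ne_top] at hy
  obtain ⟨g, hg⟩ := exists_extend_sup_span_singleton hQ I f hyI hy
  obtain ⟨g', hg'⟩ := ih _ (left_lt_sup.2 fun h => hyI (h (Submodule.mem_span_singleton_self y))) g
  exact ⟨g', fun x hx => (hg' x (Submodule.mem_sup_left hx)).trans (hg x hx)⟩

lemma injective_of_length_linearMap_le_one (h : Module.length R ((R ⧸ 𝔪) →ₗ[R] R) ≤ 1) :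
    Module.Injective R R := by
  refine (baer_of_surjective_lcomp_maximalIdeal ?_).injective
  set ρ := LinearMap.lcomp R R (Submodule.subtype 𝔪)
  have hker : Module.length R (LinearMap.ker ρ) ≤ 1 := by
    rw [(LinearMap.exact_lcomp_of_exact_of_surjective R (LinearMap.exact_subtype_mkQ 𝔪)
      (Submodule.mkQ_surjective 𝔪)).linearMap_ker_eq]
    exact (Module.length_le_of_surjective _ (LinearMap.surjective_rangeRestrict _)).trans h
  have hdual : Module.length R (𝔪 →ₗ[R] R) ≤ Module.length R 𝔪 :=
    (length_linearMap_le (isFiniteLength_iff_isNoetherian_isArtinian.2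
      ⟨inferInstance, inferInstance⟩)).trans (mul_le_of_le_one_right' h)
  have hR : Module.length R 𝔪 + 1 ≤ Module.length R (LinearMap.range ρ) + 1 := by
    calc Module.length R 𝔪 + 1 = Module.length R R := by simp [length_eq_finrank_mul (F := R)]
      _ = Module.length R (LinearMap.ker ρ) + Module.length R (LinearMap.range ρ) := by
          rw [← length_eq_ker_add_range, (LinearMap.ringLmapEquivSelf R R R).length_eq]
      _ ≤ Module.length R (LinearMap.range ρ) + 1 := by
          rw [add_comm]
          gcongr
  by_contra hρ
  rw [← LinearMap.range_eq_top] at hρ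
  exact (Submodule.length_lt hρ).not_ge
    (hdual.trans ((ENat.add_le_add_iff_right ENat.one_ne_top).1 hR))

end SelfInjective

section IdealSMul

variable {R M N : Type*} [CommRing R] [AddCommGroup M] [Module R M] [AddCommGroup N] [Module R N]
  {I : Ideal R}

lemma map_mem_smul_range (f : M →ₗ[R] N) {x : M} (hx : x ∈ I • (⊤ : Submodule R M)) :
    f x ∈ I • LinearMap.range f := by
  rw [LinearMap.range_eq_map, ← Submodule.map_smul'']
  exact Submodule.mem_map_of_mem hx

lemma map_mem_smul_top (f : M →ₗ[R] N) {x : M} (hx : x ∈ I • (⊤ : Submodule R M)) :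
    f x ∈ I • (⊤ : Submodule R N) :=
  Submodule.smul_mono le_rfl le_top (map_mem_smul_range f hx)

lemma map_subtype_smul_top (N : Submodule R M) :
    (I • (⊤ : Submodule R N)).map N.subtype = I • N := by
  rw [Submodule.map_smul'', Submodule.map_subtype_top]

lemma length_smul_top_coe (N : Submodule R M) :
    Module.length R (I • ⊤ : Submodule R N) = Module.length R (I • N : Submodule R M) := by
  rw [(N.equivSubtypeMap _).length_eq, map_subtype_smul_top]

lemma mem_smul_top_iff_forall_dual [Module.Projective R M] {x : M} :
    x ∈ I • (⊤ : Submodule R M) ↔ ∀ φ : Module.Dual R M, φ x ∈ I := by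
  refine ⟨fun hx φ => by simpa using map_mem_smul_top φ hx, fun hx => ?_⟩
  obtain ⟨s, hs⟩ := Module.projective_def'.1 ‹Module.Projective R M›
  rw [show x = Finsupp.linearCombination R id (s x) from (LinearMap.congr_fun hs x).symm,
    Finsupp.linearCombination_apply]
  exact Submodule.sum_mem _ fun y _ =>
    Submodule.smul_mem_smul (hx (Finsupp.lapply y ∘ₗ s)) Submodule.mem_top

lemma range_dualMap_le_smul_top [Module.Projective R M] [Module.Finite R M]
    {f : M →ₗ[R] N} (hf : LinearMap.range f ≤ I • ⊤) :
    LinearMap.range f.dualMap ≤ I • (⊤ : Submodule R (Module.Dual R M)) := by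
  rintro _ ⟨φ, rfl⟩
  refine mem_smul_top_iff_forall_dual.2 fun ξ => ?_
  obtain ⟨x, rfl⟩ := (Module.bijective_dual_eval R M).2 ξ
  simpa using map_mem_smul_top φ (hf ⟨x, rfl⟩)

lemma mem_smul_top_pi_iff {ι : Type*} [Finite ι] {x : ι → M} :
    x ∈ I • (⊤ : Submodule R (ι → M)) ↔ ∀ i, x i ∈ I • (⊤ : Submodule R M) := by
  classical
  have := Fintype.ofFinite ι
  refine ⟨fun hx i => map_mem_smul_top (LinearMap.proj i) hx, fun hx => ?_⟩
  rw [← Finset.univ_sum_single x]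
  exact Submodule.sum_mem _ fun i _ => map_mem_smul_top (LinearMap.single R (fun _ => M) i) (hx i)

lemma length_smul_top [Nontrivial R] [Module.Free R M] [Module.Finite R M] :
    Module.length R (I • ⊤ : Submodule R M) = Module.finrank R M * Module.length R I := by
  let b := Module.finBasis R M
  have hrange : (I • ⊤ : Submodule R M).map b.equivFun.toLinearMap =
      LinearMap.range (I.subtype.compLeft (Fin (Module.finrank R M))) := by
    ext x
    rw [Submodule.map_smul'', Submodule.map_top, LinearEquiv.range, mem_smul_top_pi_iff,
      LinearMap.range_compLeft]
    simp
  have hinj : Function.Injective (I.subtype.compLeft (Fin (Module.finrank R M))) :=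
    fun x y h => funext fun i => Subtype.ext (congrFun h i)
  rw [(b.equivFun.submoduleMap _).length_eq, hrange,
    ← (LinearEquiv.ofInjective _ hinj).length_eq, Module.length_pi_of_fintype]
  simp

end IdealSMul

section Socle

variable {R : Type u} [CommRing R] [IsLocalRing R]

local notation "𝔪" => IsLocalRing.maximalIdeal R

lemma exists_linearMap_eq_one {M : Type*} [AddCommGroup M] [Module R M] {x : M}
    (hx : x ∉ 𝔪 • (⊤ : Submodule R M)) : ∃ φ : M →ₗ[R] R ⧸ 𝔪, φ x = 1 := by
  let := Ideal.Quotient.field 𝔪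
  have hx0 : (𝔪 • (⊤ : Submodule R M)).mkQ x ≠ 0 := by simpa using hx
  obtain ⟨φ, hφ⟩ := Module.Projective.exists_dual_ne_zero (R ⧸ 𝔪) hx0
  exact ⟨((φ _)⁻¹ • φ).restrictScalars R ∘ₗ Submodule.mkQ _, inv_mul_cancel₀ hφ⟩

/- A functional `ψ` on `F` which is a unit at a lift `z` of `x` identifies `𝔪` with `𝔪 • z`, and the
extension of a map from `ker p` to `F` is determined by its value at `z`. -/
lemma surjective_lcomp_maximalIdeal_of_notMem {F X Q : Type*} [AddCommGroup F] [Module R F]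
    [AddCommGroup X] [Module R X] [AddCommGroup Q] [Module R Q] [Module.Projective R F]
    {p : F →ₗ[R] X} (hp : Function.Surjective p)
    (hext : Function.Surjective (LinearMap.lcomp R Q (LinearMap.ker p).subtype)) {x : X}
    (hx : ∀ a ∈ 𝔪, a • x = 0) (hx' : x ∉ 𝔪 • (⊤ : Submodule R X)) :
    Function.Surjective (LinearMap.lcomp R Q (Submodule.subtype 𝔪)) := by
  obtain ⟨φ, hφ⟩ := exists_linearMap_eq_one hx'
  obtain ⟨ψ, hψ⟩ := Module.projective_lifting_property (Submodule.mkQ 𝔪) (φ ∘ₗ p)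
    (Submodule.mkQ_surjective _)
  obtain ⟨z, rfl⟩ := hp x
  replace hψ (y : F) : Ideal.Quotient.mk 𝔪 (ψ y) = φ (p y) := LinearMap.congr_fun hψ y
  have hψker (y : LinearMap.ker p) : ψ y ∈ 𝔪 :=
    Ideal.Quotient.eq_zero_iff_mem.1 (by rw [hψ, y.2, map_zero])
  obtain ⟨u, hu⟩ : IsUnit (ψ z) := by
    rw [← IsLocalRing.notMem_maximalIdeal, ← Ideal.Quotient.eq_zero_iff_mem, hψ, hφ]
    exact one_ne_zero
  intro f
  obtain ⟨g, hg⟩ := hext (f ∘ₗ (ψ ∘ₗ (LinearMap.ker p).subtype).codRestrict 𝔪 hψker)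
  refine ⟨LinearMap.toSpanSingleton R Q (u⁻¹ • g z), LinearMap.ext fun a => ?_⟩
  have haz : (a : R) • z ∈ LinearMap.ker p := by
    rw [LinearMap.mem_ker, map_smul, hx a a.2]
  have hga : g ((a : R) • z) = f (ψ z • a) :=
    (LinearMap.congr_fun hg ⟨_, haz⟩).trans <| congrArg f <| Subtype.ext <|
      show ψ ((a : R) • z) = ψ z * a by rw [map_smul, smul_eq_mul, mul_comm]
  rw [map_smul, map_smul, ← hu] at hga
  calc (a : R) • u⁻¹ • g z = u⁻¹ • (a : R) • g z := smul_comm _ _ _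
    _ = u⁻¹ • u • f a := by rw [hga, Units.smul_def u]
    _ = f a := inv_smul_smul u _

lemma mem_smul_top_of_forall_smul_eq_zero [IsArtinianRing R] (hR : ¬ Module.Injective R R)
    {F X : Type*} [AddCommGroup F] [Module R F] [AddCommGroup X] [Module R X]
    [Module.Projective R F] {p : F →ₗ[R] X} (hp : Function.Surjective p)
    (hext : Function.Surjective (LinearMap.ker p).subtype.dualMap) {x : X}
    (hx : ∀ a ∈ 𝔪, a • x = 0) : x ∈ 𝔪 • (⊤ : Submodule R X) := by
  by_contra hx'
  exact hR (baer_of_surjective_lcomp_maximalIdeal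
    (surjective_lcomp_maximalIdeal_of_notMem hp hext hx hx')).injective

end Socle

section Exact

variable {R : Type u} [CommRing R]

lemma exact_dualMap_dualMap_iff {M N P : Type*} [AddCommGroup M] [Module R M] [AddCommGroup N]
    [Module R N] [AddCommGroup P] [Module R P] [Module.IsReflexive R M] [Module.IsReflexive R N]
    [Module.IsReflexive R P] {f : M →ₗ[R] N} {g : N →ₗ[R] P} :
    Function.Exact f.dualMap.dualMap g.dualMap.dualMap ↔ Function.Exact f g :=
  Function.Exact.iff_of_ladder_linearEquiv (e₁ := Module.evalEquiv R M)
    (e₂ := Module.evalEquiv R N) (e₃ := Module.evalEquiv R P) rfl rfl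

variable {A' A B C D : Type*} [AddCommGroup A'] [Module R A'] [AddCommGroup A] [Module R A]
  [AddCommGroup B] [Module R B] [AddCommGroup C] [Module R C] [AddCommGroup D] [Module R D]
  {e : A' →ₗ[R] A} {f : A →ₗ[R] B} {g : B →ₗ[R] C} {h : C →ₗ[R] D}

lemma surjective_dualMap_subtype_ker (hef : f ∘ₗ e = 0)
    (hdual : Function.Exact f.dualMap e.dualMap) (hfg : Function.Exact f g) :
    Function.Surjective (LinearMap.ker g).subtype.dualMap := by
  intro φ
  let f' : A →ₗ[R] LinearMap.ker g := f.codRestrict _ fun x => hfg.apply_apply_eq_zero x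
  have hφe : e.dualMap (φ ∘ₗ f') = 0 := LinearMap.ext fun x =>
    (congrArg φ (Subtype.ext (LinearMap.congr_fun hef x))).trans (map_zero φ)
  obtain ⟨ψ, hψ⟩ := (hdual _).1 hφe
  refine ⟨ψ, LinearMap.ext fun ⟨y, hy⟩ => ?_⟩
  obtain ⟨x, rfl⟩ := (hfg y).1 hy
  exact LinearMap.congr_fun hψ x

variable [IsLocalRing R] [IsArtinianRing R]

local notation "𝔪" => IsLocalRing.maximalIdeal R

lemma mem_smul_range_of_forall_smul_eq_zero [Module.Projective R B]
    (hR : ¬ Module.Injective R R) (hef : f ∘ₗ e = 0)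
    (hdual : Function.Exact f.dualMap e.dualMap) (hfg : Function.Exact f g) {y : C}
    (hy : y ∈ LinearMap.range g) (hy0 : ∀ a ∈ 𝔪, a • y = 0) : y ∈ 𝔪 • LinearMap.range g := by
  have hext : Function.Surjective (LinearMap.ker g.rangeRestrict).subtype.dualMap := by
    rw [LinearMap.ker_rangeRestrict]
    exact surjective_dualMap_subtype_ker hef hdual hfg
  exact (Submodule.mem_smul_top_iff _ _ ⟨y, hy⟩).1 <| mem_smul_top_of_forall_smul_eq_zero hR
    g.surjective_rangeRestrict hext fun a ha => Subtype.ext (hy0 a ha)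

lemma smul_range_eq_sq_smul_top [Module.Projective R B]
    (hR : ¬ Module.Injective R R) (hm3 : 𝔪 ^ 3 = ⊥) (hef : f ∘ₗ e = 0)
    (hdual : Function.Exact f.dualMap e.dualMap) (hfg : Function.Exact f g)
    (hgh : Function.Exact g h) (hg : LinearMap.range g ≤ 𝔪 • ⊤) (hh : LinearMap.range h ≤ 𝔪 • ⊤) :
    𝔪 • LinearMap.range g = 𝔪 ^ 2 • (⊤ : Submodule R C) := by
  apply le_antisymm
  · rw [pow_two, Submodule.mul_smul]
    exact Submodule.smul_mono le_rfl hg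
  intro y hy
  have hhy : h y ∈ 𝔪 ^ 3 • (⊤ : Submodule R D) := by
    rw [pow_succ, Submodule.mul_smul]
    exact Submodule.smul_mono le_rfl hh (map_mem_smul_range h hy)
  refine mem_smul_range_of_forall_smul_eq_zero hR hef hdual hfg
    ((hgh y).1 (by simpa [hm3] using hhy)) fun a ha => ?_
  have hay : a • y ∈ 𝔪 ^ 3 • (⊤ : Submodule R C) := by
    rw [pow_succ', Submodule.mul_smul]
    exact Submodule.smul_mem_smul ha hy
  simpa [hm3] using hay

end Exact

/-- A minimal complex `⋯ → F₂ → F₁ → F₀` of finite free modules over a local ring such that the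
complex and its `R`-dual are exact at `Fᵢ` for `i > 0`: for instance the minimal free resolution of
a nonfree module `M` with `Extⁱ(M, R) = 0` for `i > 0`. -/
structure MinimalBiexactComplex (R : Type u) [CommRing R] [IsLocalRing R] where
  rank : ℕ → ℕ
  d : ∀ i, (Fin (rank (i + 1)) → R) →ₗ[R] (Fin (rank i) → R)
  exact : ∀ i, Function.Exact (d (i + 1)) (d i)
  exact_dualMap : ∀ i, Function.Exact (d i).dualMap (d (i + 1)).dualMap
  range_le : ∀ i, LinearMap.range (d i) ≤ IsLocalRing.maximalIdeal R • ⊤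
  rank_one_pos : 0 < rank 1

namespace MinimalBiexactComplex

variable {R : Type u} [CommRing R] [IsLocalRing R]

local notation "𝔪" => IsLocalRing.maximalIdeal R

variable (T : MinimalBiexactComplex R)

lemma range_dualMap_le (i : ℕ) : LinearMap.range (T.d i).dualMap ≤ 𝔪 • ⊤ :=
  range_dualMap_le_smul_top (T.range_le i)

lemma ker_le (i : ℕ) : LinearMap.ker (T.d i) ≤ 𝔪 • ⊤ :=
  (T.exact i).linearMap_ker_eq.trans_le (T.range_le _)

lemma ker_dualMap_le (i : ℕ) : LinearMap.ker (T.d (i + 1)).dualMap ≤ 𝔪 • ⊤ :=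
  (T.exact_dualMap i).linearMap_ker_eq.trans_le (T.range_dualMap_le _)

variable [IsArtinianRing R] (hR : ¬ Module.Injective R R)
include hR

lemma mem_smul_ker_of_forall_smul_eq_zero (i : ℕ) {x : Fin (T.rank (i + 1)) → R}
    (hx : x ∈ LinearMap.ker (T.d i)) (hx0 : ∀ a ∈ 𝔪, a • x = 0) :
    x ∈ 𝔪 • LinearMap.ker (T.d i) := by
  rw [(T.exact i).linearMap_ker_eq] at hx ⊢
  exact mem_smul_range_of_forall_smul_eq_zero hR (T.exact (i + 2)).linearMap_comp_eq_zero
    (T.exact_dualMap (i + 2)) (T.exact (i + 1)) hx hx0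

include T in
lemma mem_maximalIdeal_sq_of_forall_mul_eq_zero {x : R} (hx : ∀ a ∈ 𝔪, a * x = 0) :
    x ∈ 𝔪 ^ 2 := by
  let j : Fin (T.rank 1) := ⟨0, T.rank_one_pos⟩
  let y : Fin (T.rank 1) → R := x • Pi.single j 1
  have hy : y ∈ 𝔪 • LinearMap.ker (T.d 0) := by
    refine T.mem_smul_ker_of_forall_smul_eq_zero hR 0 ?_ fun a ha => ?_
    · have hxd : 𝔪 • ⊤ ≤ LinearMap.ker (LinearMap.lsmul R (Fin (T.rank 0) → R) x) :=
        Submodule.smul_le.2 fun a ha v _ => by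
          rw [LinearMap.mem_ker, LinearMap.lsmul_apply, smul_smul, mul_comm, hx a ha, zero_smul]
      rw [LinearMap.mem_ker, map_smul]
      exact hxd (T.range_le 0 ⟨_, rfl⟩)
    · rw [smul_smul, hx a ha, zero_smul]
  have hy2 : y ∈ 𝔪 ^ 2 • (⊤ : Submodule R (Fin (T.rank 1) → R)) := by
    rw [pow_two, Submodule.mul_smul]
    exact Submodule.smul_mono le_rfl (T.ker_le 0) hy
  simpa [y] using mem_smul_top_pi_iff.1 hy2 j

variable (hm3 : IsLocalRing.maximalIdeal R ^ 3 = ⊥)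
include hm3

lemma smul_range_d_eq (i : ℕ) :
    𝔪 • LinearMap.range (T.d (i + 1)) = 𝔪 ^ 2 • (⊤ : Submodule R (Fin (T.rank (i + 1)) → R)) :=
  smul_range_eq_sq_smul_top hR hm3 (T.exact (i + 2)).linearMap_comp_eq_zero
    (T.exact_dualMap (i + 2)) (T.exact (i + 1)) (T.exact i) (T.range_le _) (T.range_le _)

lemma smul_range_dualMap_eq (i : ℕ) :
    𝔪 • LinearMap.range (T.d (i + 2)).dualMap =
      𝔪 ^ 2 • (⊤ : Submodule R (Module.Dual R (Fin (T.rank (i + 3)) → R))) :=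
  smul_range_eq_sq_smul_top hR hm3 (T.exact_dualMap i).linearMap_comp_eq_zero
    (exact_dualMap_dualMap_iff.2 (T.exact i)) (T.exact_dualMap (i + 1)) (T.exact_dualMap (i + 2))
    (T.range_dualMap_le _) (T.range_dualMap_le _)

end MinimalBiexactComplex

/-- `p : F → X` is surjective with kernel contained in `𝔪F`. For `F` finite free this says that `p`
maps a basis of `F` to a minimal system of generators of `X`. -/
def IsMinimalCover {R F X : Type*} [CommRing R] [IsLocalRing R] [AddCommGroup F] [Module R F]
    [AddCommGroup X] [Module R X] (p : F →ₗ[R] X) : Prop :=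
  Function.Surjective p ∧ LinearMap.ker p ≤ IsLocalRing.maximalIdeal R • ⊤

namespace IsMinimalCover

variable {R : Type u} [CommRing R] [IsLocalRing R] {F F' X Y : Type*}
  [AddCommGroup F] [Module R F] [AddCommGroup F'] [Module R F']
  [AddCommGroup X] [Module R X] [AddCommGroup Y] [Module R Y]

local notation "𝔪" => IsLocalRing.maximalIdeal R

lemma linearEquiv_comp {p : F →ₗ[R] X} (hp : IsMinimalCover p) (e : X ≃ₗ[R] Y) :
    IsMinimalCover (e.toLinearMap ∘ₗ p) :=
  ⟨e.surjective.comp hp.1, by simpa using hp.2⟩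

lemma compLeft {p : F →ₗ[R] X} (hp : IsMinimalCover p) (ι : Type*) [Finite ι] :
    IsMinimalCover (p.compLeft ι) :=
  ⟨fun y => ⟨fun i => Function.surjInv hp.1 (y i),
      funext fun i => Function.surjInv_eq hp.1 (y i)⟩,
    fun _ hx => mem_smul_top_pi_iff.2 fun i => hp.2 (congrFun hx i)⟩

lemma surjective_of_comp [Module.Finite R F] {p : F →ₗ[R] X} (hp : IsMinimalCover p)
    {f : Y →ₗ[R] F} (hf : Function.Surjective (p ∘ₗ f)) : Function.Surjective f := by
  rw [← LinearMap.range_eq_top, eq_top_iff]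
  refine Submodule.le_of_le_smul_of_le_jacobson_bot Module.Finite.fg_top
    (IsLocalRing.maximalIdeal_le_jacobson _) fun x _ => ?_
  obtain ⟨y, hy⟩ := hf (p x)
  have hxy : x - f y ∈ LinearMap.ker p := by
    rw [LinearMap.mem_ker, map_sub, sub_eq_zero]
    exact hy.symm
  exact Submodule.mem_sup.2 ⟨f y, ⟨y, rfl⟩, x - f y, hp.2 hxy, add_sub_cancel _ _⟩

lemma exists_linearEquiv [Module.Finite R F] [Module.Projective R F] [Module.Finite R F']
    [Module.Projective R F'] {p : F →ₗ[R] X} (hp : IsMinimalCover p) {p' : F' →ₗ[R] X}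
    (hp' : IsMinimalCover p') : ∃ e : F ≃ₗ[R] F', p' ∘ₗ e.toLinearMap = p := by
  obtain ⟨f, hf⟩ := Module.projective_lifting_property p' p hp'.1
  obtain ⟨g, hg⟩ := Module.projective_lifting_property p p' hp.1
  have hfs : Function.Surjective f := hp'.surjective_of_comp (hf ▸ hp.1)
  have hgs : Function.Surjective g := hp.surjective_of_comp (hg ▸ hp'.1)
  have hgf : Function.Injective (g ∘ₗ f) :=
    OrzechProperty.injective_of_surjective_endomorphism _ (hgs.comp hfs)
  exact ⟨LinearEquiv.ofBijective f ⟨Function.Injective.of_comp hgf, hfs⟩, hf⟩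

lemma length_eq [IsArtinianRing R] [Module.Free R F] [Module.Finite R F] {p : F →ₗ[R] X}
    (hp : IsMinimalCover p) :
    Module.length R X = Module.finrank R F + Module.length R (𝔪 • ⊤ : Submodule R X) := by
  have hF : Module.length R F =
      Module.finrank R F + Module.length R (𝔪 • ⊤ : Submodule R F) := by
    rw [length_smul_top, length_eq_finrank_mul, mul_add, mul_one, add_comm]
  let q : (𝔪 • ⊤ : Submodule R F) →ₗ[R] X := p ∘ₗ Submodule.subtype _
  have hqker : Module.length R (LinearMap.ker q) = Module.length R (LinearMap.ker p) := by
    rw [LinearMap.ker_comp, ← Submodule.submoduleOf]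
    exact (Submodule.submoduleOfEquivOfLe hp.2).length_eq
  have hqrange : LinearMap.range q = 𝔪 • ⊤ := by
    rw [LinearMap.range_comp, Submodule.range_subtype, Submodule.map_smul'', Submodule.map_top,
      LinearMap.range_eq_top.2 hp.1]
  rw [length_eq_ker_add_range p, LinearMap.range_eq_top.2 hp.1, Module.length_top,
    length_eq_ker_add_range q, hqker, hqrange] at hF
  exact ENat.add_right_injective_of_ne_top (Module.length_ne_top (M := LinearMap.ker p))
    (hF.trans (add_left_comm _ _ _))

lemma of_sub_mem [Module.Finite R X] {p p' : F →ₗ[R] X} (hp : IsMinimalCover p)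
    (h : ∀ x, p x - p' x ∈ 𝔪 • (⊤ : Submodule R X)) : IsMinimalCover p' := by
  have hmap : (𝔪 • ⊤ : Submodule R F).map p = 𝔪 • ⊤ := by
    rw [Submodule.map_smul'', Submodule.map_top, LinearMap.range_eq_top.2 hp.1]
  constructor
  · have hpp' : (𝔪 • (⊤ : Submodule R X)).mkQ ∘ₗ p' = Submodule.mkQ _ ∘ₗ p :=
      LinearMap.ext fun x => ((Submodule.Quotient.eq _).2 (h x)).symm
    exact LinearMap.surjective_of_surjective_comp_mkQ p' 𝔪 (IsLocalRing.maximalIdeal_le_jacobson _)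
      (hpp' ▸ (Submodule.mkQ_surjective _).comp hp.1)
  · intro x hx
    have hpx : p x ∈ (𝔪 • ⊤ : Submodule R F).map p := by
      simpa [hmap, LinearMap.mem_ker.1 hx] using h x
    obtain ⟨y, hy, hyx⟩ := hpx
    have hxy : x - y ∈ LinearMap.ker p := by rw [LinearMap.mem_ker, map_sub, hyx, sub_self]
    exact (Submodule.sub_mem_iff_left _ hy).1 (hp.2 hxy)

end IsMinimalCover

section Existence

variable {R : Type u} [CommRing R] [IsLocalRing R] {X : Type*} [AddCommGroup X] [Module R X]
  [Module.Finite R X]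

local notation "𝔪" => IsLocalRing.maximalIdeal R

lemma exists_linearEquiv_pi_quotient_maximalIdeal (h : 𝔪 • (⊤ : Submodule R X) = ⊥) :
    ∃ n, Nonempty (X ≃ₗ[R] (Fin n → R ⧸ 𝔪)) := by
  let := Ideal.Quotient.field 𝔪
  have htors : Module.IsTorsionBySet R X 𝔪 := fun x a => by
    simpa [h] using Submodule.smul_mem_smul a.2 (Submodule.mem_top (x := x))
  let := htors.module
  have := Module.Finite.of_restrictScalars_finite R (R ⧸ 𝔪) X
  exact ⟨_, ⟨(Module.finBasis (R ⧸ 𝔪) X).equivFun.restrictScalars R⟩⟩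

variable (R X) in
lemma exists_isMinimalCover : ∃ (n : ℕ) (p : (Fin n → R) →ₗ[R] X), IsMinimalCover p := by
  obtain ⟨n, ⟨e⟩⟩ := exists_linearEquiv_pi_quotient_maximalIdeal
    (X := X ⧸ 𝔪 • (⊤ : Submodule R X)) (by
      rw [← Submodule.range_mkQ, LinearMap.range_eq_map, ← Submodule.map_smul'',
        ← LinearMap.le_ker_iff_map, Submodule.ker_mkQ])
  let q : (Fin n → R) →ₗ[R] (Fin n → R ⧸ 𝔪) := (Submodule.mkQ 𝔪).compLeft (Fin n)
  have hq : Function.Surjective q := (Submodule.mkQ_surjective 𝔪).comp_left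
  obtain ⟨p, hp⟩ := Module.projective_lifting_property (Submodule.mkQ (𝔪 • (⊤ : Submodule R X)))
    (e.symm.toLinearMap ∘ₗ q) (Submodule.mkQ_surjective _)
  refine ⟨n, p, ?_, fun x hx => ?_⟩
  · refine LinearMap.surjective_of_surjective_comp_mkQ p 𝔪
      (IsLocalRing.maximalIdeal_le_jacobson _) ?_
    rw [hp]
    exact e.symm.surjective.comp hq
  · have hqx : q x = 0 := by
      rw [← e.symm.map_eq_zero_iff]
      exact (LinearMap.congr_fun hp x).symm.trans (by simp [LinearMap.mem_ker.1 hx])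
    refine mem_smul_top_pi_iff.2 fun i => ?_
    simpa [q, Ideal.Quotient.eq_zero_iff_mem] using congrFun hqx i

lemma nonempty_sq_smul_top_linearEquiv [IsNoetherianRing R] {F : Type*} [AddCommGroup F]
    [Module R F] [Module.Free R F] [Module.Finite R F] (hm3 : 𝔪 ^ 3 = ⊥) {r : ℕ}
    (hr : Module.length R ↥(𝔪 ^ 2) = r) :
    Nonempty ((𝔪 ^ 2 • ⊤ : Submodule R F) ≃ₗ[R] (Fin (Module.finrank R F * r) → R ⧸ 𝔪)) := by
  have hzero : 𝔪 • (⊤ : Submodule R (𝔪 ^ 2 • ⊤ : Submodule R F)) = ⊥ := by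
    apply Submodule.map_injective_of_injective (Submodule.subtype_injective _)
    rw [map_subtype_smul_top, ← Submodule.mul_smul, ← pow_succ', hm3, Submodule.bot_smul,
      Submodule.map_bot]
  obtain ⟨n, ⟨e⟩⟩ := exists_linearEquiv_pi_quotient_maximalIdeal hzero
  have hlength := e.length_eq
  rw [length_smul_top, hr, Module.length_pi_of_fintype] at hlength
  simp only [length_quotient_maximalIdeal, Finset.sum_const, Finset.card_univ, Fintype.card_fin,
    nsmul_one] at hlength
  obtain rfl : Module.finrank R F * r = n := mod_cast hlength
  exact ⟨e⟩

end Existence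

section Betti

variable {R : Type u} [CommRing R] [IsLocalRing R]

local notation "𝔪" => IsLocalRing.maximalIdeal R

lemma length_linearMap_quotient_maximalIdeal (hm3 : 𝔪 ^ 3 = ⊥)
    (hsoc : ∀ x, (∀ a ∈ 𝔪, a * x = 0) → x ∈ 𝔪 ^ 2) :
    Module.length R ((R ⧸ 𝔪) →ₗ[R] R) = Module.length R ↥(𝔪 ^ 2) := by
  let ε : ((R ⧸ 𝔪) →ₗ[R] R) →ₗ[R] R :=
    (LinearMap.ringLmapEquivSelf R R R).toLinearMap ∘ₗ LinearMap.lcomp R R (Submodule.mkQ 𝔪)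
  have hε : Function.Injective ε := (LinearMap.ringLmapEquivSelf R R R).injective.comp
    (LinearMap.lcomp_injective_of_surjective _ (Submodule.mkQ_surjective 𝔪))
  have hrange : LinearMap.range ε = 𝔪 ^ 2 := by
    ext x
    constructor
    · rintro ⟨φ, rfl⟩
      refine hsoc _ fun a ha => ?_
      calc a * φ (Submodule.mkQ 𝔪 1) = φ (Submodule.mkQ 𝔪 (a • 1)) := by
            rw [map_smul, map_smul, smul_eq_mul]
        _ = 0 := by
            rw [(LinearMap.mem_ker (f := Submodule.mkQ 𝔪)).1 (by simpa using ha), map_zero]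
    · intro hx
      have hx0 : 𝔪 ≤ LinearMap.ker (LinearMap.toSpanSingleton R R x) := fun a ha => by
        have : a * x ∈ 𝔪 ^ 3 := by
          rw [pow_succ']
          exact Ideal.mul_mem_mul ha hx
        simpa [hm3] using this
      exact ⟨Submodule.liftQ 𝔪 _ hx0, one_smul R x⟩
  rw [(LinearEquiv.ofInjective ε hε).length_eq, hrange]

variable [IsArtinianRing R] {A B C : Type*} [AddCommGroup A] [Module R A] [Module.Free R A]
  [Module.Finite R A] [AddCommGroup B] [Module R B] [Module.Free R B] [Module.Finite R B]
  [AddCommGroup C] [Module R C] [Module.Free R C] [Module.Finite R C]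
  {f : A →ₗ[R] B} {g : B →ₗ[R] C}

lemma length_range_eq (hf : LinearMap.ker f ≤ 𝔪 • ⊤)
    (hf2 : 𝔪 • LinearMap.range f = 𝔪 ^ 2 • (⊤ : Submodule R B)) :
    Module.length R (LinearMap.range f) =
      Module.finrank R A + Module.finrank R B * Module.length R ↥(𝔪 ^ 2) := by
  have hcover : IsMinimalCover f.rangeRestrict :=
    ⟨f.surjective_rangeRestrict, by rwa [LinearMap.ker_rangeRestrict]⟩
  rw [hcover.length_eq, ← length_smul_top, ← hf2, length_smul_top_coe]

lemma exists_length_maximalIdeal_eq_add {r : ℕ} (hr : Module.length R ↥(𝔪 ^ 2) = r) :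
    ∃ e : ℕ, Module.length R 𝔪 = (e + r : ℕ) := by
  obtain ⟨m, hm⟩ := ENat.ne_top_iff_exists.1 (Module.length_ne_top (R := R) (M := 𝔪))
  have hrm : Module.length R ↥(𝔪 ^ 2) ≤ Module.length R 𝔪 :=
    Module.length_le_of_injective _
      (Submodule.inclusion_injective (Ideal.pow_le_self (I := 𝔪) two_ne_zero))
  rw [hr, ← hm, Nat.cast_le] at hrm
  obtain ⟨e, rfl⟩ := Nat.exists_eq_add_of_le' hrm
  exact ⟨e, hm.symm⟩

variable {e r : ℕ}

lemma mul_finrank_eq_of_exact (hr : Module.length R ↥(𝔪 ^ 2) = r)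
    (he : Module.length R 𝔪 = (e + r : ℕ)) (hfg : Function.Exact f g) (hf : LinearMap.ker f ≤ 𝔪 • ⊤)
    (hg : LinearMap.ker g ≤ 𝔪 • ⊤) (hf2 : 𝔪 • LinearMap.range f = 𝔪 ^ 2 • (⊤ : Submodule R B))
    (hg2 : 𝔪 • LinearMap.range g = 𝔪 ^ 2 • (⊤ : Submodule R C)) :
    e * Module.finrank R B = Module.finrank R A + r * Module.finrank R C := by
  have hB := length_eq_ker_add_range g
  rw [hfg.linearMap_ker_eq, length_range_eq hf hf2, length_range_eq hg hg2,
    length_eq_finrank_mul, hr, he] at hB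
  norm_cast at hB
  linarith

end Betti

lemma eq_of_mul_eq_add_mul_of_mul_eq_add_mul {e r : ℕ} (hr0 : r ≠ 0) (hr1 : r ≠ 1) {n : ℕ → ℕ}
    (h : ∀ i, e * n (i + 1) = n (i + 2) + r * n i)
    (h' : ∀ i, e * n (i + 2) = n (i + 1) + r * n (i + 3)) (i : ℕ) : n (i + 1) = n i := by
  zify at h h'
  have hperiod (i : ℕ) : n (i + 3) = n (i + 1) := by
    have hi : (r - 1 : ℤ) * (n (i + 3) - n (i + 1)) = 0 := by
      linear_combination h (i + 1) - h' i
    have hr : (r - 1 : ℤ) ≠ 0 := sub_ne_zero.2 (mod_cast hr1)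
    exact Nat.cast_injective (R := ℤ) <| sub_eq_zero.1 ((mul_eq_zero.1 hi).resolve_left hr)
  have hconst (i : ℕ) : n (i + 2) = n (i + 1) := by
    have h1 := h (i + 1)
    have h2 := h (i + 2)
    rw [hperiod] at h1
    rw [hperiod, hperiod (i + 1)] at h2
    have hi : (e + 1 + r : ℤ) * (n (i + 2) - n (i + 1)) = 0 := by linear_combination h1 - h2
    exact Nat.cast_injective (R := ℤ) <|
      sub_eq_zero.1 ((mul_eq_zero.1 hi).resolve_left (by positivity))
  have h0 := h i
  have h1 := h (i + 1)
  rw [hconst] at h0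
  rw [hconst (i + 1), hconst] at h1
  have hi : (r * n (i + 1) : ℤ) = r * n i := by linarith
  exact Nat.eq_of_mul_eq_mul_left hr0.bot_lt (mod_cast hi)

namespace MinimalBiexactComplex

variable {R : Type u} [CommRing R] [IsLocalRing R] (T : MinimalBiexactComplex R) [IsArtinianRing R]
  {r : ℕ}

local notation "𝔪" => IsLocalRing.maximalIdeal R

include T in
lemma length_linearMap_eq (hR : ¬ Module.Injective R R) (hm3 : 𝔪 ^ 3 = ⊥) :
    Module.length R ((R ⧸ 𝔪) →ₗ[R] R) = Module.length R ↥(𝔪 ^ 2) :=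
  length_linearMap_quotient_maximalIdeal hm3 fun _ => T.mem_maximalIdeal_sq_of_forall_mul_eq_zero hR

variable (hR : ¬ Module.Injective R R) (hm3 : IsLocalRing.maximalIdeal R ^ 3 = ⊥)
  (hr : Module.length R ↥(IsLocalRing.maximalIdeal R ^ 2) = r)
include hR hm3 hr

lemma rank_succ_succ (i : ℕ) : T.rank (i + 2) = T.rank (i + 1) := by
  obtain ⟨e, he⟩ := exists_length_maximalIdeal_eq_add hr
  have hr1 : 1 < r := by
    by_contra! hr1
    refine hR (injective_of_length_linearMap_le_one ?_)
    rw [T.length_linearMap_eq hR hm3, hr]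
    exact_mod_cast hr1
  refine eq_of_mul_eq_add_mul_of_mul_eq_add_mul (n := fun i => T.rank (i + 1)) (e := e) (r := r)
    (by lia) hr1.ne' (fun i => ?_) (fun i => ?_) i
  · simpa using mul_finrank_eq_of_exact hr he (T.exact (i + 1)) (T.ker_le _) (T.ker_le _)
      (T.smul_range_d_eq hR hm3 (i + 1)) (T.smul_range_d_eq hR hm3 i)
  · simpa [Module.Dual, Module.finrank_linearMap] using
      mul_finrank_eq_of_exact hr he (T.exact_dualMap (i + 2)) (T.ker_dualMap_le _)
        (T.ker_dualMap_le _) (T.smul_range_dualMap_eq hR hm3 i)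
        (T.smul_range_dualMap_eq hR hm3 (i + 1))

lemma rank_succ (i : ℕ) : T.rank (i + 1) = T.rank 1 := by
  induction i with
  | zero => rfl
  | succ i ih => rw [T.rank_succ_succ hR hm3 hr, ih]

include T in
lemma length_maximalIdeal_eq : Module.length R 𝔪 = (r + 1 + r : ℕ) := by
  obtain ⟨e, he⟩ := exists_length_maximalIdeal_eq_add hr
  have h := mul_finrank_eq_of_exact hr he (T.exact 1) (T.ker_le _) (T.ker_le _)
    (T.smul_range_d_eq hR hm3 1) (T.smul_range_d_eq hR hm3 0)
  simp only [Module.finrank_fin_fun, T.rank_succ hR hm3 hr] at h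
  obtain rfl : e = r + 1 := Nat.eq_of_mul_eq_mul_right T.rank_one_pos (by linarith)
  exact he

end MinimalBiexactComplex

section Horseshoe

variable {R : Type u} [CommRing R]

lemma exists_linearEquiv_ker_prod {G G' : Type*} [AddCommGroup G] [Module R G] [AddCommGroup G']
    [Module R G'] [Module.Projective R G'] {h : G →ₗ[R] G'} (hh : Function.Surjective h) :
    ∃ e : G ≃ₗ[R] LinearMap.ker h × G', ∀ x : LinearMap.ker h, e x = (x, 0) := by
  obtain ⟨s, hs⟩ := Module.projective_lifting_property h LinearMap.id hh
  obtain ⟨e, he, -⟩ := (LinearMap.exact_subtype_ker_map h).splitSurjectiveEquiv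
    (Submodule.subtype_injective _) ⟨s, hs⟩
  refine ⟨e, fun x => ?_⟩
  rw [← LinearEquiv.eq_symm_apply]
  exact LinearMap.congr_fun he x

variable [IsLocalRing R] {N N' G G' : Type*} [AddCommGroup N] [Module R N]
  [AddCommGroup N'] [Module R N'] [AddCommGroup G] [Module R G] [AddCommGroup G'] [Module R G']
  {p : G →ₗ[R] N} {p' : G' →ₗ[R] N'} {q : N →ₗ[R] N'} {h : G →ₗ[R] G'}

local notation "𝔪" => IsLocalRing.maximalIdeal R

lemma ker_le_map_ker [IsNoetherianRing R] [Module.Finite R N] (hp : Function.Surjective p)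
    (hp' : LinearMap.ker p' ≤ 𝔪 • ⊤) (hh : Function.Surjective h) (hcomm : p' ∘ₗ h = q ∘ₗ p)
    (hker : LinearMap.ker q ⊓ 𝔪 • ⊤ ≤ 𝔪 • LinearMap.ker q) :
    LinearMap.ker q ≤ (LinearMap.ker h).map p := by
  refine Submodule.le_of_le_smul_of_le_jacobson_bot (IsNoetherian.noetherian _)
    (IsLocalRing.maximalIdeal_le_jacobson _) fun x hx => ?_
  obtain ⟨y, rfl⟩ := hp x
  have hhy : h y ∈ 𝔪 • LinearMap.range h := by
    rw [LinearMap.range_eq_top.2 hh]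
    exact hp' ((LinearMap.congr_fun hcomm y).trans hx)
  rw [LinearMap.range_eq_map, ← Submodule.map_smul''] at hhy
  obtain ⟨z, hz, hzy⟩ := hhy
  have hyz : y - z ∈ LinearMap.ker h := by rw [LinearMap.mem_ker, map_sub, hzy, sub_self]
  have hqyz : p (y - z) ∈ LinearMap.ker q := by
    rw [LinearMap.mem_ker, ← LinearMap.comp_apply, ← hcomm, LinearMap.comp_apply, hyz, map_zero]
  have hpz : p z ∈ LinearMap.ker q := by
    simpa using Submodule.sub_mem _ hx hqyz
  rw [← sub_add_cancel y z, map_add]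
  exact Submodule.add_mem_sup (Submodule.mem_map_of_mem hyz) (hker ⟨hpz, map_mem_smul_top p hz⟩)

lemma exists_lift_of_isMinimalCover [IsNoetherianRing R] [Module.Free R G] [Module.Finite R G]
    [Module.Free R G'] [Module.Finite R G'] (hp : IsMinimalCover p) (hp' : IsMinimalCover p')
    (hq : Function.Surjective q) (hker : LinearMap.ker q ⊓ 𝔪 • ⊤ ≤ 𝔪 • LinearMap.ker q) :
    ∃ (K : Submodule R G) (pK : K →ₗ[R] LinearMap.ker q)
      (f : LinearMap.ker p →ₗ[R] LinearMap.ker p'), Module.Free R K ∧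
      Module.finrank R G = Module.finrank R G' + Module.finrank R K ∧ IsMinimalCover pK ∧
      Function.Surjective f ∧ Nonempty (LinearMap.ker f ≃ₗ[R] LinearMap.ker pK) := by
  have : Module.Finite R N := Module.Finite.of_surjective p hp.1
  obtain ⟨h, hcomm⟩ := Module.projective_lifting_property p' (q ∘ₗ p) hp'.1
  have hh : Function.Surjective h := hp'.surjective_of_comp (hcomm ▸ hq.comp hp.1)
  have hqp (x : G) : q (p x) = p' (h x) := (LinearMap.congr_fun hcomm x).symm
  obtain ⟨e, he⟩ := exists_linearEquiv_ker_prod hh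
  have : Module.Projective R (LinearMap.ker h) := .of_split (LinearMap.ker h).subtype
    (LinearMap.fst R _ _ ∘ₗ e.toLinearMap) (by ext x; simp [he])
  have := Module.free_of_flat_of_isLocalRing (R := R) (P := LinearMap.ker h)
  have hkerqp := ker_le_map_ker hp.1 hp'.2 hh hcomm hker
  let pK : LinearMap.ker h →ₗ[R] LinearMap.ker q := p.restrict fun x hx => by
    rw [LinearMap.mem_ker, hqp, LinearMap.mem_ker.1 hx, map_zero]
  let f : LinearMap.ker p →ₗ[R] LinearMap.ker p' := h.restrict fun x hx => by
    rw [LinearMap.mem_ker, ← hqp, LinearMap.mem_ker.1 hx, map_zero]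
  refine ⟨LinearMap.ker h, pK, f, inferInstance, ?_, ⟨?_, ?_⟩, ?_, ?_⟩
  · rw [e.finrank_eq, Module.finrank_prod, add_comm]
  · rintro ⟨y, hy⟩
    obtain ⟨x, hx, rfl⟩ := hkerqp hy
    exact ⟨⟨x, hx⟩, rfl⟩
  · intro x hx
    simpa [he] using map_mem_smul_top (LinearMap.fst R _ _ ∘ₗ e.toLinearMap)
      (hp.2 (congrArg Subtype.val hx))
  · rintro ⟨y, hy⟩
    obtain ⟨x, rfl⟩ := hh y
    obtain ⟨z, hz, hzx⟩ := hkerqp (x := p x) (by rw [LinearMap.mem_ker, hqp, hy])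
    refine ⟨⟨x - z, by rw [LinearMap.mem_ker, map_sub, hzx, sub_self]⟩, Subtype.ext ?_⟩
    exact (map_sub h x z).trans (by rw [hz, sub_zero])
  · have hmap : (LinearMap.ker f).map (LinearMap.ker p).subtype =
        (LinearMap.ker pK).map (LinearMap.ker h).subtype := by
      rw [LinearMap.ker_restrict, LinearMap.ker_restrict, Submodule.map_comap_subtype,
        Submodule.map_comap_subtype, inf_comm]
    exact ⟨(Submodule.equivSubtypeMap _ _).trans ((LinearEquiv.ofEq _ _ hmap).trans
      (Submodule.equivSubtypeMap _ _).symm)⟩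

end Horseshoe

/-- The kernel of a map applied entrywise consists of the families of elements of the kernel. -/
noncomputable def kerCompLeftEquiv {R M N : Type*} [Semiring R] [AddCommMonoid M] [Module R M]
    [AddCommMonoid N] [Module R N] (p : M →ₗ[R] N) (ι : Type*) :
    (ι → LinearMap.ker p) ≃ₗ[R] LinearMap.ker (p.compLeft ι) :=
  (LinearEquiv.ofInjective ((LinearMap.ker p).subtype.compLeft ι)
    (Subtype.val_injective.comp_left)).trans <| LinearEquiv.ofEq _ _ <| by
      rw [LinearMap.range_compLeft, LinearMap.ker_compLeft, Submodule.range_subtype]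

namespace MinimalBiexactComplex

variable {R : Type u} [CommRing R] [IsLocalRing R] (T : MinimalBiexactComplex R)

local notation "𝔪" => IsLocalRing.maximalIdeal R

/-- `X` is isomorphic to one of the modules of cycles of `T`. -/
def IsSyzygy (X : Type*) [AddCommGroup X] [Module R X] : Prop :=
  ∃ i, Nonempty (X ≃ₗ[R] LinearMap.ker (T.d i))

/-- `n` copies of `X` form an extension of `m` copies of `Y` by a syzygy of `T`. By the horseshoe
lemma the relation passes to the first syzygies of `X` and `Y`. -/
def Linked (n m : ℕ) (X Y : Type*) [AddCommGroup X] [Module R X] [AddCommGroup Y] [Module R Y] :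
    Prop :=
  ∃ q : (Fin n → X) →ₗ[R] (Fin m → Y),
    Function.Surjective q ∧ T.IsSyzygy (LinearMap.ker q)

variable {T} {F F' X Y : Type*} [AddCommGroup F] [Module R F] [AddCommGroup F'] [Module R F']
  [AddCommGroup X] [Module R X] [AddCommGroup Y] [Module R Y]

lemma IsSyzygy.of_linearEquiv (hX : T.IsSyzygy X) (e : Y ≃ₗ[R] X) : T.IsSyzygy Y :=
  let ⟨i, ⟨e'⟩⟩ := hX
  ⟨i, ⟨e.trans e'⟩⟩

lemma IsSyzygy.mem_smul_top_of_forall_smul_eq_zero [IsArtinianRing R]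
    (hR : ¬ Module.Injective R R) (hX : T.IsSyzygy X) {x : X} (hx : ∀ a ∈ 𝔪, a • x = 0) :
    x ∈ 𝔪 • (⊤ : Submodule R X) := by
  obtain ⟨i, ⟨e⟩⟩ := hX
  have hex : e x ∈ 𝔪 • (⊤ : Submodule R (LinearMap.ker (T.d i))) :=
    (Submodule.mem_smul_top_iff _ _ _).2 <|
      T.mem_smul_ker_of_forall_smul_eq_zero hR i (e x).2 fun a ha => by
        rw [← Submodule.coe_smul, ← map_smul, hx a ha, map_zero, Submodule.coe_zero]
  simpa using map_mem_smul_top e.symm.toLinearMap hex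

lemma IsSyzygy.ker (hrank : ∀ i, T.rank (i + 1) = T.rank 1) (hX : T.IsSyzygy X)
    [Module.Free R F] [Module.Finite R F] {p : F →ₗ[R] X} (hp : IsMinimalCover p) :
    Module.finrank R F = T.rank 1 ∧ T.IsSyzygy (LinearMap.ker p) := by
  obtain ⟨i, ⟨e⟩⟩ := hX
  let e' : LinearMap.range (T.d (i + 1)) ≃ₗ[R] X :=
    (LinearEquiv.ofEq _ _ (T.exact i).linearMap_ker_eq.symm).trans e.symm
  have hcover : IsMinimalCover (T.d (i + 1)).rangeRestrict :=
    ⟨(T.d (i + 1)).surjective_rangeRestrict, by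
      rw [LinearMap.ker_rangeRestrict]
      exact T.ker_le _⟩
  obtain ⟨f, hf⟩ := hp.exists_linearEquiv (hcover.linearEquiv_comp e')
  have hker : LinearMap.ker p = (LinearMap.ker (T.d (i + 1))).comap f.toLinearMap := by
    rw [← hf, LinearMap.ker_comp, LinearEquiv.ker_comp, LinearMap.ker_rangeRestrict]
  refine ⟨?_, i + 1, ⟨(LinearEquiv.ofEq _ _ hker).trans (f.ofSubmodule' _)⟩⟩
  rw [f.finrank_eq, Module.finrank_fin_fun, hrank]

lemma Linked.congr {n m : ℕ} {X' Y' : Type*} [AddCommGroup X'] [Module R X'] [AddCommGroup Y']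
    [Module R Y'] (h : T.Linked n m X Y) (e : X ≃ₗ[R] X') (e' : Y ≃ₗ[R] Y') :
    T.Linked n m X' Y' := by
  obtain ⟨q, hq, hqsyz⟩ := h
  let u : (Fin n → X') ≃ₗ[R] (Fin n → X) := LinearEquiv.piCongrRight fun _ => e.symm
  let u' : (Fin m → Y) ≃ₗ[R] (Fin m → Y') := LinearEquiv.piCongrRight fun _ => e'
  refine ⟨u'.toLinearMap ∘ₗ q ∘ₗ u.toLinearMap, u'.surjective.comp (hq.comp u.surjective),
    hqsyz.of_linearEquiv <| (LinearEquiv.ofEq _ _ ?_).trans (u.ofSubmodule' _)⟩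
  rw [LinearEquiv.ker_comp, LinearMap.ker_comp]

lemma Linked.ker [IsArtinianRing R] (hR : ¬ Module.Injective R R)
    (hrank : ∀ i, T.rank (i + 1) = T.rank 1) {n m : ℕ} (h : T.Linked n m X Y)
    (hX : 𝔪 ^ 2 • (⊤ : Submodule R X) = ⊥)
    [Module.Free R F] [Module.Finite R F] [Module.Free R F'] [Module.Finite R F']
    {p : F →ₗ[R] X} (hp : IsMinimalCover p) {p' : F' →ₗ[R] Y} (hp' : IsMinimalCover p') :
    n * Module.finrank R F = m * Module.finrank R F' + T.rank 1 ∧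
      T.Linked n m (LinearMap.ker p) (LinearMap.ker p') := by
  obtain ⟨q, hq, hqsyz⟩ := h
  have hker : LinearMap.ker q ⊓ 𝔪 • ⊤ ≤ 𝔪 • LinearMap.ker q := fun x ⟨hxq, hx⟩ => by
    refine (Submodule.mem_smul_top_iff _ _ ⟨x, hxq⟩).1 <|
      hqsyz.mem_smul_top_of_forall_smul_eq_zero hR fun a ha => Subtype.ext <| funext fun j => ?_
    have haxj : a • x j ∈ 𝔪 ^ 2 • (⊤ : Submodule R X) := by
      rw [pow_two, Submodule.mul_smul]
      exact Submodule.smul_mem_smul ha (mem_smul_top_pi_iff.1 hx j)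
    rwa [hX] at haxj
  obtain ⟨K, pK, f, _, hfinrank, hpK, hf, ⟨e⟩⟩ :=
    exists_lift_of_isMinimalCover (hp.compLeft (Fin n)) (hp'.compLeft (Fin m)) hq hker
  obtain ⟨hK, hKsyz⟩ := hqsyz.ker hrank hpK
  let u := kerCompLeftEquiv p (Fin n)
  let u' := kerCompLeftEquiv p' (Fin m)
  refine ⟨by simpa [Module.finrank_pi_fintype, hK] using hfinrank,
    u'.symm.toLinearMap ∘ₗ f ∘ₗ u.toLinearMap,
    u'.symm.surjective.comp (hf.comp u.surjective), hKsyz.of_linearEquiv <|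
      (LinearEquiv.ofEq _ _ ?_).trans ((u.ofSubmodule' _).trans e)⟩
  rw [LinearEquiv.ker_comp, LinearMap.ker_comp]

variable (T) in
lemma linked_maximalIdeal [IsArtinianRing R] (hR : ¬ Module.Injective R R) (hm3 : 𝔪 ^ 3 = ⊥)
    {r : ℕ} (hr : Module.length R ↥(𝔪 ^ 2) = r) :
    T.Linked (T.rank 2) (T.rank 1 * r) 𝔪 (R ⧸ 𝔪) := by
  let j : (Fin (T.rank 2) → 𝔪) →ₗ[R] (Fin (T.rank 2) → R) := (Submodule.subtype 𝔪).compLeft _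
  have hj : LinearMap.range j = 𝔪 • ⊤ := by
    ext x
    rw [LinearMap.range_compLeft, mem_smul_top_pi_iff]
    simp
  have hrange : LinearMap.range (T.d 1 ∘ₗ j) = 𝔪 ^ 2 • ⊤ := by
    rw [LinearMap.range_comp, hj, Submodule.map_smul'', Submodule.map_top,
      T.smul_range_d_eq hR hm3 0]
  have hker : (LinearMap.ker (T.d 1 ∘ₗ j)).map j = LinearMap.ker (T.d 1) := by
    rw [LinearMap.ker_comp, Submodule.map_comap_eq, hj, inf_eq_right]
    exact T.ker_le 1
  obtain ⟨e⟩ := nonempty_sq_smul_top_linearEquiv (F := Fin (T.rank 1) → R) hm3 hr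
  rw [Module.finrank_fin_fun] at e
  let e' := (LinearEquiv.ofEq _ _ hrange).trans e
  refine ⟨e'.toLinearMap ∘ₗ (T.d 1 ∘ₗ j).rangeRestrict,
    e'.surjective.comp (LinearMap.surjective_rangeRestrict _), 1, ⟨?_⟩⟩
  have hkere : LinearMap.ker (e'.toLinearMap ∘ₗ (T.d 1 ∘ₗ j).rangeRestrict) =
      LinearMap.ker (T.d 1 ∘ₗ j) := by
    rw [LinearEquiv.ker_comp, LinearMap.ker_rangeRestrict]
  exact (LinearEquiv.ofEq _ _ hkere).trans <|
    (Submodule.equivMapOfInjective j Subtype.val_injective.comp_left _).trans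
      (LinearEquiv.ofEq _ _ hker)

end MinimalBiexactComplex

section Linear

variable {R : Type u} [CommRing R] [IsLocalRing R] [IsArtinianRing R]

local notation "𝔪" => IsLocalRing.maximalIdeal R

/- Both submodules have length `r * finrank F`. -/
lemma smul_ker_eq_sq_smul_top {F F' G : Type*} [AddCommGroup F] [Module R F] [Module.Free R F]
    [Module.Finite R F] [AddCommGroup F'] [Module R F'] [Module.Free R F'] [Module.Finite R F']
    [AddCommGroup G] [Module R G] [Module.Free R G] [Module.Finite R G] {r : ℕ}
    (hr : Module.length R ↥(𝔪 ^ 2) = r) (hm : Module.length R 𝔪 = (r + 1 + r : ℕ))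
    {Z : Submodule R G} (hZ : 𝔪 • Z = 𝔪 ^ 2 • ⊤) {p : F →ₗ[R] Z} (hp : IsMinimalCover p)
    {p' : F' →ₗ[R] LinearMap.ker p} (hp' : IsMinimalCover p')
    (hFG : Module.finrank R F = r * Module.finrank R G + 1)
    (hF'F : Module.finrank R F' = r * Module.finrank R F + 1) :
    𝔪 • LinearMap.ker p = 𝔪 ^ 2 • ⊤ := by
  have hle : 𝔪 • LinearMap.ker p ≤ 𝔪 ^ 2 • ⊤ := by
    rw [pow_two, Submodule.mul_smul]
    exact Submodule.smul_mono le_rfl hp.2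
  refine hle.eq_of_not_lt fun hlt => (Submodule.height_strictMono hlt).ne ?_
  rw [← Module.length_submodule, ← Module.length_submodule, length_smul_top, hr]
  have hF := length_eq_ker_add_range p
  rw [LinearMap.range_eq_top.2 hp.1, Module.length_top, hp.length_eq, hp'.length_eq,
    length_smul_top_coe, length_smul_top_coe, hZ, length_smul_top, hr, length_eq_finrank_mul, hm,
    hF'F] at hF
  lift Module.length R (𝔪 • LinearMap.ker p : Submodule R F) to ℕ using Module.length_ne_top with n
  norm_cast at hF ⊢
  nlinarith

lemma exists_isMinimalCover_entries_mem {V : Set R} (hV : ∀ x ∈ 𝔪, ∃ v ∈ V, x - v ∈ 𝔪 ^ 2) {b : ℕ}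
    {Z : Submodule R (Fin b → R)} (hZ : Z ≤ 𝔪 • ⊤) (hZ2 : 𝔪 ^ 2 • ⊤ ≤ 𝔪 • Z) :
    ∃ (a : ℕ) (p : (Fin a → R) →ₗ[R] Z), IsMinimalCover p ∧
      ∀ j l, (p (Pi.single j 1) : Fin b → R) l ∈ V := by
  obtain ⟨a, p, hp⟩ := exists_isMinimalCover R Z
  have happrox (z : Z) :
      ∃ y : Z, (∀ l, (y : Fin b → R) l ∈ V) ∧ z - y ∈ 𝔪 • (⊤ : Submodule R Z) := by
    choose v hvV hv using fun l => hV _ (by simpa using mem_smul_top_pi_iff.1 (hZ z.2) l)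
    have hzv : (z : Fin b → R) - v ∈ 𝔪 • Z :=
      hZ2 (mem_smul_top_pi_iff.2 fun l => by simpa using hv l)
    have hvZ : v ∈ Z := (Submodule.sub_mem_iff_right _ z.2).1 (Submodule.smul_le_right hzv)
    exact ⟨⟨v, hvZ⟩, hvV, (Submodule.mem_smul_top_iff _ _ _).2 hzv⟩
  choose y hyV hy using happrox
  let p' : (Fin a → R) →ₗ[R] Z := Fintype.linearCombination R fun j => y (p (Pi.single j 1))
  have hp' (j : Fin a) : p' (Pi.single j 1) = y (p (Pi.single j 1)) := by
    rw [Fintype.linearCombination_apply_single, one_smul]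
  have hsub : (𝔪 • (⊤ : Submodule R Z)).mkQ ∘ₗ (p - p') = 0 :=
    LinearMap.pi_ext' fun j => LinearMap.ext_ring <| (Submodule.Quotient.mk_eq_zero _).2 <| by
      simpa [hp'] using hy (p (Pi.single j 1))
  exact ⟨a, p', hp.of_sub_mem fun x => (Submodule.Quotient.mk_eq_zero _).1
    (LinearMap.congr_fun hsub x), fun j l => hp' j ▸ hyV _ l⟩

end Linear

namespace MinimalBiexactComplex

variable {R : Type u} [CommRing R] [IsLocalRing R]

local notation "𝔪" => IsLocalRing.maximalIdeal R

/-- The state of the inductive construction of the resolution of the residue field: `Z` is a syzygy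
of `F ⧸ Z` for `F = R ^ b`, it is linked to `F ⧸ Z` through `T`, and `𝔪Z = 𝔪²F`, so that generators
of `Z` may be changed modulo `𝔪²F`. -/
structure IsLinearSyzygy (T : MinimalBiexactComplex R) (r : ℕ) {b : ℕ}
    (Z : Submodule R (Fin b → R)) : Prop where
  le : Z ≤ 𝔪 • ⊤
  smul_eq : 𝔪 • Z = 𝔪 ^ 2 • ⊤
  linked : T.Linked (T.rank 1) (T.rank 1 * r) Z ((Fin b → R) ⧸ Z)

variable {T : MinimalBiexactComplex R} [IsArtinianRing R] {r : ℕ}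

lemma isLinearSyzygy_ker_mkQ_comp (hR : ¬ Module.Injective R R) (hm3 : 𝔪 ^ 3 = ⊥)
    (hr : Module.length R ↥(𝔪 ^ 2) = r) :
    T.IsLinearSyzygy r
      (LinearMap.ker (Submodule.mkQ 𝔪 ∘ₗ (LinearEquiv.funUnique (Fin 1) R R).toLinearMap)) := by
  set π := Submodule.mkQ 𝔪 ∘ₗ (LinearEquiv.funUnique (Fin 1) R R).toLinearMap
  have hπ : Function.Surjective π := (Submodule.mkQ_surjective _).comp (LinearEquiv.surjective _)
  have hker : LinearMap.ker π =
      Submodule.comap (LinearEquiv.funUnique (Fin 1) R R).toLinearMap 𝔪 := by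
    rw [LinearMap.ker_comp, Submodule.ker_mkQ]
  have hker' : LinearMap.ker π = 𝔪 • ⊤ := by
    ext x
    rw [hker, mem_smul_top_pi_iff]
    simp
  refine ⟨hker'.le, by rw [hker', pow_two, Submodule.mul_smul], ?_⟩
  have hlinked := T.linked_maximalIdeal hR hm3 hr
  rw [T.rank_succ hR hm3 hr 1] at hlinked
  exact hlinked.congr ((LinearEquiv.ofEq _ _ hker).trans (LinearEquiv.ofSubmodule' _ _)).symm
    (π.quotKerEquivOfSurjective hπ).symm

variable (hR : ¬ Module.Injective R R) (hm3 : IsLocalRing.maximalIdeal R ^ 3 = ⊥)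
  (hr : Module.length R ↥(IsLocalRing.maximalIdeal R ^ 2) = r)
include hR hm3 hr

lemma Linked.finrank_eq_and_ker {F G : Type*} [AddCommGroup F] [Module R F] [Module.Free R F]
    [Module.Finite R F] [AddCommGroup G] [Module R G] [Module.Free R G] [Module.Finite R G]
    {Z : Submodule R G} (h : T.Linked (T.rank 1) (T.rank 1 * r) Z (G ⧸ Z)) (hZ : Z ≤ 𝔪 • ⊤)
    {p : F →ₗ[R] Z} (hp : IsMinimalCover p) :
    Module.finrank R F = r * Module.finrank R G + 1 ∧
      T.Linked (T.rank 1) (T.rank 1 * r) (LinearMap.ker p) (F ⧸ LinearMap.ker p) := by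
  have hZ0 : 𝔪 ^ 2 • (⊤ : Submodule R Z) = ⊥ := by
    apply Submodule.map_injective_of_injective (Submodule.subtype_injective _)
    rw [map_subtype_smul_top, Submodule.map_bot, ← le_bot_iff]
    exact (Submodule.smul_mono le_rfl hZ).trans_eq <| by
      rw [← Submodule.mul_smul, ← pow_succ, hm3, Submodule.bot_smul]
  have hcover : IsMinimalCover Z.mkQ := ⟨Z.mkQ_surjective, Z.ker_mkQ.trans_le hZ⟩
  obtain ⟨hfinrank, hlinked⟩ := h.ker hR (T.rank_succ hR hm3 hr) hZ0 hp hcover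
  refine ⟨Nat.eq_of_mul_eq_mul_left T.rank_one_pos ?_, hlinked.congr (.refl R _)
    ((LinearEquiv.ofEq _ _ Z.ker_mkQ).trans (p.quotKerEquivOfSurjective hp.1).symm)⟩
  rw [hfinrank]
  ring

lemma IsLinearSyzygy.ker {a b : ℕ} {Z : Submodule R (Fin b → R)} (hZ : T.IsLinearSyzygy r Z)
    {p : (Fin a → R) →ₗ[R] Z} (hp : IsMinimalCover p) :
    a = r * b + 1 ∧ T.IsLinearSyzygy r (LinearMap.ker p) := by
  obtain ⟨ha, hlinked⟩ := hZ.linked.finrank_eq_and_ker hR hm3 hr hZ.le hp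
  obtain ⟨a', p', hp'⟩ := exists_isMinimalCover R (LinearMap.ker p)
  obtain ⟨ha', -⟩ := hlinked.finrank_eq_and_ker hR hm3 hr hp.2 hp'
  exact ⟨by simpa using ha, hp.2, smul_ker_eq_sq_smul_top hr
    (T.length_maximalIdeal_eq hR hm3 hr) hZ.smul_eq hp hp' ha ha', hlinked⟩

end MinimalBiexactComplex

section Grading

lemma iSupIndep_nat_of_disjoint_iSup_gt {α : Type*} [CompleteLattice α] [IsModularLattice α]
    {t : ℕ → α} (ht : ∀ n, Disjoint (t n) (⨆ j > n, t j)) : iSupIndep t := by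
  intro i
  suffices h : ∀ m ≤ i, Disjoint (t i) (⨆ (j) (_ : m ≤ j ∧ j ≠ i), t j) by
    simpa using h 0 (Nat.zero_le i)
  intro m hm
  induction hm using Nat.decreasingInduction with
  | self => exact (ht i).mono_right (biSup_mono fun j hj => lt_of_le_of_ne hj.1 hj.2.symm)
  | of_succ m hm ih =>
    have hle : t i ⊔ ⨆ (j) (_ : m + 1 ≤ j ∧ j ≠ i), t j ≤ ⨆ j > m, t j :=
      sup_le (le_biSup t hm) (biSup_mono fun j hj => hj.1)
    refine (ih.disjoint_sup_right_of_disjoint_sup_left ((ht m).symm.mono_left hle)).mono_right ?_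
    refine iSup₂_le fun j hj => ?_
    rcases hj.1.eq_or_lt with rfl | hmj
    · exact le_sup_right
    · exact (le_biSup t (show m + 1 ≤ j ∧ j ≠ i from ⟨hmj, hj.2⟩)).trans le_sup_left

variable {k R : Type*} [CommRing k] [CommRing R] [Algebra k R] (I : Ideal R) (V : Submodule k R)

/-- The grading `R = k ⊕ V ⊕ I²` of an algebra with a decomposition `R = k ⊕ I` such that `I³ = 0`
and `I = V ⊕ I²`; then `V` is mapped isomorphically to `I ⧸ I²`, so that this is the grading induced
by the `I`-adic filtration. -/
def gradingOfLinearPart : ℕ → Submodule k R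
  | 0 => 1
  | 1 => V
  | 2 => (I ^ 2).restrictScalars k
  | _ => ⊥

variable {I V}

lemma gradingOfLinearPart_succ_le (hV : V ≤ I.restrictScalars k) (i : ℕ) :
    gradingOfLinearPart I V (i + 1) ≤ I.restrictScalars k :=
  match i with
  | 0 => hV
  | 1 => Ideal.pow_le_self two_ne_zero
  | _ + 2 => bot_le

variable (V) in
lemma gradingOfLinearPart_add_two_le (i : ℕ) :
    gradingOfLinearPart I V (i + 2) ≤ (I ^ 2).restrictScalars k :=
  match i with
  | 0 => le_rfl
  | _ + 1 => bot_le

lemma gradedMonoid_gradingOfLinearPart (hI : I ^ 3 = ⊥) (hV : V ≤ I.restrictScalars k) :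
    SetLike.GradedMonoid (gradingOfLinearPart I V) where
  one_mem := Submodule.one_le.1 le_rfl
  mul_mem := by
    have mul_eq_zero {x y : R} (hx : x ∈ I ^ 2) (hy : y ∈ I) : x * y = 0 := by
      rw [← Ideal.mem_bot, ← hI, pow_succ]
      exact Ideal.mul_mem_mul hx hy
    intro i j x y hx hy
    match i, j with
    | 0, j =>
      obtain ⟨c, rfl⟩ := Submodule.mem_one.1 hx
      rw [zero_add, ← Algebra.smul_def]
      exact Submodule.smul_mem _ _ hy
    | i, 0 =>
      obtain ⟨c, rfl⟩ := Submodule.mem_one.1 hy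
      rw [add_zero, mul_comm, ← Algebra.smul_def]
      exact Submodule.smul_mem _ _ hx
    | 1, 1 =>
      change x * y ∈ I ^ 2
      rw [pow_two]
      exact Ideal.mul_mem_mul (hV hx) (hV hy)
    | i + 2, j + 1 =>
      rw [mul_eq_zero (gradingOfLinearPart_add_two_le V i hx) (gradingOfLinearPart_succ_le hV j hy)]
      exact zero_mem _
    | i + 1, j + 2 =>
      rw [mul_comm,
        mul_eq_zero (gradingOfLinearPart_add_two_le V j hy) (gradingOfLinearPart_succ_le hV i hx)]
      exact zero_mem _

lemma isInternal_gradingOfLinearPart (hk : IsCompl 1 (I.restrictScalars k))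
    (hdisj : Disjoint V ((I ^ 2).restrictScalars k))
    (hsup : V ⊔ (I ^ 2).restrictScalars k = I.restrictScalars k) :
    DirectSum.IsInternal (gradingOfLinearPart I V) := by
  have hV : V ≤ I.restrictScalars k := le_sup_left.trans_eq hsup
  refine DirectSum.isInternal_submodule_of_iSupIndep_of_iSup_eq_top
    (iSupIndep_nat_of_disjoint_iSup_gt fun n => ?_) ?_
  · match n with
    | 0 =>
      refine hk.disjoint.mono_right (iSup₂_le fun j hj => ?_)
      obtain ⟨j, rfl⟩ := Nat.exists_eq_add_of_le' hj
      exact gradingOfLinearPart_succ_le hV j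
    | 1 =>
      refine hdisj.mono_right (iSup₂_le fun j hj => ?_)
      obtain ⟨j, rfl⟩ := Nat.exists_eq_add_of_le' hj
      exact gradingOfLinearPart_add_two_le V j
    | n + 2 =>
      refine disjoint_bot_right.mono_right (iSup₂_le fun j hj => ?_)
      obtain ⟨j, rfl⟩ := Nat.exists_eq_add_of_le' hj
      exact bot_le
  · rw [eq_top_iff, ← hk.sup_eq_top, ← hsup]
    exact sup_le (le_iSup (gradingOfLinearPart I V) 0)
      (sup_le (le_iSup (gradingOfLinearPart I V) 1) (le_iSup (gradingOfLinearPart I V) 2))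

end Grading

section LinearPart

variable {k R : Type*} [Field k] [CommRing R] [Algebra k R]

lemma isCompl_one_restrictScalars_of_surjective {I : Ideal R} (hI : I ≠ ⊤)
    (hres : Function.Surjective ((Ideal.Quotient.mk I).comp (algebraMap k R))) :
    IsCompl 1 (I.restrictScalars k) := by
  refine IsCompl.of_le (fun x hx => ?_) fun x _ => ?_
  · obtain ⟨⟨c, rfl⟩, hc⟩ := And.imp_left Submodule.mem_one.1 (Submodule.mem_inf.1 hx)
    by_contra hx0
    have hc0 : c ≠ 0 := by
      rintro rfl
      exact hx0 (map_zero (algebraMap k R))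
    exact hI (Ideal.eq_top_of_isUnit_mem I hc ((isUnit_iff_ne_zero.2 hc0).map _))
  · obtain ⟨c, hc⟩ := hres (Ideal.Quotient.mk I x)
    exact Submodule.mem_sup.2 ⟨algebraMap k R c, Submodule.mem_one.2 ⟨c, rfl⟩,
      x - algebraMap k R c, Ideal.Quotient.eq.1 hc.symm, add_sub_cancel _ _⟩

end LinearPart

section Resolution

variable {R : Type u} [CommRing R]

lemma exists_resolution_of_forall_exists_cover {P : ∀ b : ℕ, Submodule R (Fin b → R) → Prop}
    {Q : ∀ a b : ℕ, ((Fin a → R) →ₗ[R] (Fin b → R)) → Prop}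
    (step : ∀ b Z, P b Z → ∃ (a : ℕ) (p : (Fin a → R) →ₗ[R] Z), Function.Surjective p ∧
      Q a b (Z.subtype ∘ₗ p) ∧ P a (LinearMap.ker p))
    {X : Type*} [AddCommGroup X] [Module R X] {b : ℕ} {π : (Fin b → R) →ₗ[R] X}
    (hπ : Function.Surjective π) (hP₀ : P b (LinearMap.ker π)) :
    ∃ (β : ℕ → ℕ) (d : ∀ i, (Fin (β (i + 1)) → R) →ₗ[R] (Fin (β i) → R))
      (ε : (Fin (β 0) → R) →ₗ[R] X), β 0 = b ∧ Function.Surjective ε ∧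
      LinearMap.range (d 0) = LinearMap.ker ε ∧
      (∀ i, LinearMap.range (d (i + 1)) = LinearMap.ker (d i)) ∧ ∀ i, Q _ _ (d i) := by
  choose a p hp hQ hP using step
  let s (i : ℕ) : {x : Σ b : ℕ, Submodule R (Fin b → R) // P x.1 x.2} :=
    i.rec ⟨⟨b, LinearMap.ker π⟩, hP₀⟩
      fun _ x => ⟨⟨a x.1.1 x.1.2 x.2, LinearMap.ker (p x.1.1 x.1.2 x.2)⟩, hP _ _ _⟩
  have hrange (i : ℕ) : LinearMap.range ((s i).1.2.subtype ∘ₗ p _ _ (s i).2) = (s i).1.2 := by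
    rw [LinearMap.range_comp_of_range_eq_top _ (LinearMap.range_eq_top.2 (hp _ _ _)),
      Submodule.range_subtype]
  exact ⟨fun i => (s i).1.1, fun i => (s i).1.2.subtype ∘ₗ p _ _ (s i).2, π, rfl, hπ, hrange 0,
    fun i => (hrange (i + 1)).trans
      (LinearMap.ker_comp_of_ker_eq_bot _ (Submodule.ker_subtype _)).symm, fun i => hQ _ _ _⟩

end Resolution

namespace MinimalBiexactComplex

variable {R : Type u} [CommRing R] [IsLocalRing R]

local notation "𝔪" => IsLocalRing.maximalIdeal R

lemma nonempty_of_subsingleton_ext [IsNoetherianRing R] (M : ModuleCat.{u} R) [Module.Finite R M]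
    (hext : ∀ i : ℕ, 0 < i → Subsingleton
      (((Ext R (ModuleCat.{u} R) i).obj (Opposite.op M)).obj (ModuleCat.of R R)))
    (hfree : ¬ Module.Free R M) : Nonempty (MinimalBiexactComplex R) := by
  obtain ⟨b, p, hp⟩ := exists_isMinimalCover R M
  obtain ⟨β, d, π, -, hπ, hdπ, hd, hmin⟩ := exists_resolution_of_forall_exists_cover
    (P := fun _ Z => Z ≤ 𝔪 • ⊤) (Q := fun _ _ f => LinearMap.range f ≤ 𝔪 • ⊤)
    (fun b Z hZ => by
      obtain ⟨a, q, hq⟩ := exists_isMinimalCover R Z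
      refine ⟨a, q, hq.1, ?_, hq.2⟩
      exact (LinearMap.range_comp_le_range _ _).trans (Z.range_subtype.trans_le hZ)) hp.1 hp.2
  have hexact (i : ℕ) : Function.Exact (d (i + 1)) (d i) := LinearMap.exact_iff.2 (hd i).symm
  refine ⟨⟨β, d, hexact, fun i => ?_, hmin, Nat.pos_of_ne_zero fun h1 => hfree ?_⟩⟩
  · exact exact_lcomp_of_subsingleton_ext (F := fun i => Fin (β i) → R) hexact
      (LinearMap.exact_iff.2 hdπ.symm) hπ (hext (i + 1) i.succ_pos)
  · have : IsEmpty (Fin (β (0 + 1))) := Fintype.card_eq_zero_iff.1 ((Fintype.card_fin _).trans h1)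
    have hker : LinearMap.ker π = ⊥ := by
      rw [← hdπ, Subsingleton.elim (d 0) 0, LinearMap.range_zero]
    exact Module.Free.of_equiv (LinearEquiv.ofBijective π ⟨LinearMap.ker_eq_bot.1 hker, hπ⟩)

variable [IsArtinianRing R]

lemma exists_linear_resolution (T : MinimalBiexactComplex R) {r : ℕ}
    (hR : ¬ Module.Injective R R) (hm3 : 𝔪 ^ 3 = ⊥) (hr : Module.length R ↥(𝔪 ^ 2) = r)
    {V : Set R} (hV : ∀ x ∈ 𝔪, ∃ v ∈ V, x - v ∈ 𝔪 ^ 2) :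
    ∃ (β : ℕ → ℕ) (d : ∀ i, (Fin (β (i + 1)) → R) →ₗ[R] (Fin (β i) → R))
      (π : (Fin (β 0) → R) →ₗ[R] R ⧸ 𝔪), (∀ i, β i = ∑ j ∈ Finset.range (i + 1), r ^ j) ∧
      Function.Surjective π ∧ LinearMap.range (d 0) = LinearMap.ker π ∧
      (∀ i, LinearMap.range (d (i + 1)) = LinearMap.ker (d i)) ∧
      ∀ i j l, d i (Pi.single j 1) l ∈ V := by
  obtain ⟨β, d, π, hβ0, hπ, hdπ, hd, hQ⟩ := exists_resolution_of_forall_exists_cover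
    (P := fun _ Z => T.IsLinearSyzygy r Z)
    (Q := fun a b f => a = r * b + 1 ∧ ∀ j l, f (Pi.single j 1) l ∈ V)
    (fun b Z hZ => by
      obtain ⟨a, p, hp, hpV⟩ := exists_isMinimalCover_entries_mem hV hZ.le hZ.smul_eq.ge
      obtain ⟨ha, hker⟩ := hZ.ker hR hm3 hr hp
      exact ⟨a, p, hp.1, ⟨ha, hpV⟩, hker⟩)
    ((Submodule.mkQ_surjective 𝔪).comp (LinearEquiv.surjective _))
    (isLinearSyzygy_ker_mkQ_comp hR hm3 hr)
  refine ⟨β, d, π, fun i => ?_, hπ, hdπ, hd, fun i => (hQ i).2⟩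
  induction i with
  | zero => simp [hβ0]
  | succ i ih => rw [(hQ i).1, ih, ← geom_sum_succ]

end MinimalBiexactComplex

theorem stmt_11_general {k : Type v} [Field k] {R : Type u} [CommRing R] [IsNoetherianRing R]
    [IsLocalRing R] [Algebra k R]
    (hres : Function.Surjective
      ((Ideal.Quotient.mk (IsLocalRing.maximalIdeal R)).comp (algebraMap k R)))
    (hR : ¬ Module.Injective R R) (hm3 : IsLocalRing.maximalIdeal R ^ 3 = ⊥)
    (M : ModuleCat.{u} R) [Module.Finite R M]
    (hext : ∀ i : ℕ, 0 < i → Subsingleton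
      (((Ext R (ModuleCat.{u} R) i).obj (Opposite.op M)).obj (ModuleCat.of R R)))
    (hfree : ¬ Module.Free R M) :
    ∃ (r : ℕ) (𝒜 : ℕ → Submodule k R) (_ : GradedAlgebra 𝒜),
      Module.length R ((R ⧸ IsLocalRing.maximalIdeal R) →ₗ[R] R) = r ∧
      𝒜 0 = (1 : Submodule k R) ∧ (∀ n, 3 ≤ n → 𝒜 n = ⊥) ∧
      (∀ x, x ∈ 𝒜 1 → x ∈ IsLocalRing.maximalIdeal R) ∧
      ∃ (β : ℕ → ℕ) (d : ∀ i : ℕ, (Fin (β (i + 1)) → R) →ₗ[R] (Fin (β i) → R))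
        (π : (Fin (β 0) → R) →ₗ[R] (R ⧸ IsLocalRing.maximalIdeal R)),
        (∀ i, β i = ∑ j ∈ Finset.range (i + 1), r ^ j) ∧
        Function.Surjective π ∧
        LinearMap.range (d 0) = LinearMap.ker π ∧
        (∀ i, LinearMap.range (d (i + 1)) = LinearMap.ker (d i)) ∧
        (∀ (i : ℕ) (j : Fin (β (i + 1))) (l : Fin (β i)),
          d i (Pi.single j 1) l ∈ 𝒜 1) := by
  set 𝔪 := IsLocalRing.maximalIdeal R
  have : IsArtinianRing R := isArtinianRing_iff_isNilpotent_maximalIdeal R |>.2 ⟨3, hm3⟩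
  obtain ⟨T⟩ := MinimalBiexactComplex.nonempty_of_subsingleton_ext M hext hfree
  obtain ⟨r, hr⟩ := ENat.ne_top_iff_exists.1 (Module.length_ne_top (R := R) (M := ↥(𝔪 ^ 2)))
  replace hr := hr.symm
  have hk := isCompl_one_restrictScalars_of_surjective (Ideal.IsPrime.ne_top') hres
  obtain ⟨V, hdisj, hsup⟩ := IsModularLattice.exists_disjoint_and_sup_eq
    (show (𝔪 ^ 2).restrictScalars k ≤ 𝔪.restrictScalars k from Ideal.pow_le_self two_ne_zero)
  have hV : V ≤ 𝔪.restrictScalars k := le_sup_right.trans_eq hsup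
  have := gradedMonoid_gradingOfLinearPart hm3 hV
  have hint := isInternal_gradingOfLinearPart hk hdisj.symm ((sup_comm _ _).trans hsup)
  let := hint.chooseDecomposition
  refine ⟨r, gradingOfLinearPart 𝔪 V, GradedRing.mk, (T.length_linearMap_eq hR hm3).trans hr, rfl,
    fun n hn => ?_, fun x hx => hV hx,
    T.exists_linear_resolution hR hm3 hr (V := V) fun x hx => ?_⟩
  · obtain ⟨n, rfl⟩ := Nat.exists_eq_add_of_le' hn
    rfl
  · obtain ⟨s, hs, v, hv, rfl⟩ := Submodule.mem_sup.1 (hsup.ge hx)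
    exact ⟨v, hv, by simpa using hs⟩

/-- such a ring is Koszul under its induced graded structure, with
Poincaré series 1/((1-t)(1-rt)); Koszulness is expressed by the existence of a
minimal graded free resolution of the residue field whose matrices have entries
of degree one, with i-th Betti number 1 + r + ⋯ + rⁱ. -/
theorem stmt_11 (k : Type) [Field k] (R : Type) [CommRing R] [IsNoetherianRing R]
    [IsLocalRing R] [Algebra k R]
    (hres : Function.Bijective
      ((Ideal.Quotient.mk (IsLocalRing.maximalIdeal R)).comp (algebraMap k R)))
    (hng : ¬ IsGorensteinLocalRing R)
    (hm3 : (IsLocalRing.maximalIdeal R) ^ 3 = ⊥)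
    (hm2 : (IsLocalRing.maximalIdeal R) ^ 2 ≠ ⊥)
    (hex : ∃ M : ModuleCat R, Module.Finite R M ∧ GDimZero R M ∧ ¬ Module.Free R M) :
    ∃ (r : ℕ) (𝒜 : ℕ → Submodule k R) (_ : GradedAlgebra 𝒜),
      mlength R ((R ⧸ IsLocalRing.maximalIdeal R) →ₗ[R] R) = (r : ℕ∞) ∧
      𝒜 0 = (1 : Submodule k R) ∧ (∀ n, 3 ≤ n → 𝒜 n = ⊥) ∧
      (∀ x, x ∈ 𝒜 1 → x ∈ IsLocalRing.maximalIdeal R) ∧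
      ∃ (β : ℕ → ℕ) (d : ∀ i : ℕ, (Fin (β (i + 1)) → R) →ₗ[R] (Fin (β i) → R))
        (π : (Fin (β 0) → R) →ₗ[R] (R ⧸ IsLocalRing.maximalIdeal R)),
        (∀ i, β i = ∑ j ∈ Finset.range (i + 1), r ^ j) ∧
        Function.Surjective π ∧
        LinearMap.range (d 0) = LinearMap.ker π ∧
        (∀ i, LinearMap.range (d (i + 1)) = LinearMap.ker (d i)) ∧
        (∀ (i : ℕ) (j : Fin (β (i + 1))) (l : Fin (β i)),
          d i (Pi.single j 1) l ∈ 𝒜 1) := by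
  obtain ⟨M, hfin, hM, hfree⟩ := hex
  have hR : ¬ Module.Injective R R := fun h =>
    hng ⟨inferInstance, inferInstance, hasFiniteSelfInjDim_of_injective h⟩
  simpa only [mlength, ← Module.coe_length, WithBot.coe_inj] using
    stmt_11_general hres.2 hR hm3 M hM.2.1 hfree
end

section
/- Let R be a non-Gorenstein homogeneous graded Artinian ring over a field k which admits a nontrivial deformation. If the Hilbert series of R equals (1+t)(1+rt) for some integer r ≥ 2, then there exist a one-dimensional Cohen-Macaulay homogeneous graded ring S with minimal multiplicity and a homogeneous non-zerodivisor f of degree 2 in S such that R ≅ S/fS. -/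
open CategoryTheory

/-- A standard graded (homogeneous) algebra over a field: the degree-0 part is k,
the algebra is generated in degree 1, and all graded pieces are finite dimensional. -/
def IsStandardGraded (k S : Type) [Field k] [CommRing S] [Algebra k S]
    (𝒮 : ℕ → Submodule k S) [GradedAlgebra 𝒮] : Prop :=
  𝒮 0 = (1 : Submodule k S) ∧ Algebra.adjoin k ((𝒮 1 : Set S)) = ⊤ ∧
    ∀ n, FiniteDimensional k ↥(𝒮 n)

/-- `GDimLE R n M` : the G-dimension of `M` over `R` is at most `n`,
i.e. an `n`-th syzygy of `M` has G-dimension zero. -/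
def GDimLE (R : Type) [CommRing R] : ℕ → ∀ (M : Type) [AddCommGroup M] [Module R M], Prop
  | 0, M, _, _ => GDimZero R M
  | n + 1, M, _, _ => ∃ (b : ℕ) (π : (Fin b → R) →ₗ[R] M),
      Function.Surjective π ∧ GDimLE R n ↥(LinearMap.ker π)

/-- `ProjDimLE S n M` : the projective dimension of `M` over `S` is at most `n`. -/
def ProjDimLE (S : Type) [CommRing S] : ℕ → ∀ (M : Type) [AddCommGroup M] [Module S M], Prop
  | 0, M, _, _ => Module.Projective S M
  | n + 1, M, _, _ => ∃ (b : ℕ) (π : (Fin b → S) →ₗ[S] M),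
      Function.Surjective π ∧ ProjDimLE S n ↥(LinearMap.ker π)

/-- A bundled graded algebra over a field `k`. -/
structure GradedAlgebraOver (k : Type) [Field k] where
  S : Type
  [ring : CommRing S]
  [alg : Algebra k S]
  grading : ℕ → Submodule k S
  [graded : GradedAlgebra grading]

attribute [instance] GradedAlgebraOver.ring GradedAlgebraOver.alg GradedAlgebraOver.graded

/-!
If `R = S/(f)` with `deg f = 2` and `R₃ = 0`, then `S₁³ ⊆ f S₁`. Inside the total ring of
fractions, `B = f⁻¹ S₁²` is then a finite-dimensional algebra containing `1`, and `S₁` is an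
invertible `B`-module with inverse `f⁻¹ S₁`. As `B` is Artinian, its Picard group is trivial, so
`S₁ = x B` for some `x`, that is `S₁² = x S₁`; and `x` is a non-zero-divisor because it divides `f`.

When `dim R₁ ≥ 3`, a regular sequence of length at least two is impossible. After passing to a
quotient it has the form `g, f`. The argument above, applied to `S/(g)`, gives a linear form `x` of
`S` with `S₂ ⊆ (g, x)`; hence the degree-two part of `T = S/(x)` lies in `(g)`, where `g` is regular
on `T` of degree at least two. As `T₂ = 0` would give `g = 0`, this means `T₂ = k g`. Some linear
form multiplies `T₁` injectively into this line because `g` is regular, so `dim T₁ ≤ 1` and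
`dim S₁ ≤ 2`. The same counting, in degree three, rules out `deg f > 2` above.
-/

section

open DirectSum Submodule

section InvertibleSubmodules

theorem exists_eq_span_singleton_of_isUnit {B L : Type*} [CommRing B] [CommRing L] [Algebra B L]
    [FaithfulSMul B L] [Subsingleton (CommRing.Pic B)] {I : Submodule B L} (hI : IsUnit I) :
    ∃ x, I = span B {x} := by
  obtain ⟨I, rfl⟩ := hI
  have hI : I ∈ (unitsToPic B L).ker := Subsingleton.elim _ _
  rw [ker_unitsToPic] at hI
  obtain ⟨x, rfl⟩ := hI
  exact ⟨x, rfl⟩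

theorem restrictScalars_span_singleton_mul (k : Type*) {B L : Type*} [CommSemiring k]
    [CommSemiring B] [CommSemiring L] [Algebra k B] [Algebra k L] [Algebra B L]
    [IsScalarTower k B L] (x : L) (M : Submodule B L) :
    (span B {x} * M).restrictScalars k = span k {x} * M.restrictScalars k := by
  ext y
  simp only [restrictScalars_mem, mem_span_singleton_mul]

variable {k L : Type*} [CommRing k] [IsArtinianRing k] [CommRing L] [Algebra k L]

theorem exists_mul_self_eq_span_mul_of_isUnit {V : Submodule k L} (hV : V.FG)
    {f : L} (hf : IsUnit f) (hfV : f ∈ V * V) (hVf : V * V * V ≤ span k {f} * V) :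
    ∃ x ∈ V, V * V = span k {x} * V := by
  obtain ⟨F, hFf⟩ := hf.exists_left_inv
  have hspan : span k {F} * span k {f} = 1 := by
    rw [span_mul_span, Set.singleton_mul_singleton, hFf, one_eq_span]
  let W : Submodule k L := span k {F} * (V * V)
  have one_mem : 1 ∈ W := hFf ▸ mul_mem_mul (mem_span_singleton_self _) hfV
  have W_mul_V : W * V ≤ V := by
    calc W * V = span k {F} * (V * V * V) := mul_assoc _ _ _
      _ ≤ span k {F} * (span k {f} * V) := mul_le_mul_right hVf _
      _ = V := by rw [← mul_assoc, hspan, one_mul]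
  have W_mul_W : W * W ≤ W := by
    calc W * W = span k {F} * (W * V * V) := by simp only [W]; ring
      _ ≤ W := mul_le_mul_right (mul_le_mul_left W_mul_V V) _
  let B : Subalgebra k L := W.toSubalgebra one_mem fun _ _ ha hb ↦ W_mul_W (mul_mem_mul ha hb)
  have : Module.Finite k B := Module.Finite.iff_fg.2 ((fg_span_singleton _).mul (hV.mul hV))
  have : IsArtinianRing B := IsArtinianRing.of_finite k B
  have : FaithfulSMul B L := (faithfulSMul_iff_algebraMap_injective B L).2 Subtype.val_injective
  let M : Submodule B L :=
    { V with smul_mem' := fun b _ hm ↦ W_mul_V (mul_mem_mul b.2 hm) }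
  have hM : IsUnit M := by
    refine .of_mul_eq_one (span B {F} * M) (restrictScalars_injective k B L ?_)
    calc (M * (span B {F} * M)).restrictScalars k
        = (span B {F} * (M * M)).restrictScalars k := by rw [mul_left_comm]
      _ = W := by rw [restrictScalars_span_singleton_mul, restrictScalars_mul]; rfl
      _ = (1 : Submodule B L).restrictScalars k := by ext; simp [B]
  obtain ⟨x, hx⟩ := exists_eq_span_singleton_of_isUnit hM
  refine ⟨x, show x ∈ M from hx ▸ mem_span_singleton_self x, ?_⟩
  calc V * V = (M * M).restrictScalars k := rfl
    _ = (span B {x} * M).restrictScalars k := by rw [← hx]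
    _ = span k {x} * V := restrictScalars_span_singleton_mul k x M

theorem exists_mul_self_eq_span_mul {V : Submodule k L} (hV : V.FG)
    {f : L} (hf : f ∈ nonZeroDivisors L) (hfV : f ∈ V * V) (hVf : V * V * V ≤ span k {f} * V) :
    ∃ x ∈ V, V * V = span k {x} * V := by
  let φ : L →ₐ[k] FractionRing L := IsScalarTower.toAlgHom k L (FractionRing L)
  have hφ : Function.Injective φ.toLinearMap := IsFractionRing.injective L (FractionRing L)
  have map_span_mul (y : L) :
      (span k {y} * V).map φ.toLinearMap = span k {φ y} * V.map φ.toLinearMap := by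
    rw [Submodule.map_mul, map_span, Set.image_singleton, AlgHom.toLinearMap_apply]
  obtain ⟨_, ⟨x, hxV, rfl⟩, hx⟩ :=
    exists_mul_self_eq_span_mul_of_isUnit (hV.map φ.toLinearMap)
      (f := φ f) (IsLocalization.map_units (FractionRing L) ⟨f, hf⟩)
      (Submodule.map_mul V V φ ▸ mem_map_of_mem hfV)
      (by
        rw [← Submodule.map_mul, ← Submodule.map_mul, ← map_span_mul]
        exact map_mono hVf)
  refine ⟨x, hxV, map_injective_of_injective hφ ?_⟩
  rw [map_span_mul, Submodule.map_mul]
  exact hx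

end InvertibleSubmodules

section QuotientGrading

variable {ι k S : Type*} [CommRing k] [CommRing S] [Algebra k S]

/-- The images in `S ⧸ I` of the pieces of a grading of `S`. They form a grading when `I` is
homogeneous, see `quotientGrading.gradedAlgebra`. -/
def quotientGrading (𝒮 : ι → Submodule k S) (I : Ideal S) (n : ι) : Submodule k (S ⧸ I) :=
  (𝒮 n).map (Ideal.Quotient.mkₐ k I).toLinearMap

variable {𝒮 : ι → Submodule k S} {I : Ideal S}

theorem mk_mem_quotientGrading {n : ι} {s : S} (hs : s ∈ 𝒮 n) :
    Ideal.Quotient.mk I s ∈ quotientGrading 𝒮 I n :=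
  mem_map_of_mem (f := (Ideal.Quotient.mkₐ k I).toLinearMap) hs

namespace quotientGrading

variable [DecidableEq ι] [AddMonoid ι] [GradedAlgebra 𝒮]

theorem isInternal (hI : I.IsHomogeneous 𝒮) : DirectSum.IsInternal (quotientGrading 𝒮 I) := by
  let π (i : ι) : 𝒮 i →ₗ[k] quotientGrading 𝒮 I i :=
    (Ideal.Quotient.mkₐ k I).toLinearMap.submoduleMap (𝒮 i)
  let δ : S →ₗ[k] ⨁ i, quotientGrading 𝒮 I i :=
    DirectSum.lmap π ∘ₗ (decomposeLinearEquiv 𝒮).toLinearMap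
  have δ_surjective : Function.Surjective δ :=
    ((DirectSum.lmap_surjective π).2 fun i ↦ LinearMap.submoduleMap_surjective _ (𝒮 i)).comp
      (decomposeLinearEquiv 𝒮).surjective
  have coe_δ (s : S) : DirectSum.coeLinearMap (quotientGrading 𝒮 I) (δ s) =
      Ideal.Quotient.mk I s := by
    induction s using DirectSum.Decomposition.inductionOn 𝒮 with
    | zero => simp only [map_zero]
    | homogeneous s =>
      simp only [δ, LinearMap.comp_apply, LinearEquiv.coe_coe, decomposeLinearEquiv_apply,
        decompose_coe, ← lof_eq_of k, lmap_lof, coeLinearMap_lof]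
      rfl
    | add s t hs ht => simp only [map_add, hs, ht]
  have δ_eq_zero {s : S} (hs : s ∈ I) : δ s = 0 :=
    DFinsupp.ext fun i ↦ Subtype.ext (Ideal.Quotient.eq_zero_iff_mem.2 (hI i hs))
  change Function.Bijective (DirectSum.coeLinearMap (quotientGrading 𝒮 I))
  refine ⟨(injective_iff_map_eq_zero _).2 fun x hx ↦ ?_, fun z ↦ ?_⟩
  · obtain ⟨s, rfl⟩ := δ_surjective x
    exact δ_eq_zero (Ideal.Quotient.eq_zero_iff_mem.1 (coe_δ s ▸ hx))
  · obtain ⟨s, rfl⟩ := Ideal.Quotient.mk_surjective z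
    exact ⟨δ s, coe_δ s⟩

/-- The graded algebra structure that the quotient by a homogeneous ideal inherits. -/
@[reducible]
noncomputable def gradedAlgebra (hI : I.IsHomogeneous 𝒮) :
    GradedAlgebra (quotientGrading 𝒮 I) where
  one_mem := mk_mem_quotientGrading SetLike.GradedOne.one_mem
  mul_mem := by
    rintro i j _ _ ⟨a, ha, rfl⟩ ⟨b, hb, rfl⟩
    exact mk_mem_quotientGrading (SetLike.GradedMul.mul_mem ha hb)
  __ := (isInternal hI).chooseDecomposition

end quotientGrading

end QuotientGrading

section GradedDivision

variable {k S : Type*} [CommRing k] [CommRing S] [Algebra k S] {𝒮 : ℕ → Submodule k S}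
  [GradedAlgebra 𝒮] {c n : ℕ} {g s : S}

theorem exists_mem_mul_eq_of_mem_span_singleton (hg : g ∈ 𝒮 c) (hcn : c ≤ n) (hs : s ∈ 𝒮 n)
    (hsg : s ∈ Ideal.span {g}) : ∃ u ∈ 𝒮 (n - c), u * g = s := by
  obtain ⟨u, rfl⟩ := Ideal.mem_span_singleton'.1 hsg
  refine ⟨decompose 𝒮 u (n - c), SetLike.coe_mem _, ?_⟩
  rw [← coe_decompose_mul_of_right_mem_of_le 𝒮 hg hcn, decompose_of_mem_same 𝒮 hs]

theorem eq_zero_of_mem_span_singleton_of_lt (hg : g ∈ 𝒮 c) (hnc : n < c) (hs : s ∈ 𝒮 n)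
    (hsg : s ∈ Ideal.span {g}) : s = 0 := by
  obtain ⟨u, rfl⟩ := Ideal.mem_span_singleton'.1 hsg
  rw [← decompose_of_mem_same 𝒮 hs, coe_decompose_mul_of_right_mem_of_not_le 𝒮 hg hnc.not_ge]

theorem isHomogeneous_span_singleton (hg : g ∈ 𝒮 c) : (Ideal.span {g}).IsHomogeneous 𝒮 :=
  Ideal.homogeneous_span 𝒮 _ (by rintro _ rfl; exact ⟨c, hg⟩)

theorem finrank_quotientGrading_span_singleton (hg : g ∈ 𝒮 c) (hnc : n < c) :
    Module.finrank k (quotientGrading 𝒮 (Ideal.span {g}) n) = Module.finrank k (𝒮 n) := by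
  have hinj : Function.Injective ((Ideal.Quotient.mkₐ k (Ideal.span {g})).toLinearMap.domRestrict
      (𝒮 n)) := by
    refine (injective_iff_map_eq_zero _).2 fun s hs ↦ Subtype.ext ?_
    exact eq_zero_of_mem_span_singleton_of_lt hg hnc s.2 (Ideal.Quotient.eq_zero_iff_mem.1 hs)
  rw [quotientGrading, ← LinearMap.range_domRestrict]
  exact LinearMap.finrank_range_of_inj hinj

end GradedDivision

theorem toSubmodule_adjoin_le_iSup_pow {k S : Type*} [CommSemiring k] [Semiring S] [Algebra k S]
    (V : Submodule k S) : Subalgebra.toSubmodule (Algebra.adjoin k (V : Set S)) ≤ ⨆ n, V ^ n := by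
  rw [Algebra.adjoin_eq_span, span_le]
  intro s hs
  suffices ∃ n, s ∈ V ^ n from this.elim fun n hn ↦ mem_iSup_of_mem n hn
  induction hs using Submonoid.closure_induction with
  | mem x hx => exact ⟨1, (pow_one V).symm ▸ hx⟩
  | one => exact ⟨0, (pow_zero V).symm ▸ one_le.1 le_rfl⟩
  | mul x y _ _ hx hy =>
    obtain ⟨m, hm⟩ := hx
    obtain ⟨n, hn⟩ := hy
    exact ⟨m + n, pow_add V m n ▸ mul_mem_mul hm hn⟩

theorem isWeaklyRegular_cons_iff_quotient {S : Type*} [CommRing S] (g : S) (rs : List S) :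
    RingTheory.Sequence.IsWeaklyRegular S (g :: rs) ↔
      g ∈ nonZeroDivisors S ∧ RingTheory.Sequence.IsWeaklyRegular (S ⧸ Ideal.span {g})
        (rs.map (Ideal.Quotient.mk (Ideal.span {g}))) := by
  have e : QuotSMulTop g S ≃ₗ[S] S ⧸ Ideal.span {g} :=
    quotEquivOfEq _ _ (by rw [← ideal_span_singleton_smul, smul_eq_mul, Ideal.mul_top])
  rw [RingTheory.Sequence.isWeaklyRegular_cons_iff, e.isWeaklyRegular_congr,
    ← RingTheory.Sequence.isWeaklyRegular_map_algebraMap_iff (S ⧸ Ideal.span {g})]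
  refine and_congr_left' ?_
  rw [isSMulRegular_iff_right_eq_zero_of_smul, mem_nonZeroDivisors_iff_left]
  rfl

theorem mk_mem_nonZeroDivisors_of_mk_mem {S : Type*} [CommRing S] {g x : S}
    (hg : g ∈ nonZeroDivisors S)
    (hx : Ideal.Quotient.mk (Ideal.span {g}) x ∈ nonZeroDivisors (S ⧸ Ideal.span {g})) :
    Ideal.Quotient.mk (Ideal.span {x}) g ∈ nonZeroDivisors (S ⧸ Ideal.span {x}) := by
  refine mem_nonZeroDivisors_iff_left.2 fun u hu ↦ ?_
  obtain ⟨u, rfl⟩ := Ideal.Quotient.mk_surjective u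
  rw [← map_mul, Ideal.Quotient.eq_zero_iff_mem, Ideal.mem_span_singleton'] at hu
  obtain ⟨v, hv⟩ := hu
  have hv0 : Ideal.Quotient.mk (Ideal.span {g}) v = 0 := by
    refine (mul_right_mem_nonZeroDivisors_eq_zero_iff hx).1 ?_
    rw [← map_mul, hv]
    exact Ideal.Quotient.eq_zero_iff_mem.2
      (Ideal.mul_mem_right u _ (Ideal.mem_span_singleton_self g))
  obtain ⟨w, rfl⟩ := Ideal.mem_span_singleton'.1 (Ideal.Quotient.eq_zero_iff_mem.1 hv0)
  have huw : g * (u - w * x) = 0 := by linear_combination -hv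
  rw [sub_eq_zero.1 ((mul_left_mem_nonZeroDivisors_eq_zero_iff hg).1 huw)]
  exact Ideal.Quotient.eq_zero_iff_mem.2 (Ideal.mem_span_singleton'.2 ⟨w, rfl⟩)

namespace IsStandardGraded

variable {k S : Type} [Field k] [CommRing S] [Algebra k S] {𝒮 : ℕ → Submodule k S}
  [GradedAlgebra 𝒮]

theorem eq_pow (hS : IsStandardGraded k S 𝒮) (n : ℕ) : 𝒮 n = 𝒮 1 ^ n := by
  have pow_le (n : ℕ) : 𝒮 1 ^ n ≤ 𝒮 n := by
    induction n with
    | zero => simpa using SetLike.GradedOne.one_mem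
    | succ n ih =>
      rw [pow_succ, Submodule.mul_le]
      exact fun a ha b hb ↦ SetLike.GradedMul.mul_mem (ih ha) hb
  have iSup_pow : ⨆ n, 𝒮 1 ^ n = ⊤ := by
    rw [← top_le_iff, ← Algebra.top_toSubmodule, ← hS.2.1]
    exact toSubmodule_adjoin_le_iSup_pow (𝒮 1)
  exact (congrFun (((Decomposition.isInternal 𝒮).submodule_iSupIndep.le_iff_eq_of_iSup_eq_top
    iSup_pow).1 pow_le) n).symm

theorem add_eq_mul (hS : IsStandardGraded k S 𝒮) (m n : ℕ) : 𝒮 (m + n) = 𝒮 m * 𝒮 n := by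
  rw [hS.eq_pow (m + n), hS.eq_pow m, hS.eq_pow n, pow_add]

theorem quotient (hS : IsStandardGraded k S 𝒮) {I : Ideal S} (hI : I.IsHomogeneous 𝒮) :
    let := quotientGrading.gradedAlgebra hI
    IsStandardGraded k (S ⧸ I) (quotientGrading 𝒮 I) := by
  refine ⟨?_, ?_, fun n ↦ ?_⟩
  · rw [quotientGrading, hS.1, Submodule.map_one]
  · have := congrArg (Subalgebra.map (Ideal.Quotient.mkₐ k I)) hS.2.1
    rw [AlgHom.map_adjoin, Algebra.map_top,
      (AlgHom.range_eq_top _).2 (Ideal.Quotient.mkₐ_surjective k I)] at this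
    exact this
  · have := hS.2.2 n
    exact Module.Finite.map (𝒮 n) (Ideal.Quotient.mkₐ k I).toLinearMap

theorem toIdeal_irrelevant (hS : IsStandardGraded k S 𝒮) :
    (HomogeneousIdeal.irrelevant 𝒮).toIdeal = Ideal.span (𝒮 1 : Set S) := by
  refine le_antisymm ((HomogeneousIdeal.toIdeal_irrelevant_le 𝒮).2 fun n hn s hs ↦ ?_) ?_
  · replace hs : s ∈ 𝒮 (n - 1) * 𝒮 1 := by rwa [← hS.add_eq_mul, Nat.sub_add_cancel hn]
    have mul_le : 𝒮 (n - 1) * 𝒮 1 ≤ (Ideal.span (𝒮 1 : Set S)).restrictScalars k :=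
      Submodule.mul_le.2 fun a _ b hb ↦ Ideal.mul_mem_left _ a (Ideal.subset_span hb)
    exact mul_le hs
  · exact Ideal.span_le.2 fun s hs ↦ HomogeneousIdeal.mem_irrelevant_of_mem 𝒮 one_pos hs

theorem span_mul_irrelevant_eq_sq (hS : IsStandardGraded k S 𝒮) {x : S}
    (hx : x ∈ 𝒮 1) (h : 𝒮 2 = span k {x} * 𝒮 1) :
    Ideal.span {x} * (HomogeneousIdeal.irrelevant 𝒮).toIdeal =
      (HomogeneousIdeal.irrelevant 𝒮).toIdeal ^ 2 := by
  rw [hS.toIdeal_irrelevant, sq]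
  refine le_antisymm (Ideal.mul_mono_left ?_) ?_
  · exact (Ideal.span_singleton_le_iff_mem _).2 (Ideal.subset_span hx)
  · rw [Ideal.span_mul_span', Ideal.span_le]
    rintro _ ⟨a, ha, b, hb, rfl⟩
    have hab : a * b ∈ 𝒮 2 := SetLike.GradedMul.mul_mem (i := 1) (j := 1) ha hb
    obtain ⟨y, hy, hxy : x * y = a * b⟩ := mem_span_singleton_mul.1 (h ▸ hab)
    simp only [SetLike.mem_coe, ← hxy]
    exact Ideal.mul_mem_mul (Ideal.mem_span_singleton_self x) (Ideal.subset_span hy)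

variable {b c n : ℕ} {f g s x : S}

theorem mem_span_singleton_of_mem_ideal_span (hS : IsStandardGraded k S 𝒮) (hg : g ∈ 𝒮 n)
    (hs : s ∈ 𝒮 n) (hsg : s ∈ Ideal.span {g}) : s ∈ span k {g} := by
  obtain ⟨u, hu, rfl⟩ := exists_mem_mul_eq_of_mem_span_singleton hg le_rfl hs hsg
  rw [Nat.sub_self, hS.1, mem_one] at hu
  obtain ⟨a, rfl⟩ := hu
  exact mem_span_singleton.2 ⟨a, Algebra.smul_def a g⟩

theorem finrank_one_le_one_of_le_span_singleton (hS : IsStandardGraded k S 𝒮) (hg : g ∈ 𝒮 c)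
    (hg0 : g ∈ nonZeroDivisors S) (hn : 0 < n) (hnc : n ≤ c)
    (hSn : ∀ s ∈ 𝒮 n, s ∈ Ideal.span {g}) : Module.finrank k (𝒮 1) ≤ 1 := by
  nontriviality S
  have hc : 𝒮 c ≠ ⊥ := fun h ↦ nonZeroDivisors.ne_zero hg0 ((mem_bot k).1 (h ▸ hg))
  obtain rfl : n = c := by
    refine hnc.eq_of_not_lt fun hlt ↦ hc ?_
    have : 𝒮 n = ⊥ := eq_bot_iff.2 fun s hs ↦
      eq_zero_of_mem_span_singleton_of_lt hg hlt hs (hSn s hs)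
    rw [← Nat.add_sub_cancel' hnc, hS.add_eq_mul, this, bot_mul]
  have hmul : 𝒮 n = 𝒮 (n - 1) * 𝒮 1 := by rw [← hS.add_eq_mul, Nat.sub_add_cancel hn]
  have mul_mem {q s : S} (hq : q ∈ 𝒮 (n - 1)) (hs : s ∈ 𝒮 1) : q * s ∈ span k {g} := by
    have hqs : q * s ∈ 𝒮 n := hmul ▸ mul_mem_mul hq hs
    exact hS.mem_span_singleton_of_mem_ideal_span hg hqs (hSn _ hqs)
  obtain ⟨q, hq, a, ha, hqa⟩ : ∃ q ∈ 𝒮 (n - 1), ∃ a ∈ 𝒮 1, q * a ≠ 0 := by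
    by_contra! h
    exact hc (hmul.trans (eq_bot_iff.2 (Submodule.mul_le.2 fun q hq a ha ↦ h q hq a ha)))
  obtain ⟨α, hα⟩ := mem_span_singleton.1 (mul_mem hq ha)
  have hα0 : α ≠ 0 := by rintro rfl; exact hqa (by rw [← hα, zero_smul])
  let μ : 𝒮 1 →ₗ[k] span k {g} :=
    (LinearMap.mulLeft k q).restrict fun s hs ↦ mul_mem hq hs
  have hμ : Function.Injective μ := by
    refine (injective_iff_map_eq_zero μ).2 fun s hs ↦ Subtype.ext ?_
    have hqs : q * (s : S) = 0 := congrArg Subtype.val hs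
    have hgs : (α • (s : S)) * g = 0 := by
      calc (α • (s : S)) * g = (α • g) * s := by rw [smul_mul_assoc, smul_mul_assoc, mul_comm]
        _ = a * (q * s) := by rw [hα]; ring
        _ = 0 := by rw [hqs, mul_zero]
    exact (smul_eq_zero_iff_right hα0).1 ((mul_right_mem_nonZeroDivisors_eq_zero_iff hg0).1 hgs)
  calc Module.finrank k (𝒮 1) ≤ Module.finrank k (span k {g}) :=
        LinearMap.finrank_le_finrank_of_injective hμ
    _ ≤ 1 := (finrank_span_le_card {g}).trans (by simp)

theorem eq_two_and_exists_sq_eq_span_mul (hS : IsStandardGraded k S 𝒮) (hf : f ∈ 𝒮 c) (hc : 2 ≤ c)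
    (hf0 : f ∈ nonZeroDivisors S) (hS3 : ∀ s ∈ 𝒮 3, s ∈ Ideal.span {f})
    (h1 : 1 < Module.finrank k (𝒮 1)) :
    c = 2 ∧ ∃ x ∈ 𝒮 1, x ∈ nonZeroDivisors S ∧ 𝒮 2 = span k {x} * 𝒮 1 := by
  obtain rfl : c = 2 := by
    by_contra hc2
    exact h1.not_ge
      (hS.finrank_one_le_one_of_le_span_singleton hf hf0 three_pos (by omega) hS3)
  have h2 : 𝒮 1 * 𝒮 1 = 𝒮 2 := (hS.add_eq_mul 1 1).symm
  have h3 : 𝒮 1 * 𝒮 1 * 𝒮 1 ≤ span k {f} * 𝒮 1 := by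
    rw [h2, ← hS.add_eq_mul 2 1]
    intro s hs
    obtain ⟨u, hu, rfl⟩ := exists_mem_mul_eq_of_mem_span_singleton hf (by omega) hs (hS3 s hs)
    exact mem_span_singleton_mul.2 ⟨u, hu, mul_comm f u⟩
  have := hS.2.2 1
  obtain ⟨x, hx, hx2⟩ := exists_mul_self_eq_span_mul (Module.Finite.iff_fg.1 this) hf0
    (h2 ▸ hf) h3
  rw [h2] at hx2
  obtain ⟨y, -, rfl⟩ := mem_span_singleton_mul.1 (hx2 ▸ hf)
  exact ⟨rfl, x, hx, (mul_mem_nonZeroDivisors.1 hf0).1, hx2⟩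

theorem finrank_le_finrank_quotientGrading_add_one (hS : IsStandardGraded k S 𝒮) (hx : x ∈ 𝒮 n) :
    Module.finrank k (𝒮 n) ≤
      Module.finrank k (quotientGrading 𝒮 (Ideal.span {x}) n) + 1 := by
  have := hS.2.2 n
  let π := (Ideal.Quotient.mkₐ k (Ideal.span {x})).toLinearMap.domRestrict (𝒮 n)
  have hker : (LinearMap.ker π).map (𝒮 n).subtype ≤ span k {x} := by
    rintro _ ⟨s, hs, rfl⟩
    exact hS.mem_span_singleton_of_mem_ideal_span hx s.2 (Ideal.Quotient.eq_zero_iff_mem.1 hs)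
  have hker_le : Module.finrank k (LinearMap.ker π) ≤ 1 := by
    rw [← finrank_map_subtype_eq]
    exact (finrank_mono hker).trans ((finrank_span_le_card {x}).trans (by simp))
  rw [quotientGrading, ← LinearMap.range_domRestrict, ← LinearMap.finrank_range_add_finrank_ker π]
  exact Nat.add_le_add_left hker_le _

theorem finrank_one_le_two_of_le_span_pair (hS : IsStandardGraded k S 𝒮) (hg : g ∈ 𝒮 c)
    (hc : 2 ≤ c) (hg0 : g ∈ nonZeroDivisors S) (hx : x ∈ 𝒮 1)
    (hx0 : Ideal.Quotient.mk (Ideal.span {g}) x ∈ nonZeroDivisors (S ⧸ Ideal.span {g}))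
    (hS2 : ∀ s ∈ 𝒮 2, s ∈ Ideal.span {g} ⊔ Ideal.span {x}) : Module.finrank k (𝒮 1) ≤ 2 := by
  let I := Ideal.span {x}
  have hI : I.IsHomogeneous 𝒮 := isHomogeneous_span_singleton hx
  let := quotientGrading.gradedAlgebra hI
  have hV2 : ∀ s ∈ quotientGrading 𝒮 I 2, s ∈ Ideal.span {Ideal.Quotient.mk I g} := by
    rintro _ ⟨s, hs, rfl⟩
    rw [← Set.image_singleton, ← Ideal.map_span]
    exact Ideal.mem_quotient_iff_mem_sup.2 (hS2 s hs)
  have := (hS.quotient hI).finrank_one_le_one_of_le_span_singleton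
    (mk_mem_quotientGrading hg) (mk_mem_nonZeroDivisors_of_mk_mem hg0 hx0) two_pos hc hV2
  exact (hS.finrank_le_finrank_quotientGrading_add_one hx).trans (Nat.add_le_add_right this 1)

theorem finrank_one_le_two_of_isWeaklyRegular_pair (hS : IsStandardGraded k S 𝒮)
    (hreg : RingTheory.Sequence.IsWeaklyRegular S [g, f]) (hg : g ∈ 𝒮 b) (hb : 2 ≤ b)
    (hf : f ∈ 𝒮 c) (hc : 2 ≤ c) (hS3 : ∀ s ∈ 𝒮 3, s ∈ Ideal.ofList [g, f]) :
    Module.finrank k (𝒮 1) ≤ 2 := by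
  by_contra! h1
  obtain ⟨hg0, hreg'⟩ := (isWeaklyRegular_cons_iff_quotient g [f]).1 hreg
  have hf0 := ((isWeaklyRegular_cons_iff_quotient _ []).1 hreg').1
  let I := Ideal.span {g}
  have hI : I.IsHomogeneous 𝒮 := isHomogeneous_span_singleton hg
  let := quotientGrading.gradedAlgebra hI
  have hT3 : ∀ t ∈ quotientGrading 𝒮 I 3, t ∈ Ideal.span {Ideal.Quotient.mk I f} := by
    rintro _ ⟨s, hs, rfl⟩
    rw [← Set.image_singleton, ← Ideal.map_span]
    refine Ideal.mem_quotient_iff_mem_sup.2 ?_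
    rw [sup_comm, ← Ideal.ofList_singleton, ← Ideal.ofList_cons]
    exact hS3 s hs
  have hT1 : 1 < Module.finrank k (quotientGrading 𝒮 I 1) := by
    rw [finrank_quotientGrading_span_singleton hg (by omega)]
    omega
  obtain ⟨rfl, _, ⟨x, hx, rfl⟩, hx0, hx2⟩ := (hS.quotient hI).eq_two_and_exists_sq_eq_span_mul
    (mk_mem_quotientGrading hf) hc hf0 hT3 hT1
  refine h1.not_ge (hS.finrank_one_le_two_of_le_span_pair hg hb hg0 hx hx0 fun s hs ↦ ?_)
  obtain ⟨_, ⟨y, -, rfl⟩, hxy⟩ := mem_span_singleton_mul.1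
    (hx2 ▸ mk_mem_quotientGrading hs : Ideal.Quotient.mk I s ∈ _)
  rw [sup_comm]
  refine Ideal.mem_quotient_iff_mem_sup.1 ?_
  rw [← hxy, Ideal.map_span, Set.image_singleton]
  exact Ideal.mul_mem_right _ _ (Ideal.mem_span_singleton_self _)

end IsStandardGraded

theorem IsStandardGraded.length_le_one_of_isWeaklyRegular {k S : Type} [Field k] [CommRing S]
    [Algebra k S] {𝒮 : ℕ → Submodule k S} [GradedAlgebra 𝒮] (hS : IsStandardGraded k S 𝒮)
    (h1 : 2 < Module.finrank k (𝒮 1)) {rs : List S}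
    (hreg : RingTheory.Sequence.IsWeaklyRegular S rs) (hdeg : ∀ f ∈ rs, ∃ c, 2 ≤ c ∧ f ∈ 𝒮 c)
    (hS3 : ∀ s ∈ 𝒮 3, s ∈ Ideal.ofList rs) : rs.length ≤ 1 := by
  match rs with
  | [] => exact Nat.zero_le 1
  | [_] => exact le_rfl
  | [g, f] =>
    obtain ⟨b, hb, hg⟩ := hdeg g (by simp)
    obtain ⟨c, hc, hf⟩ := hdeg f (by simp)
    exact absurd (hS.finrank_one_le_two_of_isWeaklyRegular_pair hreg hg hb hf hc hS3) h1.not_ge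
  | g :: f :: f' :: rs =>
    obtain ⟨b, hb, hg⟩ := hdeg g (by simp)
    let I := Ideal.span {g}
    have hI : I.IsHomogeneous 𝒮 := isHomogeneous_span_singleton hg
    let := quotientGrading.gradedAlgebra hI
    have hlen := (hS.quotient hI).length_le_one_of_isWeaklyRegular
      (rs := (f :: f' :: rs).map (Ideal.Quotient.mk I))
      (by rwa [finrank_quotientGrading_span_singleton hg (by omega)])
      ((isWeaklyRegular_cons_iff_quotient g _).1 hreg).2
      (fun _ ht ↦ by
        obtain ⟨s, hs, rfl⟩ := List.mem_map.1 ht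
        obtain ⟨c, hc, hsc⟩ := hdeg s (List.mem_cons_of_mem g hs)
        exact ⟨c, hc, mk_mem_quotientGrading hsc⟩)
      (by
        rintro _ ⟨s, hs, rfl⟩
        rw [← Ideal.map_ofList]
        refine Ideal.mem_quotient_iff_mem_sup.2 ?_
        rw [sup_comm, ← Ideal.ofList_cons]
        exact hS3 s hs)
    simp only [List.map_cons, List.length_cons] at hlen
    omega
termination_by rs.length

section GradedSurjection

variable {ι k M N : Type*} [DecidableEq ι] [CommRing k] [AddCommGroup M] [Module k M]
  [AddCommGroup N] [Module k N] {ℳ : ι → Submodule k M} [Decomposition ℳ]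
  {𝒩 : ι → Submodule k N} [Decomposition 𝒩]

theorem map_piece_eq_of_surjective {φ : M →ₗ[k] N} (hφ : Function.Surjective φ)
    (hφ_mem : ∀ n, ∀ m ∈ ℳ n, φ m ∈ 𝒩 n) (n : ι) : (ℳ n).map φ = 𝒩 n := by
  have iSup_map : ⨆ n, (ℳ n).map φ = ⊤ := by
    rw [← Submodule.map_iSup, (Decomposition.isInternal ℳ).submodule_iSup_eq_top, Submodule.map_top]
    exact LinearMap.range_eq_top.2 hφ
  exact congrFun (((Decomposition.isInternal 𝒩).submodule_iSupIndep.le_iff_eq_of_iSup_eq_top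
    iSup_map).1 fun n ↦ map_le_iff_le_comap.2 (hφ_mem n)) n

theorem finrank_piece_le_of_surjective [Nontrivial k] {φ : M →ₗ[k] N} (hφ : Function.Surjective φ)
    (hφ_mem : ∀ n, ∀ m ∈ ℳ n, φ m ∈ 𝒩 n) (n : ι) [Module.Finite k (ℳ n)] :
    Module.finrank k (𝒩 n) ≤ Module.finrank k (ℳ n) := by
  rw [← map_piece_eq_of_surjective hφ hφ_mem n]
  exact finrank_map_le _ _

end GradedSurjection

end

theorem stmt_13_general {k : Type} {R : Type*} [Field k] [CommRing R] [Algebra k R]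
    (𝒜 : ℕ → Submodule k R) [GradedAlgebra 𝒜] (h1 : 2 < Module.finrank k ↥(𝒜 1))
    (h3 : 𝒜 3 = ⊥)
    (hdef : ∃ (G : GradedAlgebraOver k) (d : ℕ) (fs : Fin d → G.S),
      IsStandardGraded k G.S G.grading ∧ 0 < d ∧ ringKrullDim G.S = d ∧
      (∀ i, ∃ c, 2 ≤ c ∧ fs i ∈ G.grading c) ∧
      RingTheory.Sequence.IsRegular G.S (List.ofFn fs) ∧
      ∃ e : (G.S ⧸ Ideal.span (Set.range fs)) ≃ₐ[k] R,
        ∀ (n : ℕ) (s : G.S), s ∈ G.grading n →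
          e (Ideal.Quotient.mk (Ideal.span (Set.range fs)) s) ∈ 𝒜 n) :
    ∃ (G : GradedAlgebraOver k) (f : G.S),
      IsStandardGraded k G.S G.grading ∧ ringKrullDim G.S = 1 ∧
      (∃ x ∈ G.grading 1, x ∈ nonZeroDivisors G.S ∧
        Ideal.span {x} * (HomogeneousIdeal.irrelevant G.grading).toIdeal =
          (HomogeneousIdeal.irrelevant G.grading).toIdeal ^ 2) ∧
      f ∈ G.grading 2 ∧ f ∈ nonZeroDivisors G.S ∧
      ∃ e : (G.S ⧸ Ideal.span {f}) ≃ₐ[k] R,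
        ∀ (n : ℕ) (s : G.S), s ∈ G.grading n →
          e (Ideal.Quotient.mk (Ideal.span {f}) s) ∈ 𝒜 n := by
  obtain ⟨G, d, fs, hS, hd, hdim, hdeg, hreg, hiso⟩ := hdef
  have hregw := hreg.toIsWeaklyRegular
  obtain ⟨hS1, hS3⟩ : 2 < Module.finrank k (G.grading 1) ∧
      ∀ s ∈ G.grading 3, s ∈ Ideal.span (Set.range fs) := by
    obtain ⟨e, he⟩ := hiso
    have := hS.2.2 1
    refine ⟨h1.trans_le (finrank_piece_le_of_surjective (ℳ := G.grading)
      (φ := e.toLinearMap ∘ₗ (Ideal.Quotient.mkₐ k _).toLinearMap)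
      (e.surjective.comp Ideal.Quotient.mk_surjective) he 1), fun s hs ↦ ?_⟩
    have hes := he 3 s hs
    rw [h3, Submodule.mem_bot] at hes
    exact Ideal.Quotient.eq_zero_iff_mem.1 ((map_eq_zero_iff e e.injective).1 hes)
  obtain rfl : d = 1 := by
    have hlen := hS.length_le_one_of_isWeaklyRegular hS1 hregw (List.forall_mem_ofFn_iff.2 hdeg)
      fun s hs ↦ by simpa only [Ideal.ofList, List.mem_ofFn', Set.ofPred_mem_eq] using hS3 s hs
    rw [List.length_ofFn] at hlen
    omega
  obtain ⟨c, hc, hf⟩ := hdeg 0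
  have hf0 := ((isWeaklyRegular_cons_iff_quotient (fs 0) []).1 hregw).1
  rw [Set.range_unique, Fin.default_eq_zero] at hiso hS3
  obtain ⟨rfl, x, hx, hx0, hx2⟩ :=
    hS.eq_two_and_exists_sq_eq_span_mul hf hc hf0 hS3 (one_lt_two.trans hS1)
  exact ⟨G, fs 0, hS, hdim, ⟨x, hx, hx0, hS.span_mul_irrelevant_eq_sq hx hx2⟩, hf, hf0, hiso⟩

/-- a non-Gorenstein homogeneous graded Artinian k-algebra with a
nontrivial deformation whose Hilbert series is (1+t)(1+rt) with r ≥ 2 is isomorphic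
(as a graded algebra) to S/fS for a one-dimensional CM standard graded algebra S with
minimal multiplicity and a degree-2 homogeneous nonzerodivisor f. -/
theorem stmt_13 (k R : Type) [Field k] [CommRing R] [Algebra k R] [IsArtinianRing R]
    (𝒜 : ℕ → Submodule k R) [GradedAlgebra 𝒜] (hRG : IsStandardGraded k R 𝒜)
    (hng : ¬ HasFiniteSelfInjDim R)
    (r : ℕ) (hr : 2 ≤ r)
    (h0 : Module.finrank k ↥(𝒜 0) = 1) (h1 : Module.finrank k ↥(𝒜 1) = r + 1)
    (h2 : Module.finrank k ↥(𝒜 2) = r) (h3 : ∀ n, 3 ≤ n → 𝒜 n = ⊥)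
    (hdef : ∃ (G : GradedAlgebraOver k) (d : ℕ) (fs : Fin d → G.S),
      IsStandardGraded k G.S G.grading ∧ 0 < d ∧ ringKrullDim G.S = d ∧
      (∀ i, ∃ c, 2 ≤ c ∧ fs i ∈ G.grading c) ∧
      RingTheory.Sequence.IsRegular G.S (List.ofFn fs) ∧
      ∃ e : (G.S ⧸ Ideal.span (Set.range fs)) ≃ₐ[k] R,
        ∀ (n : ℕ) (s : G.S), s ∈ G.grading n →
          e (Ideal.Quotient.mk (Ideal.span (Set.range fs)) s) ∈ 𝒜 n) :
    ∃ (G : GradedAlgebraOver k) (f : G.S),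
      IsStandardGraded k G.S G.grading ∧ ringKrullDim G.S = 1 ∧
      (∃ x ∈ G.grading 1, x ∈ nonZeroDivisors G.S ∧
        Ideal.span {x} * (HomogeneousIdeal.irrelevant G.grading).toIdeal =
          (HomogeneousIdeal.irrelevant G.grading).toIdeal ^ 2) ∧
      f ∈ G.grading 2 ∧ f ∈ nonZeroDivisors G.S ∧
      ∃ e : (G.S ⧸ Ideal.span {f}) ≃ₐ[k] R,
        ∀ (n : ℕ) (s : G.S), s ∈ G.grading n →
          e (Ideal.Quotient.mk (Ideal.span {f}) s) ∈ 𝒜 n :=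
  stmt_13_general 𝒜 (by omega) (h3 3 le_rfl) hdef
end

section
/- Let S be a one-dimensional Cohen-Macaulay homogeneous graded ring with minimal multiplicity over an algebraically closed field k, f a homogeneous non-zerodivisor of degree 2, R = S/fS, x a degree-one element with xn = n², and z a degree-one element of R linearly independent from x. For n ≥ 1 let M([x],n) be the R-module presented by the n×n upper bidiagonal matrix with x on the diagonal and z on the superdiagonal. Then M([x],n) is an indecomposable R-module of G-dimension zero, minimally generated by n elements, and M([x],n) has a filtration 0 = M₀ ⊂ M₁ ⊂ ⋯ ⊂ M_n = M([x],n) with M_i/M_{i−1} ≅ R/xR. -/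
open CategoryTheory

/-- An indecomposable (nonzero) module: it is not a direct sum of two proper submodules. -/
def IsIndecomposableModule (R : Type) [CommRing R] (M : Type) [AddCommGroup M]
    [Module R M] : Prop :=
  (⊥ : Submodule R M) ≠ ⊤ ∧
    ∀ N₁ N₂ : Submodule R M, IsCompl N₁ N₂ → N₁ = ⊥ ∨ N₂ = ⊥

/-!
Let `I` be the irrelevant ideal of `S`. Minimal multiplicity gives `𝒮 2 = x * 𝒮 1`, so `f = x * y`
with `y` of degree one, and `z * 𝒮 1 ⊆ x * 𝒮 1`. Choosing `y₀ = y` and `z * yᵢ = x * yᵢ₊₁`, the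
bidiagonal matrix `x + z N`, with `N` the nilpotent shift, has the cofactor `∑ (-1)ⁱ yᵢ Nⁱ` with
respect to `f`. A matrix factorization of the regular element `f` becomes over `R = S ⧸ (f)` a
two-periodic complex which is exact together with its dual, whence G-dimension zero.

Counting dimensions in degree two gives `I² ⊆ (y)`, so `I³ = x I² ⊆ (f)` and `m = I R` is nilpotent.
The independence of `x` and `z` says that the coefficients of a relation `x a + z b = 0` in `R` lie
in `m`. Hence an endomorphism of `M` lifts to a matrix whose reduction modulo `m` commutes with a
nilpotent Jordan block; such a matrix is idempotent only if it is `0` or `1`.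
-/

section PeriodicResolution

variable {R F M N : Type} [CommRing R] [AddCommGroup F] [Module R F] [AddCommGroup M] [Module R M]
  [AddCommGroup N] [Module R N]

theorem subsingleton_extGrp_succ (P : ProjectiveResolution (ModuleCat.of R M)) (i : ℕ)
    (h : ∀ g : P.complex.X (i + 1) ⟶ ModuleCat.of R N, P.complex.d (i + 2) (i + 1) ≫ g = 0 →
      ∃ g' : P.complex.X i ⟶ ModuleCat.of R N, P.complex.d (i + 1) i ≫ g' = g) :
    Subsingleton (ExtGrp R M N (i + 1)) := by
  refine ModuleCat.subsingleton_of_isZero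
    (Limits.IsZero.of_iso ?_ (P.isoExt (i + 1) (ModuleCat.of R N)))
  rw [← HomologicalComplex.exactAt_iff_isZero_homology,
    HomologicalComplex.exactAt_iff' _ i (i + 1) (i + 2) (by simp) (by simp),
    ShortComplex.moduleCat_exact_iff]
  exact h

/-- The chain complex `⋯ → F → F → F` of period two, with differentials `φ` from odd to even
degrees and `ψ` from even to odd degrees. -/
noncomputable def periodicComplex (φ ψ : F →ₗ[R] F) (hφψ : φ ∘ₗ ψ = 0) (hψφ : ψ ∘ₗ φ = 0) :
    ChainComplex (ModuleCat R) ℕ :=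
  HomologicalComplex.alternatingConst (ModuleCat.of R F) (φ := ModuleCat.ofHom ψ)
    (ψ := ModuleCat.ofHom φ) (ModuleCat.hom_ext hφψ) (ModuleCat.hom_ext hψφ)
    fun _ _ => ComplexShape.down_nat_odd_add

section

variable {φ ψ : F →ₗ[R] F} (hφψ : φ ∘ₗ ψ = 0) (hψφ : ψ ∘ₗ φ = 0)

theorem periodicComplex_d_even {i : ℕ} (hi : Even i) :
    (periodicComplex φ ψ hφψ hψφ).d (i + 1) i = ModuleCat.ofHom φ :=
  (dif_pos rfl).trans (dif_neg (Nat.even_add_one.not.2 (not_not.2 hi)))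

theorem periodicComplex_d_odd {i : ℕ} (hi : ¬Even i) :
    (periodicComplex φ ψ hφψ hψφ).d (i + 1) i = ModuleCat.ofHom ψ :=
  (dif_pos rfl).trans (dif_pos (Nat.even_add_one.2 hi))

end

variable {φ ψ : F →ₗ[R] F} {π : F →ₗ[R] M}

theorem exactAt_periodicComplex_succ (hφψ : Function.Exact φ ψ) (hψφ : Function.Exact ψ φ) (i : ℕ) :
    (periodicComplex φ ψ hψφ.linearMap_comp_eq_zero hφψ.linearMap_comp_eq_zero).ExactAt
      (i + 1) := by
  have hφψ₀ := hψφ.linearMap_comp_eq_zero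
  have hψφ₀ := hφψ.linearMap_comp_eq_zero
  rw [HomologicalComplex.exactAt_iff' _ (i + 2) (i + 1) i (by simp) (by simp),
    ShortComplex.ShortExact.moduleCat_exact_iff_function_exact]
  change Function.Exact ((periodicComplex φ ψ hφψ₀ hψφ₀).d (i + 1 + 1) (i + 1)).hom
    ((periodicComplex φ ψ hφψ₀ hψφ₀).d (i + 1) i).hom
  by_cases hi : Even i
  · rw [periodicComplex_d_even _ _ hi, periodicComplex_d_odd _ _ (by simpa [Nat.even_add_one])]
    exact hψφ
  · rw [periodicComplex_d_odd _ _ hi, periodicComplex_d_even _ _ (Nat.even_add_one.2 hi)]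
    exact hφψ

/-- The augmentation of the complex of period two induced by a map `π` with `π ∘ φ = 0`. -/
noncomputable def periodicComplexAugmentation (hφψ : φ ∘ₗ ψ = 0) (hψφ : ψ ∘ₗ φ = 0)
    (hπφ : π ∘ₗ φ = 0) :
    periodicComplex φ ψ hφψ hψφ ⟶ (ChainComplex.single₀ (ModuleCat R)).obj (ModuleCat.of R M) :=
  (ChainComplex.toSingle₀Equiv _ _).symm ⟨ModuleCat.ofHom π, by
    rw [periodicComplex_d_even _ _ Even.zero]
    exact ModuleCat.hom_ext hπφ⟩

theorem quasiIso_periodicComplexAugmentation (hφψ : Function.Exact φ ψ) (hψφ : Function.Exact ψ φ)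
    (hφπ : Function.Exact φ π) (hπ : Function.Surjective π) :
    QuasiIso (periodicComplexAugmentation hψφ.linearMap_comp_eq_zero hφψ.linearMap_comp_eq_zero
      hφπ.linearMap_comp_eq_zero) where
  quasiIsoAt
    | 0 => by
      have hφψ₀ := hψφ.linearMap_comp_eq_zero
      have hψφ₀ := hφψ.linearMap_comp_eq_zero
      have haug : (periodicComplexAugmentation hφψ₀ hψφ₀ hφπ.linearMap_comp_eq_zero).f 0 =
          ModuleCat.ofHom π := ChainComplex.toSingle₀Equiv_symm_apply_f_zero _ _
      rw [ChainComplex.quasiIsoAt₀_iff, ShortComplex.quasiIso_iff_of_zeros' _ rfl rfl rfl,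
        ShortComplex.ShortExact.moduleCat_exact_iff_function_exact]
      change Function.Exact ((periodicComplex φ ψ hφψ₀ hψφ₀).d 1 0).hom
        ((periodicComplexAugmentation hφψ₀ hψφ₀ hφπ.linearMap_comp_eq_zero).f 0).hom ∧
          Epi ((periodicComplexAugmentation hφψ₀ hψφ₀ hφπ.linearMap_comp_eq_zero).f 0)
      rw [haug, periodicComplex_d_even _ _ Even.zero]
      exact ⟨hφπ, (ModuleCat.epi_iff_surjective _).2 hπ⟩
    | i + 1 => by
      rw [quasiIsoAt_iff_exactAt' (hL := ChainComplex.exactAt_succ_single_obj ..)]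
      exact exactAt_periodicComplex_succ hφψ hψφ i

/-- The projective resolution of `coker φ` given by the complex of period two on an exact pair
`φ`, `ψ` of endomorphisms of a projective module. -/
noncomputable def periodicResolution [Module.Projective R F] (hφψ : Function.Exact φ ψ)
    (hψφ : Function.Exact ψ φ) (hφπ : Function.Exact φ π) (hπ : Function.Surjective π) :
    ProjectiveResolution (ModuleCat.of R M) where
  complex := periodicComplex φ ψ hψφ.linearMap_comp_eq_zero hφψ.linearMap_comp_eq_zero
  projective _ := inferInstanceAs (Projective (ModuleCat.of R F))
  π := periodicComplexAugmentation _ _ hφπ.linearMap_comp_eq_zero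
  quasiIso := quasiIso_periodicComplexAugmentation hφψ hψφ hφπ hπ

theorem subsingleton_extGrp_of_periodic [Module.Projective R F] (hφψ : Function.Exact φ ψ)
    (hψφ : Function.Exact ψ φ) (hφπ : Function.Exact φ π) (hπ : Function.Surjective π)
    (hφψ' : Function.Exact (φ.lcomp R N) (ψ.lcomp R N))
    (hψφ' : Function.Exact (ψ.lcomp R N) (φ.lcomp R N)) {i : ℕ} (hi : 0 < i) :
    Subsingleton (ExtGrp R M N i) := by
  obtain ⟨i, rfl⟩ := Nat.exists_eq_add_one.2 hi
  refine subsingleton_extGrp_succ (periodicResolution hφψ hψφ hφπ hπ) i fun g hg => ?_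
  have hψφ₀ := hφψ.linearMap_comp_eq_zero
  have hφψ₀ := hψφ.linearMap_comp_eq_zero
  change (periodicComplex φ ψ hφψ₀ hψφ₀).d (i + 1 + 1) (i + 1) ≫ g = 0 at hg
  change ∃ g' : ModuleCat.of R F ⟶ ModuleCat.of R N,
    (periodicComplex φ ψ hφψ₀ hψφ₀).d (i + 1) i ≫ g' = g
  by_cases hi : Even i
  · rw [periodicComplex_d_odd _ _ (by simpa [Nat.even_add_one])] at hg
    obtain ⟨g', hg'⟩ := (hφψ' (ModuleCat.Hom.hom g)).1 (congrArg ModuleCat.Hom.hom hg)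
    rw [periodicComplex_d_even _ _ hi]
    exact ⟨ModuleCat.ofHom g', ModuleCat.hom_ext hg'⟩
  · rw [periodicComplex_d_even _ _ (Nat.even_add_one.2 hi)] at hg
    obtain ⟨g', hg'⟩ := (hψφ' (ModuleCat.Hom.hom g)).1 (congrArg ModuleCat.Hom.hom hg)
    rw [periodicComplex_d_odd _ _ hi]
    exact ⟨ModuleCat.ofHom g', ModuleCat.hom_ext hg'⟩

end PeriodicResolution

/-- A pair of endomorphisms of a module such that the complex `⋯ → F → F → F → ⋯` of period two
with alternating differentials `φ` and `ψ` is totally acyclic: it and its dual are exact. -/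
structure IsTotallyAcyclicPair {R F : Type*} [CommRing R] [AddCommGroup F] [Module R F]
    (φ ψ : F →ₗ[R] F) : Prop where
  exact : Function.Exact φ ψ
  exact' : Function.Exact ψ φ
  dual_exact : Function.Exact φ.dualMap ψ.dualMap
  dual_exact' : Function.Exact ψ.dualMap φ.dualMap

namespace IsTotallyAcyclicPair

section

variable {R F M : Type*} [CommRing R] [AddCommGroup F] [Module R F] [AddCommGroup M] [Module R M]
  {φ ψ : F →ₗ[R] F} {π : F →ₗ[R] M} {ψ' : M →ₗ[R] F}

theorem dual [Module.IsReflexive R F] (h : IsTotallyAcyclicPair φ ψ) :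
    IsTotallyAcyclicPair φ.dualMap ψ.dualMap where
  exact := h.dual_exact
  exact' := h.dual_exact'
  dual_exact := (Function.Exact.iff_of_ladder_linearEquiv (e₁ := Module.evalEquiv R F)
    (e₂ := Module.evalEquiv R F) (e₃ := Module.evalEquiv R F) rfl rfl).2 h.exact
  dual_exact' := (Function.Exact.iff_of_ladder_linearEquiv (e₁ := Module.evalEquiv R F)
    (e₂ := Module.evalEquiv R F) (e₃ := Module.evalEquiv R F) rfl rfl).2 h.exact'

theorem exists_comp_eq (h : IsTotallyAcyclicPair φ ψ) (hφπ : Function.Exact φ π)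
    (hπ : Function.Surjective π) : ∃ ψ' : M →ₗ[R] F, ψ' ∘ₗ π = ψ :=
  (LinearMap.exact_lcomp_of_exact_of_surjective _ hφπ hπ ψ).1 h.exact.linearMap_comp_eq_zero

theorem exact_dualMap (h : IsTotallyAcyclicPair φ ψ) (hπ : Function.Surjective π)
    (hψ' : ψ' ∘ₗ π = ψ) : Function.Exact φ.dualMap ψ'.dualMap := fun g => by
  rw [← h.dual_exact g, ← hψ']
  exact (map_eq_zero_iff _ (LinearMap.dualMap_injective_of_surjective hπ)).symm

theorem surjective_dualMap (h : IsTotallyAcyclicPair φ ψ) (hφπ : Function.Exact φ π)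
    (hπ : Function.Surjective π) (hψ' : ψ' ∘ₗ π = ψ) : Function.Surjective ψ'.dualMap := fun g => by
  obtain ⟨g', hg'⟩ := (h.dual_exact' (π.dualMap g)).1
    ((LinearMap.exact_lcomp_of_exact_of_surjective _ hφπ hπ).apply_apply_eq_zero g)
  refine ⟨g', LinearMap.dualMap_injective_of_surjective hπ ?_⟩
  rw [← hg', ← hψ']
  rfl

theorem bijective_dual_eval [Module.IsReflexive R F] (h : IsTotallyAcyclicPair φ ψ)
    (hφπ : Function.Exact φ π) (hπ : Function.Surjective π) :
    Function.Bijective (Module.Dual.eval R M) := by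
  obtain ⟨ψ', hψ'⟩ := h.exists_comp_eq hφπ hπ
  have hψ'_apply (v : F) : ψ' (π v) = ψ v := LinearMap.congr_fun hψ' v
  have eval_injective := Module.bijective_dual_eval R F |>.injective
  constructor
  · refine (injective_iff_map_eq_zero _).2 fun m hm => ?_
    obtain ⟨v, rfl⟩ := hπ m
    refine (hφπ v).2 ((h.exact v).1 (eval_injective (LinearMap.ext fun g => ?_)))
    simpa [hψ'_apply] using LinearMap.congr_fun hm (ψ'.dualMap g)
  · intro ξ
    obtain ⟨u, hu⟩ := (Module.bijective_dual_eval R F).surjective (ξ ∘ₗ ψ'.dualMap)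
    have hφu : φ u = 0 := eval_injective <| LinearMap.ext fun g => by
      have := LinearMap.congr_fun hu (φ.dualMap g)
      simpa [(h.exact_dualMap hπ hψ').apply_apply_eq_zero g] using this
    obtain ⟨v, rfl⟩ := (h.exact' u).1 hφu
    refine ⟨π v, LinearMap.ext fun g => ?_⟩
    obtain ⟨g', rfl⟩ := h.surjective_dualMap hφπ hπ hψ' g
    simpa [hψ'_apply] using LinearMap.congr_fun hu g'

end

theorem gDimZero {R F M : Type} [CommRing R] [AddCommGroup F] [Module R F] [Module.Finite R F]
    [Module.Projective R F] [AddCommGroup M] [Module R M] {φ ψ : F →ₗ[R] F} {π : F →ₗ[R] M}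
    (h : IsTotallyAcyclicPair φ ψ) (hφπ : Function.Exact φ π) (hπ : Function.Surjective π) :
    GDimZero R M := by
  obtain ⟨ψ', hψ'⟩ := h.exists_comp_eq hφπ hπ
  exact ⟨h.bijective_dual_eval hφπ hπ,
    fun _ => subsingleton_extGrp_of_periodic h.exact h.exact' hφπ hπ h.dual_exact h.dual_exact',
    fun _ => subsingleton_extGrp_of_periodic h.dual_exact h.dual_exact' (h.exact_dualMap hπ hψ')
      (h.surjective_dualMap hφπ hπ hψ') h.dual.dual_exact h.dual.dual_exact'⟩

end IsTotallyAcyclicPair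

section MatrixFactorization

theorem exact_dualMap_mulVecLin_iff {R l m n : Type*} [CommRing R] [Fintype l] [Fintype m]
    [Fintype n] {A : Matrix l m R} {B : Matrix m n R} :
    Function.Exact A.mulVecLin.dualMap B.mulVecLin.dualMap ↔
      Function.Exact A.transpose.mulVecLin B.transpose.mulVecLin := by
  classical
  refine Function.Exact.iff_of_ladder_linearEquiv (e₁ := dotProductEquiv R l)
    (e₂ := dotProductEquiv R m) (e₃ := dotProductEquiv R n) ?_ ?_ <;>
  · ext
    simp

/-- A matrix factorization of `f`: a pair of square matrices whose product in either order is
`f` times the identity. -/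
structure IsMatrixFactorization {S ι : Type*} [CommRing S] [Fintype ι] [DecidableEq ι] (f : S)
    (A B : Matrix ι ι S) : Prop where
  mul_eq : A * B = f • 1
  mul_eq' : B * A = f • 1

namespace IsMatrixFactorization

variable {S ι : Type*} [CommRing S] [Fintype ι] [DecidableEq ι] {f : S} {A B : Matrix ι ι S}

theorem symm (h : IsMatrixFactorization f A B) : IsMatrixFactorization f B A :=
  ⟨h.mul_eq', h.mul_eq⟩

theorem transpose (h : IsMatrixFactorization f A B) :
    IsMatrixFactorization f A.transpose B.transpose where
  mul_eq := by rw [← Matrix.transpose_mul, h.mul_eq', Matrix.transpose_smul, Matrix.transpose_one]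
  mul_eq' := by rw [← Matrix.transpose_mul, h.mul_eq, Matrix.transpose_smul, Matrix.transpose_one]

theorem exact_mulVecLin (h : IsMatrixFactorization f A B) (hf : f ∈ nonZeroDivisors S) :
    Function.Exact (B.map (Ideal.Quotient.mk (Ideal.span {f}))).mulVecLin
      (A.map (Ideal.Quotient.mk (Ideal.span {f}))).mulVecLin := by
  intro v
  simp only [Matrix.mulVecLin_apply]
  constructor
  · intro hv
    choose u hu using fun i => Ideal.Quotient.mk_surjective (v i)
    obtain rfl : (fun i => Ideal.Quotient.mk (Ideal.span {f}) (u i)) = v := funext hu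
    have hAu (i : ι) : ∃ w, w * f = A.mulVec u i := by
      rw [← Ideal.mem_span_singleton', ← Ideal.Quotient.eq_zero_iff_mem, RingHom.map_mulVec]
      exact congrFun hv i
    choose w hw using hAu
    have hfu : f • u = f • B.mulVec w := calc
      f • u = B.mulVec (A.mulVec u) := by
        rw [Matrix.mulVec_mulVec, h.mul_eq', Matrix.smul_mulVec, Matrix.one_mulVec]
      _ = B.mulVec (f • w) := by rw [← funext hw]; simp only [mul_comm]; rfl
      _ = f • B.mulVec w := Matrix.mulVec_smul ..
    refine ⟨fun i => Ideal.Quotient.mk _ (w i), funext fun i => ?_⟩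
    rw [(mul_cancel_left_mem_nonZeroDivisors hf).1 (congrFun hfu i), RingHom.map_mulVec]
    rfl
  · rintro ⟨w, rfl⟩
    simp [← Matrix.map_mul, h.mul_eq, Matrix.map_smul']

theorem isTotallyAcyclicPair (h : IsMatrixFactorization f A B) (hf : f ∈ nonZeroDivisors S) :
    IsTotallyAcyclicPair (A.map (Ideal.Quotient.mk (Ideal.span {f}))).mulVecLin
      (B.map (Ideal.Quotient.mk (Ideal.span {f}))).mulVecLin where
  exact := h.symm.exact_mulVecLin hf
  exact' := h.exact_mulVecLin hf
  dual_exact := exact_dualMap_mulVecLin_iff.2 (h.symm.transpose.exact_mulVecLin hf)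
  dual_exact' := exact_dualMap_mulVecLin_iff.2 (h.transpose.exact_mulVecLin hf)

end IsMatrixFactorization

end MatrixFactorization

section Bidiagonal

/-- The nilpotent Jordan block: ones on the superdiagonal and zeros elsewhere. -/
def shiftMatrix (R : Type*) [CommRing R] (n : ℕ) : Matrix (Fin n) (Fin n) R :=
  Matrix.of fun i j => if (j : ℕ) = (i : ℕ) + 1 then 1 else 0

/-- The upper bidiagonal matrix with `x` on the diagonal and `z` on the superdiagonal. -/
def bidiagonal {R : Type*} [CommRing R] (n : ℕ) (x z : R) : Matrix (Fin n) (Fin n) R :=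
  Matrix.of fun i j => if j = i then x else if (j : ℕ) = (i : ℕ) + 1 then z else 0

variable {R S : Type*} [CommRing R] [CommRing S] {n : ℕ}

theorem shiftMatrix_map (q : R →+* S) : (shiftMatrix R n).map q = shiftMatrix S n := by
  ext i j
  simp [shiftMatrix, apply_ite q]

theorem bidiagonal_map (q : R →+* S) (x z : R) :
    (bidiagonal n x z).map q = bidiagonal n (q x) (q z) := by
  ext i j
  simp [bidiagonal, apply_ite q]

theorem bidiagonal_eq (x z : R) :
    bidiagonal n x z = x • (1 : Matrix (Fin n) (Fin n) R) + z • shiftMatrix R n := by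
  ext i j
  rcases eq_or_ne i j with rfl | hij
  · simp [bidiagonal, shiftMatrix]
  · simp [bidiagonal, shiftMatrix, hij.symm, Matrix.one_apply_ne hij]

theorem shiftMatrix_mulVec (v : Fin n → R) (i : Fin n) :
    (shiftMatrix R n).mulVec v i = if h : (i : ℕ) + 1 < n then v ⟨i + 1, h⟩ else 0 := by
  simp only [shiftMatrix, Matrix.mulVec, dotProduct, Matrix.of_apply, ite_mul, one_mul, zero_mul]
  split_ifs with h
  · rw [Finset.sum_eq_single ⟨i + 1, h⟩ (fun j _ hj => if_neg fun h' => hj (Fin.ext h'))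
      (fun h' => absurd (Finset.mem_univ _) h'), if_pos rfl]
  · exact Finset.sum_eq_zero fun j _ => if_neg (by lia)

theorem bidiagonal_mulVec (x z : R) (v : Fin n → R) :
    (bidiagonal n x z).mulVec v = x • v + z • (shiftMatrix R n).mulVec v := by
  rw [bidiagonal_eq, Matrix.add_mulVec, Matrix.smul_mulVec, Matrix.smul_mulVec, Matrix.one_mulVec]

theorem shiftMatrix_pow_self (R : Type*) [CommRing R] (n : ℕ) : shiftMatrix R n ^ n = 0 := by
  have h_upper : (shiftMatrix R n).IsUpperTriangular := fun i j (hij : j < i) => if_neg (by lia)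
  have h_charpoly : (shiftMatrix R n).charpoly = Polynomial.X ^ n := by
    rw [Matrix.charpoly_of_isUpperTriangular _ h_upper]
    simp [shiftMatrix]
  simpa [h_charpoly] using (shiftMatrix R n).aeval_self_charpoly

theorem smul_one_add_smul_mul_sum {A : Type*} [Ring A] [Algebra S A] {x z : S} {y : ℕ → S}
    (hy : ∀ i, z * y i = x * y (i + 1)) (N : A) (n : ℕ) :
    (x • 1 + z • N) * ∑ i ∈ Finset.range n, ((-1) ^ i * y i) • N ^ i =
      (x * y 0) • 1 - ((-1) ^ n * (x * y n)) • N ^ n := by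
  have hterm (i : ℕ) : (x • 1 + z • N) * ((-1) ^ i * y i) • N ^ i =
      ((-1) ^ i * (x * y i)) • N ^ i - ((-1) ^ (i + 1) * (x * y (i + 1))) • N ^ (i + 1) := by
    rw [← hy, add_mul, smul_one_mul, smul_mul_smul_comm, ← pow_succ', smul_smul, sub_eq_add_neg,
      ← neg_smul]
    ring_nf
  rw [Finset.mul_sum, Finset.sum_congr rfl fun i _ => hterm i,
    Finset.sum_range_sub' fun i => ((-1) ^ i * (x * y i)) • N ^ i]
  simp

theorem exists_isMatrixFactorization_bidiagonal {x z : S} {y : ℕ → S}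
    (hy : ∀ i, z * y i = x * y (i + 1)) (n : ℕ) :
    ∃ B : Matrix (Fin n) (Fin n) S, IsMatrixFactorization (x * y 0) (bidiagonal n x z) B := by
  set N := shiftMatrix S n
  set B := ∑ i ∈ Finset.range n, ((-1) ^ i * y i) • N ^ i
  have hmul : bidiagonal n x z * B = (x * y 0) • 1 := by
    rw [bidiagonal_eq, smul_one_add_smul_mul_sum hy, shiftMatrix_pow_self, smul_zero, sub_zero]
  have hcomm : Commute (bidiagonal n x z) B := by
    rw [bidiagonal_eq]
    exact Commute.sum_right _ _ _ fun i _ => (((Commute.one_left _).smul_left x).add_left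
      (((Commute.refl N).pow_right i).smul_left z)).smul_right _
  exact ⟨B, hmul, hcomm.eq ▸ hmul⟩

end Bidiagonal

section Filtration

variable {R M : Type*} [CommRing R] [AddCommGroup M] [Module R M] {n : ℕ}

theorem nonempty_quotient_equiv_of_eq_span_sup {C N : Submodule R M} {y : M} {I : Ideal R}
    (hC : C = R ∙ y ⊔ N) (hI : ∀ r : R, r • y ∈ N ↔ r ∈ I) :
    Nonempty ((C ⧸ N.comap C.subtype) ≃ₗ[R] R ⧸ I) := by
  have hy : y ∈ C := hC ▸ Submodule.mem_sup_left (Submodule.mem_span_singleton_self y)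
  set g : R →ₗ[R] C ⧸ N.comap C.subtype :=
    (N.comap C.subtype).mkQ ∘ₗ LinearMap.toSpanSingleton R C ⟨y, hy⟩
  have hg : Function.Surjective g := by
    intro c
    obtain ⟨⟨c, hc⟩, rfl⟩ := Submodule.mkQ_surjective _ c
    obtain ⟨_, hr, u, hu, rfl⟩ := Submodule.mem_sup.1 (hC ▸ hc)
    obtain ⟨r, rfl⟩ := Submodule.mem_span_singleton.1 hr
    refine ⟨r, (Submodule.Quotient.eq _).2 ?_⟩
    simpa [Submodule.mem_comap] using hu
  have hker : LinearMap.ker g = I := by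
    ext r
    rw [← hI, LinearMap.mem_ker]
    exact Submodule.Quotient.mk_eq_zero _
  exact ⟨(g.quotKerEquivOfSurjective hg).symm.trans (Submodule.quotEquivOfEq _ _ hker)⟩

theorem mem_flag_basisFun_iff {k : Fin (n + 1)} {v : Fin n → R} :
    v ∈ (Pi.basisFun R (Fin n)).flag k ↔ ∀ j : Fin n, k ≤ j.castSucc → v j = 0 := by
  refine (Pi.basisFun R (Fin n)).mem_span_image.trans (forall_congr' fun j => ?_)
  simpa using not_imp_comm.trans (by simp)

theorem dvd_of_bidiagonal_mulVec_eq {x z : R} (hxz : ∀ a b, x * a + z * b = 0 → x ∣ z * a)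
    {w : Fin n → R} {r : R} {i : Fin n}
    (hw : ∀ j, i ≤ j → (bidiagonal n x z).mulVec w j = (Pi.single i r : Fin n → R) j) : x ∣ r := by
  simp only [bidiagonal_mulVec, Pi.add_apply, Pi.smul_apply, smul_eq_mul] at hw
  have hi := hw i le_rfl
  rw [Pi.single_eq_same] at hi
  rw [← hi, dvd_add_right (dvd_mul_right x _), shiftMatrix_mulVec]
  split_ifs with hlt
  · refine hxz _ _ ((hw ⟨i + 1, hlt⟩ (Fin.le_def.2 (Nat.le_succ _))).trans ?_)
    exact Pi.single_eq_of_ne (Fin.ne_of_val_ne (Nat.succ_ne_self _)) _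
  · simp

theorem smul_map_single_mem_flag_iff {x z : R} (hxz : ∀ a b, x * a + z * b = 0 → x ∣ z * a)
    {π : (Fin n → R) →ₗ[R] M} (hπ : Function.Exact (bidiagonal n x z).mulVecLin π) (i : Fin n)
    (r : R) :
    r • π (Pi.basisFun R (Fin n) i) ∈ ((Pi.basisFun R (Fin n)).flag i.castSucc).map π ↔
      r ∈ Ideal.span {x} := by
  rw [Pi.basisFun_apply, ← map_smul, ← Pi.single_smul, smul_eq_mul, mul_one,
    Ideal.mem_span_singleton]
  constructor
  · rintro ⟨u, hu, hur⟩
    obtain ⟨w, hw⟩ := (hπ (Pi.single i r - u)).1 (by rw [map_sub, hur, sub_self])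
    refine dvd_of_bidiagonal_mulVec_eq hxz (w := w) (i := i) fun j hij => ?_
    rw [← Matrix.mulVecLin_apply, hw, Pi.sub_apply, mem_flag_basisFun_iff.1 hu j hij, sub_zero]
  · rintro ⟨s, rfl⟩
    refine ⟨-(z • (shiftMatrix R n).mulVec (Pi.single i s)), ?_, ?_⟩
    · refine neg_mem (Submodule.smul_mem _ _ (mem_flag_basisFun_iff.2 fun j hij => ?_))
      rw [shiftMatrix_mulVec]
      split_ifs
      · exact Pi.single_eq_of_ne (Fin.ne_of_val_ne (by simp at hij ⊢; lia)) _
      · rfl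
    · have h := (hπ _).2 ⟨Pi.single i s, rfl⟩
      rwa [Matrix.mulVecLin_apply, bidiagonal_mulVec, map_add, ← eq_neg_iff_add_eq_zero, ← map_neg,
        ← Pi.single_smul, smul_eq_mul, eq_comm] at h

theorem exists_filtration_of_bidiagonal {x z : R} (hxz : ∀ a b, x * a + z * b = 0 → x ∣ z * a)
    {π : (Fin n → R) →ₗ[R] M} (hπ : Function.Exact (bidiagonal n x z).mulVecLin π)
    (hπ_surj : Function.Surjective π) :
    ∃ c : Fin (n + 1) → Submodule R M, Monotone c ∧ c 0 = ⊥ ∧ c (Fin.last n) = ⊤ ∧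
      ∀ i : Fin n, Nonempty
        ((c i.succ ⧸ (c i.castSucc).comap (c i.succ).subtype) ≃ₗ[R] R ⧸ Ideal.span {x}) := by
  set b := Pi.basisFun R (Fin n)
  refine ⟨fun i => (b.flag i).map π, fun i j hij => Submodule.map_mono (b.flag_mono hij), ?_, ?_,
    fun i => nonempty_quotient_equiv_of_eq_span_sup (y := π (b i)) ?_
      (smul_map_single_mem_flag_iff hxz hπ i)⟩
  · beta_reduce
    rw [b.flag_zero, Submodule.map_bot]
  · beta_reduce
    rw [b.flag_last, Submodule.map_top, LinearMap.range_eq_top.2 hπ_surj]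
  · beta_reduce
    rw [b.flag_succ, Submodule.map_sup, Submodule.map_span, Set.image_singleton]

end Filtration

theorem exists_exact_surjective_of_equiv_quotient_range {R F₁ F₀ M : Type*} [Ring R]
    [AddCommGroup F₁] [Module R F₁] [AddCommGroup F₀] [Module R F₀] [AddCommGroup M] [Module R M]
    {φ : F₁ →ₗ[R] F₀} (e : M ≃ₗ[R] F₀ ⧸ LinearMap.range φ) :
    ∃ π : F₀ →ₗ[R] M, Function.Exact φ π ∧ Function.Surjective π :=
  ⟨e.symm.toLinearMap ∘ₗ Submodule.mkQ _,
    LinearEquiv.postcomp_exact_iff_exact.2 (LinearMap.exact_map_mkQ_range φ),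
    e.symm.surjective.comp (Submodule.mkQ_surjective _)⟩

section MinimalPresentation

variable {R M ι : Type*} [CommRing R] [AddCommGroup M] [Module R M] {m : Ideal R}
  {π : (ι → R) →ₗ[R] M}

theorem nontrivial_of_ker_le_pi [Nonempty ι] (hm : m ≠ ⊤)
    (hπ : LinearMap.ker π ≤ Submodule.pi Set.univ fun _ => m) : Nontrivial M := by
  by_contra hM
  rw [not_nontrivial_iff_subsingleton] at hM
  have h_one : (1 : ι → R) ∈ LinearMap.ker π := Subsingleton.elim _ _
  exact hm ((Ideal.eq_top_iff_one m).2 (hπ h_one (Classical.arbitrary ι) trivial))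

theorem smul_top_eq_pi [Finite ι] (m : Ideal R) :
    m • (⊤ : Submodule R (ι → R)) = Submodule.pi Set.univ fun _ => m := by
  classical
  have := Fintype.ofFinite ι
  refine le_antisymm (Submodule.smul_le.2 fun r hr v _ i _ => m.mul_mem_right _ hr) fun v hv => ?_
  rw [pi_eq_sum_univ' v]
  exact Submodule.sum_mem _ fun i _ => Submodule.smul_mem_smul (hv i trivial) trivial

theorem map_mem_smul_top_iff [Finite ι] (hπ_surj : Function.Surjective π)
    (hπ : LinearMap.ker π ≤ Submodule.pi Set.univ fun _ => m) {v : ι → R} :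
    π v ∈ m • (⊤ : Submodule R M) ↔ ∀ i, v i ∈ m := by
  rw [← LinearMap.range_eq_top.2 hπ_surj, ← Submodule.map_top, ← Submodule.map_smul'',
    smul_top_eq_pi, ← Submodule.mem_comap, Submodule.comap_map_eq_self hπ]
  simp [Submodule.mem_pi]

variable [Fintype ι]

theorem length_quotient_smul_top [m.IsMaximal] (hπ_surj : Function.Surjective π)
    (hπ : LinearMap.ker π ≤ Submodule.pi Set.univ fun _ => m) :
    Module.length R (M ⧸ m • (⊤ : Submodule R M)) = Fintype.card ι := by
  classical
  have : IsSimpleModule R (R ⧸ m) := isSimpleModule_iff_isCoatom.2 Ideal.IsMaximal.out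
  set Q := (m • (⊤ : Submodule R M)).mkQ ∘ₗ π
  have hQ : Function.Surjective Q := (Submodule.mkQ_surjective _).comp hπ_surj
  have hker : LinearMap.ker Q = Submodule.pi Set.univ fun _ => m := by
    ext v
    rw [LinearMap.ker_comp, Submodule.ker_mkQ, Submodule.mem_comap, map_mem_smul_top_iff hπ_surj hπ]
    simp [Submodule.mem_pi]
  rw [((Submodule.quotEquivOfEq _ _ hker.symm).trans (Q.quotKerEquivOfSurjective hQ)).symm.trans
    (Submodule.quotientPi fun _ => m) |>.length_eq]
  simp

theorem map_mk_eq_zero_of_map_mulVec_eq_zero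
    (hπ : LinearMap.ker π ≤ Submodule.pi Set.univ fun _ => m) {A : Matrix ι ι R}
    (hA : ∀ v, π (A.mulVec v) = 0) : A.map (Ideal.Quotient.mk m) = 0 := by
  classical
  ext i j
  have := hπ (hA (Pi.single j 1)) i trivial
  rw [Matrix.mulVec_single_one] at this
  exact Ideal.Quotient.eq_zero_iff_mem.2 this

theorem range_le_smul_top_of_map_mk_eq_zero (hπ_surj : Function.Surjective π)
    (hπ : LinearMap.ker π ≤ Submodule.pi Set.univ fun _ => m) {e : M →ₗ[R] M} {E : Matrix ι ι R}
    (hE : ∀ v, π (E.mulVec v) = e (π v))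
    (hE_zero : E.map (Ideal.Quotient.mk m) = 0) : LinearMap.range e ≤ m • ⊤ := by
  rintro _ ⟨y, rfl⟩
  obtain ⟨v, rfl⟩ := hπ_surj y
  rw [← hE, map_mem_smul_top_iff hπ_surj hπ]
  exact fun i => m.sum_mem fun j _ => m.mul_mem_right _
    (Ideal.Quotient.eq_zero_iff_mem.1 (congrFun₂ hE_zero i j))

end MinimalPresentation

section ShiftCentralizer

variable {R : Type*} [CommRing R] {p : ℕ}

theorem shiftMatrix_mulVec_castSucc (v : Fin (p + 1) → R) (j : Fin p) :
    (shiftMatrix R (p + 1)).mulVec v j.castSucc = v j.succ := by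
  rw [shiftMatrix_mulVec, dif_pos (by simp)]
  rfl

theorem shiftMatrix_mulVec_last (v : Fin (p + 1) → R) :
    (shiftMatrix R (p + 1)).mulVec v (Fin.last p) = 0 := by
  rw [shiftMatrix_mulVec, dif_neg (by simp)]

theorem shiftMatrix_mulVec_eq_zero_iff {v : Fin (p + 1) → R} :
    (shiftMatrix R (p + 1)).mulVec v = 0 ↔ v = v 0 • Pi.single 0 1 := by
  simp only [funext_iff, Fin.forall_fin_succ (P := fun i => v i = _),
    Fin.forall_fin_succ' (P := fun i => (shiftMatrix R (p + 1)).mulVec v i = _)]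
  simp [shiftMatrix_mulVec_castSucc, shiftMatrix_mulVec_last]

theorem shiftMatrix_mulVec_single_succ (j : Fin p) :
    (shiftMatrix R (p + 1)).mulVec (Pi.single j.succ 1) = Pi.single j.castSucc 1 := by
  ext i
  cases i using Fin.lastCases with
  | last => simp [shiftMatrix_mulVec_last, Fin.castSucc_ne_last]
  | cast i => simp [shiftMatrix_mulVec_castSucc, Pi.single_apply]

theorem eq_zero_of_isIdempotentElem_of_commute_shiftMatrix
    {E : Matrix (Fin (p + 1)) (Fin (p + 1)) R} (hE : IsIdempotentElem E)
    (hcomm : Commute E (shiftMatrix R (p + 1))) (hE_zero : E.mulVec (Pi.single 0 1) = 0) :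
    E = 0 := by
  refine Matrix.ext_of_mulVec_single fun j => ?_
  rw [Matrix.zero_mulVec]
  induction j using Fin.induction with
  | zero => exact hE_zero
  | succ j ih =>
    have hker : (shiftMatrix R (p + 1)).mulVec (E.mulVec (Pi.single j.succ 1)) = 0 := by
      rw [Matrix.mulVec_mulVec, ← hcomm.eq, ← Matrix.mulVec_mulVec, shiftMatrix_mulVec_single_succ,
        ih]
    rw [← hE.eq, ← Matrix.mulVec_mulVec, shiftMatrix_mulVec_eq_zero_iff.1 hker, Matrix.mulVec_smul,
      hE_zero, smul_zero]

theorem eq_zero_or_one_of_isIdempotentElem_of_commute_shiftMatrix [IsDomain R] {n : ℕ}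
    {E : Matrix (Fin n) (Fin n) R} (hE : IsIdempotentElem E)
    (hcomm : Commute E (shiftMatrix R n)) : E = 0 ∨ E = 1 := by
  cases n with
  | zero => exact Or.inl (Subsingleton.elim _ _)
  | succ p =>
    set c := E.mulVec (Pi.single 0 1) 0
    have hEc : E.mulVec (Pi.single 0 1) = c • Pi.single 0 1 := by
      refine shiftMatrix_mulVec_eq_zero_iff.1 ?_
      rw [Matrix.mulVec_mulVec, ← hcomm.eq, ← Matrix.mulVec_mulVec,
        shiftMatrix_mulVec_eq_zero_iff.2 (by simp), Matrix.mulVec_zero]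
    have hc : IsIdempotentElem c := by
      have h := congrArg (Matrix.mulVec · (Pi.single 0 1)) hE.eq
      simp only [← Matrix.mulVec_mulVec, hEc, Matrix.mulVec_smul] at h
      have := congrFun h 0
      simp only [Pi.smul_apply, Pi.single_eq_same, smul_eq_mul, mul_one] at this
      exact this
    refine (IsIdempotentElem.iff_eq_zero_or_one.1 hc).imp (fun h => ?_) fun h => ?_
    · refine eq_zero_of_isIdempotentElem_of_commute_shiftMatrix hE hcomm ?_
      rw [hEc, h, zero_smul]
    · refine (sub_eq_zero.1 (eq_zero_of_isIdempotentElem_of_commute_shiftMatrix hE.one_sub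
        ((Commute.one_left _).sub_left hcomm) ?_)).symm
      rw [Matrix.sub_mulVec, hEc, h, one_smul, Matrix.one_mulVec, sub_self]

end ShiftCentralizer

section Indecomposable

theorem isIndecomposableModule_of_forall_isIdempotentElem {R M : Type} [CommRing R]
    [AddCommGroup M] [Module R M] [Nontrivial M]
    (h : ∀ e : Module.End R M, IsIdempotentElem e → e = 0 ∨ e = 1) :
    IsIndecomposableModule R M := by
  refine ⟨bot_ne_top, fun N₁ N₂ hN => ?_⟩
  refine (h _ (Submodule.isIdempotentElem_projection hN)).imp (fun he => ?_) fun he => ?_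
  · rw [← Submodule.range_projection hN, he, LinearMap.range_zero]
  · rw [← Submodule.ker_projection hN, he, Module.End.one_eq_id, LinearMap.ker_id]

variable {R M : Type*} [CommRing R] [AddCommGroup M] [Module R M]

theorem eq_zero_of_isIdempotentElem_of_range_le_smul_top [Module.Finite R M] {m : Ideal R}
    (hm : m ≤ Ideal.jacobson ⊥) {e : Module.End R M} (he : IsIdempotentElem e)
    (he_range : LinearMap.range e ≤ m • ⊤) : e = 0 := by
  have h_le : LinearMap.range e ≤ m • LinearMap.range e := by
    have := Submodule.map_mono (f := e) he_range
    rwa [Submodule.map_smul'', Submodule.map_top, ← LinearMap.range_comp, ← Module.End.mul_eq_comp,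
      he.eq] at this
  exact LinearMap.range_eq_bot.1 (Submodule.eq_bot_of_le_smul_of_le_jacobson_bot m _
    (LinearMap.range_eq_map e ▸ Module.Finite.fg_top.map e) h_le hm)

theorem exists_matrix_lift_endomorphism {ι : Type*} [Fintype ι]
    {Φ : Matrix ι ι R} {π : (ι → R) →ₗ[R] M} (hπ : Function.Exact Φ.mulVecLin π)
    (hπ_surj : Function.Surjective π) (e : Module.End R M) :
    ∃ E F : Matrix ι ι R, (∀ v, π (E.mulVec v) = e (π v)) ∧ E * Φ = Φ * F := by
  classical
  obtain ⟨E, hE⟩ := Module.projective_lifting_property π (e ∘ₗ π) hπ_surj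
  have hE_range (v) : E (Φ.mulVecLin v) ∈ LinearMap.range Φ.mulVecLin := by
    refine (hπ _).1 ?_
    rw [← LinearMap.comp_apply, hE, LinearMap.comp_apply, hπ.apply_apply_eq_zero, map_zero]
  obtain ⟨F, hF⟩ := Module.projective_lifting_property Φ.mulVecLin.rangeRestrict
    ((E ∘ₗ Φ.mulVecLin).codRestrict _ hE_range) Φ.mulVecLin.surjective_rangeRestrict
  refine ⟨E.toMatrix', F.toMatrix', fun v => ?_, ?_⟩
  · rw [LinearMap.toMatrix'_mulVec]
    exact LinearMap.congr_fun hE v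
  · refine Matrix.ext_of_mulVec_single fun j => ?_
    rw [← Matrix.mulVec_mulVec, ← Matrix.mulVec_mulVec, LinearMap.toMatrix'_mulVec,
      LinearMap.toMatrix'_mulVec]
    exact congrArg Subtype.val (LinearMap.congr_fun hF (Pi.single j 1)).symm

variable {m : Ideal R} {x z : R} {n : ℕ}

theorem commute_map_mk_shiftMatrix (hxz : ∀ a b, x * a + z * b = 0 → a ∈ m ∧ b ∈ m)
    {E F : Matrix (Fin n) (Fin n) R} (hEF : E * bidiagonal n x z = bidiagonal n x z * F) :
    Commute (E.map (Ideal.Quotient.mk m)) (shiftMatrix (R ⧸ m) n) := by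
  set N := shiftMatrix R n with hN
  have h_syzygy : x • (E - F) + z • (E * N - N * F) = 0 := by
    rw [bidiagonal_eq, mul_add, add_mul, Matrix.mul_smul, Matrix.mul_smul, Matrix.smul_mul,
      Matrix.smul_mul, mul_one, one_mul] at hEF
    rw [smul_sub, smul_sub, sub_add_sub_comm, hEF, sub_self]
  have h_mem (i j) : (E - F) i j ∈ m ∧ (E * N - N * F) i j ∈ m := hxz _ _ (congrFun₂ h_syzygy i j)
  set q := (Ideal.Quotient.mk m).mapMatrix (m := Fin n)
  have hE : q E = q F := by
    rw [← sub_eq_zero, ← map_sub]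
    exact Matrix.ext fun i j => Ideal.Quotient.eq_zero_iff_mem.2 (h_mem i j).1
  have hEN : q E * q N = q N * q F := by
    rw [← sub_eq_zero, ← map_mul, ← map_mul, ← map_sub]
    exact Matrix.ext fun i j => Ideal.Quotient.eq_zero_iff_mem.2 (h_mem i j).2
  rw [← shiftMatrix_map (Ideal.Quotient.mk m)]
  rwa [← hE] at hEN

theorem bidiagonal_ker_le_pi {π : (Fin n → R) →ₗ[R] M} (hx : x ∈ m) (hz : z ∈ m)
    (hπ : Function.Exact (bidiagonal n x z).mulVecLin π) :
    LinearMap.ker π ≤ Submodule.pi Set.univ fun _ => m := by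
  rw [hπ.linearMap_ker_eq]
  rintro _ ⟨w, rfl⟩ i -
  rw [Matrix.mulVecLin_apply, bidiagonal_mulVec]
  exact m.add_mem (m.mul_mem_right _ hx) (m.mul_mem_right _ hz)

theorem length_quotient_smul_top_of_bidiagonal [m.IsMaximal] {π : (Fin n → R) →ₗ[R] M} (hx : x ∈ m)
    (hz : z ∈ m) (hπ : Function.Exact (bidiagonal n x z).mulVecLin π)
    (hπ_surj : Function.Surjective π) :
    Module.length R (M ⧸ m • (⊤ : Submodule R M)) = n := by
  rw [length_quotient_smul_top hπ_surj (bidiagonal_ker_le_pi hx hz hπ), Fintype.card_fin]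

theorem isIndecomposableModule_of_bidiagonal {R M : Type} [CommRing R] [AddCommGroup M]
    [Module R M] {m : Ideal R} [m.IsPrime] {x z : R} {n : ℕ} [NeZero n]
    (hm : m ≤ Ideal.jacobson ⊥) (hx : x ∈ m) (hz : z ∈ m)
    (hxz : ∀ a b, x * a + z * b = 0 → a ∈ m ∧ b ∈ m) {π : (Fin n → R) →ₗ[R] M}
    (hπ : Function.Exact (bidiagonal n x z).mulVecLin π) (hπ_surj : Function.Surjective π) :
    IsIndecomposableModule R M := by
  have hπ_min := bidiagonal_ker_le_pi hx hz hπ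
  have : Nontrivial M := nontrivial_of_ker_le_pi Ideal.IsPrime.ne_top' hπ_min
  have : Module.Finite R M := Module.Finite.of_surjective π hπ_surj
  refine isIndecomposableModule_of_forall_isIdempotentElem fun e he => ?_
  obtain ⟨E, F, hE, hEF⟩ := exists_matrix_lift_endomorphism hπ hπ_surj e
  have hE_idem : IsIdempotentElem (E.map (Ideal.Quotient.mk m)) := by
    rw [IsIdempotentElem, ← Matrix.map_mul, ← sub_eq_zero, ← Matrix.map_sub _ (map_sub _)]
    refine map_mk_eq_zero_of_map_mulVec_eq_zero hπ_min fun v => ?_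
    rw [Matrix.sub_mulVec, map_sub, ← Matrix.mulVec_mulVec, hE, hE, ← Module.End.mul_apply, he.eq,
      sub_self]
  refine (eq_zero_or_one_of_isIdempotentElem_of_commute_shiftMatrix hE_idem
    (commute_map_mk_shiftMatrix hxz hEF)).imp (fun hE_zero => ?_) fun hE_one => ?_
  · exact eq_zero_of_isIdempotentElem_of_range_le_smul_top hm he
      (range_le_smul_top_of_map_mk_eq_zero hπ_surj hπ_min hE hE_zero)
  · refine (sub_eq_zero.1 (eq_zero_of_isIdempotentElem_of_range_le_smul_top hm he.one_sub
      (range_le_smul_top_of_map_mk_eq_zero hπ_surj hπ_min (E := 1 - E) (fun v => ?_) ?_))).symm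
    · simp [Matrix.sub_mulVec, hE]
    · rw [Matrix.map_sub _ (map_sub _), hE_one, Matrix.map_one _ (map_zero _) (map_one _), sub_self]

end Indecomposable

section StandardGraded

variable {k S : Type*} [CommRing k] [CommRing S] [Algebra k S] {𝒮 : ℕ → Submodule k S}
  [GradedAlgebra 𝒮]

open DirectSum HomogeneousIdeal

theorem gradedPiece_le_pow_of_adjoin_eq_top (hadj : Algebra.adjoin k (𝒮 1 : Set S) = ⊤) (n : ℕ) :
    𝒮 n ≤ 𝒮 1 ^ n := by
  suffices h : ∀ s ∈ Algebra.adjoin k (𝒮 1 : Set S), ∀ n, (decompose 𝒮 s n : S) ∈ 𝒮 1 ^ n by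
    intro s hs
    simpa [decompose_of_mem_same 𝒮 hs] using h s (hadj ▸ Algebra.mem_top) n
  intro s hs
  induction hs using Algebra.adjoin_induction with
  | mem v hv =>
    intro n
    obtain rfl | hn := eq_or_ne n 1
    · rw [decompose_of_mem_same 𝒮 hv, pow_one]
      exact hv
    · rw [decompose_of_mem_ne 𝒮 hv hn.symm]
      exact zero_mem _
  | algebraMap r =>
    intro n
    obtain rfl | hn := eq_or_ne n 0
    · rw [decompose_of_mem_same 𝒮 (SetLike.algebraMap_mem_graded 𝒮 r), pow_zero]
      exact Submodule.algebraMap_mem r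
    · rw [decompose_of_mem_ne 𝒮 (SetLike.algebraMap_mem_graded 𝒮 r) hn.symm]
      exact zero_mem _
  | add s t _ _ hs ht => exact fun n => by simpa using add_mem (hs n) (ht n)
  | mul s t _ _ hs ht =>
    intro n
    rw [decompose_mul, coe_mul_apply_eq_sum_antidiagonal]
    refine sum_mem fun ij hij => ?_
    rw [← Finset.HasAntidiagonal.mem_antidiagonal.1 hij, pow_add]
    exact Submodule.mul_mem_mul (hs _) (ht _)

theorem irrelevant_eq_span_of_adjoin_eq_top (hadj : Algebra.adjoin k (𝒮 1 : Set S) = ⊤) :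
    (irrelevant 𝒮).toIdeal = Ideal.span (𝒮 1 : Set S) := by
  rw [irrelevant_eq_span]
  refine le_antisymm (Ideal.span_le.2 (Set.iUnion₂_subset fun i hi s hs => ?_))
    (Ideal.span_mono (Set.subset_iUnion₂_of_subset 1 one_pos subset_rfl))
  obtain ⟨i, rfl⟩ := Nat.exists_eq_add_of_lt hi
  have h_le : 𝒮 1 ^ i * 𝒮 1 ≤ (Ideal.span (𝒮 1 : Set S)).restrictScalars k :=
    Submodule.mul_le.2 fun a _ b hb => Ideal.mul_mem_left _ a (Ideal.subset_span hb)
  refine h_le ?_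
  rw [← pow_succ]
  simpa using gradedPiece_le_pow_of_adjoin_eq_top hadj _ hs

theorem coe_decompose_one_eq_zero_of_mem_irrelevant_sq {s : S}
    (hs : s ∈ (irrelevant 𝒮).toIdeal ^ 2) : (decompose 𝒮 s 1 : S) = 0 := by
  rw [pow_two] at hs
  induction hs using Submodule.mul_induction_on' with
  | mem_mul_mem a ha b hb =>
    have ha_zero : (decompose 𝒮 a 0 : S) = 0 := (mem_irrelevant_iff 𝒮 a).1 ha
    have hb_zero : (decompose 𝒮 b 0 : S) = 0 := (mem_irrelevant_iff 𝒮 b).1 hb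
    rw [decompose_mul, coe_mul_apply_eq_sum_antidiagonal]
    simp [Finset.Nat.antidiagonal_succ, ha_zero, hb_zero]
  | add a _ b _ ha hb => simp [ha, hb]

theorem mem_irrelevant_of_mul_add_mul_mem_sq (hzero : 𝒮 0 = 1) {x z : S} (hx : x ∈ 𝒮 1)
    (hz : z ∈ 𝒮 1) (hxz : LinearIndependent k ![x, z]) {a b : S}
    (hab : x * a + z * b ∈ (irrelevant 𝒮).toIdeal ^ 2) :
    a ∈ (irrelevant 𝒮).toIdeal ∧ b ∈ (irrelevant 𝒮).toIdeal := by
  have h_scalar (s : S) : ∃ c : k, algebraMap k S c = decompose 𝒮 s 0 :=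
    Submodule.mem_one.1 (hzero ▸ (decompose 𝒮 s 0).2)
  obtain ⟨α, hα⟩ := h_scalar a
  obtain ⟨β, hβ⟩ := h_scalar b
  have h_deg_one : α • x + β • z = 0 := by
    rw [← coe_decompose_one_eq_zero_of_mem_irrelevant_sq hab, decompose_add, DirectSum.add_apply,
      Submodule.coe_add, coe_decompose_mul_add_of_left_mem (j := 0) 𝒮 hx,
      coe_decompose_mul_add_of_left_mem (j := 0) 𝒮 hz, ← hα, ← hβ, Algebra.smul_def,
      Algebra.smul_def, mul_comm x, mul_comm z]
  obtain ⟨rfl, rfl⟩ := LinearIndependent.pair_iff.1 hxz α β h_deg_one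
  rw [map_zero] at hα hβ
  exact ⟨(mem_irrelevant_iff 𝒮 a).2 hα.symm, (mem_irrelevant_iff 𝒮 b).2 hβ.symm⟩

theorem mem_irrelevant_pow_of_mem (hadj : Algebra.adjoin k (𝒮 1 : Set S) = ⊤) {n : ℕ} {s : S}
    (hs : s ∈ 𝒮 n) : s ∈ (irrelevant 𝒮).toIdeal ^ n := by
  suffices h_le : 𝒮 1 ^ n ≤ ((irrelevant 𝒮).toIdeal ^ n).restrictScalars k from
    h_le (gradedPiece_le_pow_of_adjoin_eq_top hadj n hs)
  clear hs
  induction n with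
  | zero => simp
  | succ n ih =>
    rw [pow_succ, pow_succ]
    exact Submodule.mul_le.2 fun a ha b hb =>
      Ideal.mul_mem_mul (ih ha) (mem_irrelevant_of_mem 𝒮 one_pos hb)

theorem map_mulLeft_eq_of_irrelevant_sq_le_span (hadj : Algebra.adjoin k (𝒮 1 : Set S) = ⊤) {x : S}
    (hx : x ∈ 𝒮 1) (hsq : (irrelevant 𝒮).toIdeal ^ 2 ≤ Ideal.span {x}) :
    (𝒮 1).map (LinearMap.mulLeft k x) = 𝒮 2 := by
  refine le_antisymm ?_ fun s hs => ?_
  · rintro _ ⟨v, hv, rfl⟩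
    exact SetLike.mul_mem_graded hx hv
  · obtain ⟨t, rfl⟩ := Ideal.mem_span_singleton.1 (hsq (mem_irrelevant_pow_of_mem hadj hs))
    refine ⟨decompose 𝒮 t 1, (decompose 𝒮 t 1).2, ?_⟩
    rw [LinearMap.mulLeft_apply, ← coe_decompose_mul_add_of_left_mem (j := 1) 𝒮 hx,
      decompose_of_mem_same 𝒮 hs]

theorem irrelevant_sq_le_span_of_le_map_mulLeft (hadj : Algebra.adjoin k (𝒮 1 : Set S) = ⊤) {y : S}
    (hy : 𝒮 2 ≤ (𝒮 1).map (LinearMap.mulLeft k y)) :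
    (irrelevant 𝒮).toIdeal ^ 2 ≤ Ideal.span {y} := by
  rw [irrelevant_eq_span_of_adjoin_eq_top hadj, pow_two, Ideal.span_mul_span', Ideal.span_le]
  rintro _ ⟨a, ha, b, hb, rfl⟩
  obtain ⟨t, -, ht⟩ := hy (SetLike.mul_mem_graded ha hb)
  exact Ideal.mem_span_singleton.2 ⟨t, ht.symm⟩

end StandardGraded

theorem isMaximal_irrelevant {k S : Type*} [Field k] [CommRing S] [Nontrivial S] [Algebra k S]
    {𝒮 : ℕ → Submodule k S} [GradedAlgebra 𝒮] (hzero : 𝒮 0 = 1) :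
    (HomogeneousIdeal.irrelevant 𝒮).toIdeal.IsMaximal := by
  have h_surj : Function.Surjective
      (algebraMap k (S ⧸ (HomogeneousIdeal.irrelevant 𝒮).toIdeal)) := by
    intro s
    obtain ⟨s, rfl⟩ := Ideal.Quotient.mk_surjective s
    have h_zero_mem : (DirectSum.decompose 𝒮 s 0 : S) ∈ (1 : Submodule k S) :=
      hzero ▸ (DirectSum.decompose 𝒮 s 0).2
    obtain ⟨c, hc⟩ := Submodule.mem_one.1 h_zero_mem
    refine ⟨c, Ideal.Quotient.eq.2 ((HomogeneousIdeal.mem_irrelevant_iff 𝒮 _).2 ?_)⟩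
    rw [hc]
    simp
  have h_ne_top : (HomogeneousIdeal.irrelevant 𝒮).toIdeal ≠ ⊤ := by
    rw [Ideal.ne_top_iff_one]
    intro h_one
    refine one_ne_zero (α := S) ?_
    rw [← DirectSum.decompose_of_mem_same 𝒮 SetLike.GradedOne.one_mem]
    exact (HomogeneousIdeal.mem_irrelevant_iff 𝒮 1).1 h_one
  have := Ideal.Quotient.nontrivial_iff.2 h_ne_top
  have h_map := Ideal.map_eq_top_or_isMaximal_of_surjective _ h_surj Ideal.bot_isMaximal
  rw [Ideal.map_bot] at h_map
  exact (Ideal.bot_quotient_isMaximal_iff _).1 (h_map.resolve_left bot_ne_top)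

theorem map_mulLeft_eq_of_le {k S : Type*} [Field k] [CommRing S] [Algebra k S]
    {V : Submodule k S} [FiniteDimensional k V] {x y : S} (hx : x ∈ nonZeroDivisors S)
    (hy : y ∈ nonZeroDivisors S)
    (hyx : V.map (LinearMap.mulLeft k y) ≤ V.map (LinearMap.mulLeft k x)) :
    V.map (LinearMap.mulLeft k y) = V.map (LinearMap.mulLeft k x) := by
  have h_finrank {w : S} (hw : w ∈ nonZeroDivisors S) :
      Module.finrank k (V.map (LinearMap.mulLeft k w)) = Module.finrank k V :=
    (V.equivMapOfInjective _ fun _ _ h =>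
      (mul_cancel_left_mem_nonZeroDivisors hw).1 h).finrank_eq.symm
  exact Submodule.eq_of_le_of_finrank_eq hyx ((h_finrank hy).trans (h_finrank hx).symm)

theorem linearIndependent_pair_of_map {k V W : Type*} [Semiring k] [AddCommMonoid V] [Module k V]
    [AddCommMonoid W] [Module k W] {g : V →ₗ[k] W} {x z : V}
    (h : LinearIndependent k ![g x, g z]) : LinearIndependent k ![x, z] :=
  .of_comp g (by rwa [← FinVec.map_eq])

section Hypersurface

variable {S : Type*} [CommRing S] {f x z : S} {I : Ideal S}

theorem mem_map_mk_of_mul_add_mul_eq_zero (hf : f ∈ I ^ 2)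
    (hxz : ∀ a b, x * a + z * b ∈ I ^ 2 → a ∈ I ∧ b ∈ I) (a b : S ⧸ Ideal.span {f})
    (hab : Ideal.Quotient.mk _ x * a + Ideal.Quotient.mk _ z * b = 0) :
    a ∈ I.map (Ideal.Quotient.mk (Ideal.span {f})) ∧
      b ∈ I.map (Ideal.Quotient.mk (Ideal.span {f})) := by
  obtain ⟨a, rfl⟩ := Ideal.Quotient.mk_surjective a
  obtain ⟨b, rfl⟩ := Ideal.Quotient.mk_surjective b
  rw [← map_mul, ← map_mul, ← map_add, Ideal.Quotient.eq_zero_iff_mem] at hab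
  obtain ⟨ha, hb⟩ := hxz a b ((Ideal.span_singleton_le_iff_mem _).2 hf hab)
  exact ⟨Ideal.mem_map_of_mem _ ha, Ideal.mem_map_of_mem _ hb⟩

theorem map_dvd_mul_of_mem_map {T : Type*} [CommRing T] {q : S →+* T}
    (hq : Function.Surjective q) (hsq : I ^ 2 ≤ Ideal.span {x}) (hz : z ∈ I) {a : T}
    (ha : a ∈ I.map q) : q x ∣ q z * a := by
  obtain ⟨s, hs, rfl⟩ := (Ideal.mem_map_iff_of_surjective q hq).1 ha
  rw [← map_mul]
  exact map_dvd q (Ideal.mem_span_singleton.1 (hsq (pow_two I ▸ Ideal.mul_mem_mul hz hs)))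

theorem map_le_jacobson_bot_of_pow_le_ker {T : Type*} [CommRing T] {q : S →+* T} {n : ℕ}
    (hI : I ^ n ≤ RingHom.ker q) : I.map q ≤ Ideal.jacobson ⊥ := by
  rw [← Ideal.map_eq_bot_iff_le_ker, Ideal.map_pow] at hI
  exact fun a ha => Ideal.radical_le_jacobson ⟨n, hI ▸ Ideal.pow_mem_pow ha n⟩

theorem isMaximal_map_mk [I.IsMaximal] (hf : f ∈ I) :
    (I.map (Ideal.Quotient.mk (Ideal.span {f}))).IsMaximal :=
  Ideal.IsMaximal.map_of_surjective_of_ker_le Ideal.Quotient.mk_surjective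
    (Ideal.mk_ker.trans_le ((Ideal.span_singleton_le_iff_mem _).2 hf))

end Hypersurface

section MinimalMultiplicity

variable {k S : Type*} [CommRing S]

theorem exists_isMatrixFactorization_of_map_mulLeft_eq [CommRing k] [Algebra k S]
    {𝒮 : ℕ → Submodule k S} [GradedAlgebra 𝒮] {x z f : S}
    (hx : (𝒮 1).map (LinearMap.mulLeft k x) = 𝒮 2) (hz : z ∈ 𝒮 1) (hf : f ∈ 𝒮 2) (n : ℕ) :
    ∃ B : Matrix (Fin n) (Fin n) S, IsMatrixFactorization f (bidiagonal n x z) B := by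
  rw [← hx] at hf
  obtain ⟨y, hy, rfl⟩ := hf
  have h_div (u : 𝒮 1) : ∃ v : 𝒮 1, z * u = x * v := by
    obtain ⟨v, hv, h⟩ := hx.ge (SetLike.mul_mem_graded hz u.2)
    exact ⟨⟨v, hv⟩, h.symm⟩
  choose g hg using h_div
  exact exists_isMatrixFactorization_bidiagonal (y := fun i => ((g^[i] ⟨y, hy⟩ : 𝒮 1) : S))
    (fun i => by rw [Function.iterate_succ_apply', hg]) n

theorem irrelevant_pow_three_le_span [Field k] [Algebra k S] {𝒮 : ℕ → Submodule k S}
    [GradedAlgebra 𝒮] [FiniteDimensional k (𝒮 1)] (hadj : Algebra.adjoin k (𝒮 1 : Set S) = ⊤)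
    {x f : S} (hx : x ∈ 𝒮 1) (hx_reg : x ∈ nonZeroDivisors S)
    (hsq : Ideal.span {x} * (HomogeneousIdeal.irrelevant 𝒮).toIdeal =
      (HomogeneousIdeal.irrelevant 𝒮).toIdeal ^ 2)
    (hf : f ∈ 𝒮 2) (hf_reg : f ∈ nonZeroDivisors S) :
    (HomogeneousIdeal.irrelevant 𝒮).toIdeal ^ 3 ≤ Ideal.span {f} := by
  have hx_map := map_mulLeft_eq_of_irrelevant_sq_le_span hadj hx (hsq ▸ Ideal.mul_le_left)
  rw [← hx_map] at hf
  obtain ⟨y, hy, rfl⟩ := hf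
  have hy_reg : y ∈ nonZeroDivisors S := (mul_mem_nonZeroDivisors.1 hf_reg).2
  have hy_le : (𝒮 1).map (LinearMap.mulLeft k y) ≤ (𝒮 1).map (LinearMap.mulLeft k x) := by
    rw [hx_map]
    rintro _ ⟨v, hv, rfl⟩
    exact SetLike.mul_mem_graded hy hv
  have hy_map := map_mulLeft_eq_of_le hx_reg hy_reg hy_le
  have hy_sq := irrelevant_sq_le_span_of_le_map_mulLeft hadj (hy_map.trans hx_map).ge
  calc (HomogeneousIdeal.irrelevant 𝒮).toIdeal ^ 3
      = Ideal.span {x} * (HomogeneousIdeal.irrelevant 𝒮).toIdeal ^ 2 := by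
        rw [pow_succ, ← hsq, mul_assoc, ← pow_two, hsq]
    _ ≤ Ideal.span {x} * Ideal.span {y} := Ideal.mul_mono_right hy_sq
    _ = Ideal.span {x * y} := Ideal.span_singleton_mul_span_singleton x y

end MinimalMultiplicity

theorem stmt_18_general (k S : Type) [Field k] [CommRing S] [Algebra k S]
    (𝒮 : ℕ → Submodule k S) [GradedAlgebra 𝒮] (hSG : IsStandardGraded k S 𝒮)
    (x : S) (hx1 : x ∈ 𝒮 1) (hxnzd : x ∈ nonZeroDivisors S)
    (hMM : Ideal.span {x} * (HomogeneousIdeal.irrelevant 𝒮).toIdeal =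
      (HomogeneousIdeal.irrelevant 𝒮).toIdeal ^ 2)
    (f : S) (hf2 : f ∈ 𝒮 2) (hfnzd : f ∈ nonZeroDivisors S) (n : ℕ) (hn : 1 ≤ n)
    (z : S) (hz1 : z ∈ 𝒮 1) (hxz : LinearIndependent k ![x, z])
    (M : Type) [AddCommGroup M] [Module (S ⧸ Ideal.span {f}) M]
    (e : M ≃ₗ[S ⧸ Ideal.span {f}] (Fin n → S ⧸ Ideal.span {f}) ⧸ LinearMap.range (Matrix.toLin'
      (bidiagonal n (Ideal.Quotient.mk (Ideal.span {f}) x) (Ideal.Quotient.mk _ z)))) :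
    GDimZero (S ⧸ Ideal.span {f}) M ∧
    IsIndecomposableModule (S ⧸ Ideal.span {f}) M ∧
    mlength (S ⧸ Ideal.span {f}) (M ⧸ (((HomogeneousIdeal.irrelevant 𝒮).toIdeal.map
      (Ideal.Quotient.mk (Ideal.span {f}))) • (⊤ : Submodule (S ⧸ Ideal.span {f}) M))) =
        (n : ℕ∞) ∧
    ∃ c : Fin (n + 1) → Submodule (S ⧸ Ideal.span {f}) M,
      Monotone c ∧ c 0 = ⊥ ∧ c (Fin.last n) = ⊤ ∧
      ∀ i : Fin n, Nonempty ((c i.succ ⧸ (c i.castSucc).comap (c i.succ).subtype)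
        ≃ₗ[S ⧸ Ideal.span {f}]
          (S ⧸ Ideal.span {f}) ⧸ Ideal.span {Ideal.Quotient.mk (Ideal.span {f}) x}) := by
  obtain ⟨hzero, hadj, hfin⟩ := hSG
  obtain ⟨π, hπ, hπ_surj⟩ := exists_exact_surjective_of_equiv_quotient_range e
  have : NeZero n := NeZero.of_pos hn
  have : Nontrivial S := nontrivial_of_ne x 0 (hxz.ne_zero 0)
  set I := (HomogeneousIdeal.irrelevant 𝒮).toIdeal
  set q := Ideal.Quotient.mk (Ideal.span {f})
  have : I.IsMaximal := isMaximal_irrelevant hzero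
  have hf_sq : f ∈ I ^ 2 := mem_irrelevant_pow_of_mem hadj hf2
  have : (I.map q).IsMaximal := isMaximal_map_mk (Ideal.pow_le_self two_ne_zero hf_sq)
  have hI_sq : I ^ 2 ≤ Ideal.span {x} := hMM ▸ Ideal.mul_le_left
  have hI_cube : I ^ 3 ≤ RingHom.ker q :=
    (irrelevant_pow_three_le_span hadj hx1 hxnzd hMM hf2 hfnzd).trans_eq Ideal.mk_ker.symm
  have hzI : z ∈ I := HomogeneousIdeal.mem_irrelevant_of_mem 𝒮 one_pos hz1
  have hqx : q x ∈ I.map q :=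
    Ideal.mem_map_of_mem q (HomogeneousIdeal.mem_irrelevant_of_mem 𝒮 one_pos hx1)
  have hqz : q z ∈ I.map q := Ideal.mem_map_of_mem q hzI
  have h_syz := mem_map_mk_of_mul_add_mul_eq_zero hf_sq
    fun _ _ => mem_irrelevant_of_mul_add_mul_mem_sq hzero hx1 hz1 hxz
  obtain ⟨B, hB⟩ := exists_isMatrixFactorization_of_map_mulLeft_eq
    (map_mulLeft_eq_of_irrelevant_sq_le_span hadj hx1 hI_sq) hz1 hf2 n
  refine ⟨(hB.isTotallyAcyclicPair hfnzd).gDimZero (by rwa [bidiagonal_map]) hπ_surj,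
    isIndecomposableModule_of_bidiagonal (map_le_jacobson_bot_of_pow_le_ker hI_cube) hqx hqz h_syz
      hπ hπ_surj, ?_, exists_filtration_of_bidiagonal (fun a b hab => map_dvd_mul_of_mem_map
        Ideal.Quotient.mk_surjective hI_sq hzI (h_syz a b hab).1) hπ hπ_surj⟩
  rw [mlength, ← Module.coe_length, length_quotient_smul_top_of_bidiagonal hqx hqz hπ hπ_surj]

/-- the module M([x],n) presented over R = S/fS by the n×n upper
bidiagonal matrix with x on the diagonal and z on the superdiagonal is an
indecomposable module of G-dimension zero, minimally generated by n elements,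
and has a filtration with successive quotients isomorphic to R/xR. -/
theorem stmt_18 (k S : Type) [Field k] [IsAlgClosed k] [CommRing S] [Algebra k S]
    (𝒮 : ℕ → Submodule k S) [GradedAlgebra 𝒮] (hSG : IsStandardGraded k S 𝒮)
    (hdim : ringKrullDim S = 1)
    (x : S) (hx1 : x ∈ 𝒮 1) (hxnzd : x ∈ nonZeroDivisors S)
    (hMM : Ideal.span {x} * (HomogeneousIdeal.irrelevant 𝒮).toIdeal =
      (HomogeneousIdeal.irrelevant 𝒮).toIdeal ^ 2)
    (f : S) (hf2 : f ∈ 𝒮 2) (hfnzd : f ∈ nonZeroDivisors S)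
    (n : ℕ) (hn : 1 ≤ n)
    (x' z : S ⧸ Ideal.span {f})
    (hx' : x' = Ideal.Quotient.mk (Ideal.span {f}) x)
    (hz : z ∈ Submodule.map (Ideal.Quotient.mkₐ k (Ideal.span {f})).toLinearMap (𝒮 1))
    (hindep : LinearIndependent k ![x', z]) :
    ∀ (Φ : Matrix (Fin n) (Fin n) (S ⧸ Ideal.span {f})),
      (Φ = Matrix.of fun (i j : Fin n) => if j = i then x' else if (j : ℕ) = (i : ℕ) + 1 then z else 0) →
      ∀ (M : Type) (_ : AddCommGroup M) (_ : Module (S ⧸ Ideal.span {f}) M),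
      ∀ e : M ≃ₗ[S ⧸ Ideal.span {f}]
          ((Fin n → S ⧸ Ideal.span {f}) ⧸ LinearMap.range (Matrix.toLin' Φ)),
        GDimZero (S ⧸ Ideal.span {f}) M ∧
        IsIndecomposableModule (S ⧸ Ideal.span {f}) M ∧
        mlength (S ⧸ Ideal.span {f})
          (M ⧸ ((Ideal.map (Ideal.Quotient.mk (Ideal.span {f}))
              (HomogeneousIdeal.irrelevant 𝒮).toIdeal) •
            (⊤ : Submodule (S ⧸ Ideal.span {f}) M))) = (n : ℕ∞) ∧
        ∃ c : Fin (n + 1) → Submodule (S ⧸ Ideal.span {f}) M,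
          Monotone c ∧ c 0 = ⊥ ∧ c (Fin.last n) = ⊤ ∧
          ∀ i : Fin n, Nonempty
            ((↥(c i.succ) ⧸ Submodule.comap (c i.succ).subtype (c i.castSucc)) ≃ₗ[S ⧸ Ideal.span {f}]
              ((S ⧸ Ideal.span {f}) ⧸ Ideal.span {x'})) := by
  obtain ⟨z, hz1, rfl⟩ := hz
  rintro _ rfl M _ _ e
  subst hx'
  exact stmt_18_general k S 𝒮 hSG x hx1 hxnzd hMM f hf2 hfnzd n hn z hz1
    (linearIndependent_pair_of_map (g := (Ideal.Quotient.mkₐ k _).toLinearMap) hindep) M e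
end
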